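/- Let ζ = exp(2πi/5) and write the 5-dissection R(ζ;q²) = Σ_{k=0}^{4} q^k R_k(q⁵). Then R_3(q) = 0, R_2(q) = J_{10}² / J_{10,2}, and R_4(q) = −(1 + ζ² + ζ³) J_{10}² / J_{10,4}, where the J-products are in the variable q. -/

import Mathlib

/-!
The rank generating function on the unit circle `|z| = 1` is a Lambert-type series divided by
`(q;q)_∞` (`rankGF_eq`). This is derived from Dyson's adjoint symmetry (`dyson`): the number
`h_m(n)` of partitions of `n` with rank at least `m` satisfies `h_m(n + m + 1) + h_{m+3}(n) = p(n)`
for `m ≥ 1`, and solving this recursion in `m` gives an alternating series.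

At a primitive fifth root of unity `z`, with `c = z + z⁻¹`, the denominators combine to `1 - q^{5n}`,
and `(q;q)_∞ R(z;q) = 1 + (2 - c) T_0 + (1 + 2c) T_1` with bilateral sums `T_j` (`TT`). Sorting their
terms mod 5 produces Appell-type sums with base `q^25` (`TT_split`). Linear relations between these
come from partial fraction expansions of reciprocal products of theta functions: Chan's identity
(`chan`), its degenerate case at a pole (`chan_degenerate`), which involves the logarithmic-derivative
sums `ρ`, and an evaluation of combinations of the `ρ` by theta quotients (`rho_theta`). All three are
proved as limits of finite partial fraction expansions by means of Tannery's theorem. Together with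
the 5-dissection of `(q;q)_∞` (`euler_dissect`, from the Jacobi triple product) they give
(`rank_dissect`), for `x = q^5` and theta functions with base `x^5`,
`R(z;q) = A(x) + q J/θ(x) + q² c J/θ(x²) + q³ D(x)`, where `J = (x^5;x^5)_∞`: no term with `q⁴`.

Replacing `q` by `q²` moves the classes `0, 1, 2, 3` mod 5 to `0, 2, 4, 1`. Hence the class `3` of
`R(z;q²)` vanishes, and the classes `2` and `4` are the theta quotients in the claim. The components
are isolated by evaluating at the five fifth roots of a given point (`dissection_unique`). The
coefficients `a n` are the actual rank coefficients because the given sum is not identically zero near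
the origin, which excludes that its values arise from divergent series (`coeff_unique`).
-/

/-- The q-Pochhammer symbol `(a;q)_∞ = ∏_{k≥0} (1 - a q^k)`. -/
noncomputable def qPochInf (a q : ℂ) : ℂ := ∏' k : ℕ, (1 - a * q ^ k)

/-- The Dyson rank of a partition: largest part minus number of parts. -/
noncomputable def partitionRank {n : ℕ} (p : n.Partition) : ℤ :=
  (p.parts.sup : ℤ) - p.parts.card

/-- The rank generating function `R(z;q) = Σ_{n≥0} Σ_m N(m,n) z^m q^n`. -/
noncomputable def rankGF (z q : ℂ) : ℂ :=
  ∑' n : ℕ, (∑ p : n.Partition, z ^ partitionRank p) * q ^ n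

/-- `Jba b a q` is `J_{b,a} = (q^a;q^b)_∞ (q^{b-a};q^b)_∞ (q^b;q^b)_∞`. -/
noncomputable def Jba (b a : ℕ) (q : ℂ) : ℂ :=
  qPochInf (q ^ a) (q ^ b) * qPochInf (q ^ (b - a)) (q ^ b) * qPochInf (q ^ b) (q ^ b)

/-- `Jb b q` is `J_b = (q^b;q^b)_∞`. -/
noncomputable def Jb (b : ℕ) (q : ℂ) : ℂ := qPochInf (q ^ b) (q ^ b)

/-- `ζ = exp(2πi/5)`. -/
noncomputable def zeta5 : ℂ := Complex.exp (2 * Real.pi * Complex.I / 5)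

open Filter Topology Finset

/-! ### Convergence of q-series and bilateral sums -/

/-- The finite q-Pochhammer product `(a;p)_n = ∏_{k<n} (1 - a p^k)`. -/
noncomputable def fp (a p : ℂ) (n : ℕ) : ℂ := ∏ k ∈ range n, (1 - a * p ^ k)

lemma summable_norm_mul_pow (a : ℂ) {p : ℂ} (hp : ‖p‖ < 1) :
    Summable fun k : ℕ => ‖-(a * p ^ k)‖ := by
  simp only [norm_neg, norm_mul, norm_pow]
  exact (summable_geometric_of_lt_one (norm_nonneg _) hp).mul_left _

lemma fp_tendsto (a : ℂ) {p : ℂ} (hp : ‖p‖ < 1) :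
    Tendsto (fp a p) atTop (𝓝 (qPochInf a p)) := by
  have h := (multipliable_one_add_of_summable (summable_norm_mul_pow a hp)).hasProd.tendsto_prod_nat
  simp only [← sub_eq_add_neg] at h
  exact h

lemma qPochInf_ne_zero {a p : ℂ} (hp : ‖p‖ < 1) (h : ∀ k : ℕ, a * p ^ k ≠ 1) :
    qPochInf a p ≠ 0 := by
  have := tprod_one_add_ne_zero_of_summable (f := fun k : ℕ => -(a * p ^ k))
    (fun k => by
      rw [← sub_eq_add_neg, sub_ne_zero]; exact (h k).symm) (summable_norm_mul_pow a hp)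
  simpa [qPochInf, sub_eq_add_neg] using this

lemma fp_ne_zero {a p : ℂ} (h : ∀ k : ℕ, a * p ^ k ≠ 1) (n : ℕ) : fp a p n ≠ 0 := by
  refine prod_ne_zero_iff.2 fun k _ => ?_
  rw [sub_ne_zero]; exact (h k).symm

lemma bdd_of_tendsto {u : ℕ → ℂ} {l : ℂ} (h : Tendsto u atTop (𝓝 l)) :
    ∃ C : ℝ, 0 ≤ C ∧ ∀ n, ‖u n‖ ≤ C := by
  obtain ⟨C, hC⟩ := (Metric.isBounded_range_of_tendsto u h).exists_norm_le
  exact ⟨C, (norm_nonneg _).trans (hC (u 0) ⟨0, rfl⟩), fun n => hC _ ⟨n, rfl⟩⟩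

/-- Tannery's theorem for symmetric bilateral sums whose finite truncations carry weights
depending on the distances to the two ends of the summation range. -/
lemma tannery {t : ℤ → ℂ} (ht : Summable t) {u v : ℕ → ℂ} {l m : ℂ}
    (hu : Tendsto u atTop (𝓝 l)) (hv : Tendsto v atTop (𝓝 m)) :
    Tendsto (fun N : ℕ => ∑ k ∈ Icc (-(N : ℤ)) N, t k * (u (N - k).toNat * v (N + k).toNat))
      atTop (𝓝 (l * m * ∑' k, t k)) := by
  obtain ⟨C, hC0, hC⟩ := bdd_of_tendsto hu
  obtain ⟨D, hD0, hD⟩ := bdd_of_tendsto hv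
  have key := tendsto_tsum_of_dominated_convergence (𝓕 := atTop)
    (f := fun (N : ℕ) (k : ℤ) => if k ∈ Icc (-(N : ℤ)) N then
      t k * (u (N - k).toNat * v (N + k).toNat) else 0)
    (g := fun k => t k * (l * m)) (bound := fun k => ‖t k‖ * (C * D))
    (ht.norm.mul_right _) ?_ ?_
  · rw [tsum_mul_right, mul_comm] at key
    refine key.congr fun N => ?_
    rw [tsum_eq_sum (s := Icc (-(N : ℤ)) N) (fun k hk => if_neg hk)]
    exact sum_congr rfl fun k hk => if_pos hk
  · intro k
    have h1 : Tendsto (fun N : ℕ => ((N : ℤ) - k).toNat) atTop atTop := by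
      refine tendsto_atTop.2 fun b => ?_
      filter_upwards [eventually_ge_atTop (b + k.toNat)] with N hN
      omega
    have h2 : Tendsto (fun N : ℕ => ((N : ℤ) + k).toNat) atTop atTop := by
      refine tendsto_atTop.2 fun b => ?_
      filter_upwards [eventually_ge_atTop (b + (-k).toNat)] with N hN
      omega
    refine (((hu.comp h1).mul (hv.comp h2)).const_mul (t k)).congr' ?_
    filter_upwards [eventually_ge_atTop k.natAbs] with N hN
    rw [if_pos (by rw [mem_Icc]; omega)]
    rfl
  · refine Eventually.of_forall fun N k => ?_
    split_ifs
    · rw [norm_mul, norm_mul]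
      gcongr
      · exact hC _
      · exact hD _
    · simp only [norm_zero]; positivity

/-- `tri k = k(k+1)/2`. -/
def tri (k : ℤ) : ℤ := k * (k + 1) / 2

lemma two_tri (k : ℤ) : 2 * tri k = k * (k + 1) :=
  Int.mul_ediv_cancel' (Int.even_mul_succ_self k).two_dvd

lemma gauss_nat {r w : ℝ} (hr0 : 0 < r) (hr : r < 1) (hw : 0 < w) :
    Summable fun n : ℕ => r ^ tri n * w ^ n := by
  refine summable_of_ratio_test_tendsto_lt_one zero_lt_one
    (Eventually.of_forall fun n => by positivity) ?_
  have : ∀ n : ℕ, ‖r ^ tri (n + 1 : ℕ) * w ^ (n + 1)‖ / ‖r ^ tri n * w ^ n‖ = r ^ n * (r * w) := by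
    intro n
    have e : tri (n + 1 : ℕ) = tri n + (n + 1 : ℕ) := by
      have := two_tri n
      have := two_tri (n + 1 : ℕ)
      push_cast at *
      linarith
    rw [Real.norm_of_nonneg (by positivity), Real.norm_of_nonneg (by positivity), e,
      zpow_add₀ hr0.ne', zpow_natCast]
    have := (zpow_pos hr0 (tri n)).ne'
    field_simp
    ring
  simp only [this]
  simpa using (tendsto_pow_atTop_nhds_zero_of_lt_one hr0.le hr).mul_const (r * w)

lemma gauss_int {r w : ℝ} (hr0 : 0 < r) (hr : r < 1) (hw : 0 < w) :
    Summable fun k : ℤ => r ^ tri k * w ^ k := by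
  refine Summable.of_nat_of_neg_add_one ?_ ?_
  · simpa using gauss_nat hr0 hr hw
  · refine ((gauss_nat hr0 hr (inv_pos.2 hw)).mul_left w⁻¹).congr fun n => ?_
    have e : tri (-(n + 1 : ℤ)) = tri n := by
      have := two_tri n
      have := two_tri (-(n + 1 : ℤ))
      linarith
    rw [e, zpow_neg, zpow_add_one₀ hw.ne', zpow_natCast, inv_pow]
    field_simp

/-- The factors `(1 - b p^k)⁻¹` are bounded uniformly in `k ∈ ℤ`, since `b p^k` tends to `0` on one
side and to infinity on the other. A vanishing denominator contributes `0⁻¹ = 0`. -/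
lemma inv_one_sub_bdd {b p : ℂ} (hp0 : p ≠ 0) (hp : ‖p‖ < 1) (hb : b ≠ 0) :
    ∃ C : ℝ, 0 ≤ C ∧ ∀ k : ℤ, ‖(1 - b * p ^ k)⁻¹‖ ≤ C := by
  have hpow := tendsto_pow_atTop_nhds_zero_of_norm_lt_one hp
  have h1 : Tendsto (fun n : ℕ => (1 - b * p ^ n)⁻¹) atTop (𝓝 (1 - b * 0)⁻¹) :=
    (tendsto_const_nhds.sub (hpow.const_mul b)).inv₀ (by simp)
  have h2 : Tendsto (fun n : ℕ => (p ^ n * p) * (p ^ n * p - b)⁻¹) atTop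
      (𝓝 ((0 * p) * (0 * p - b)⁻¹)) :=
    (hpow.mul_const p).mul (((hpow.mul_const p).sub tendsto_const_nhds).inv₀ (by simpa using hb))
  obtain ⟨C, hC0, hC⟩ := bdd_of_tendsto h1
  obtain ⟨D, hD0, hD⟩ := bdd_of_tendsto h2
  refine ⟨max C D, le_max_of_le_left hC0, fun k => ?_⟩
  obtain ⟨n, rfl | rfl⟩ : ∃ n : ℕ, k = n ∨ k = -(n + 1 : ℤ) := by
    rcases le_or_gt 0 k with h | h
    · exact ⟨k.toNat, Or.inl (by omega)⟩
    · exact ⟨(-k - 1).toNat, Or.inr (by omega)⟩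
  · exact le_max_of_le_left (by simpa using hC n)
  · refine le_max_of_le_right ?_
    refine le_trans (le_of_eq (congrArg norm ?_)) (hD n)
    have : p ^ n * p ≠ 0 := mul_ne_zero (pow_ne_zero _ hp0) hp0
    rw [zpow_neg, zpow_add_one₀ hp0, zpow_natCast]
    rw [show (1 : ℂ) - b * (p ^ n * p)⁻¹ = (p ^ n * p)⁻¹ * (p ^ n * p - b) by field_simp, mul_inv,
      inv_inv]

/-- Absolute convergence of a level-`a` Appell-type sum with bounded weights. -/
lemma summable_gauss_mul {p w : ℂ} (hp0 : p ≠ 0) (hp : ‖p‖ < 1) (hw : w ≠ 0) {a : ℤ} (ha : 0 < a)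
    {d : ℤ → ℂ} {C : ℝ} (hd : ∀ k, ‖d k‖ ≤ C) :
    Summable fun k : ℤ => (-1) ^ k * p ^ (a * tri k) * w ^ k * d k := by
  have hn : 0 < ‖p‖ := norm_pos_iff.2 hp0
  obtain ⟨m, rfl⟩ := Int.eq_ofNat_of_zero_le ha.le
  have g := (gauss_int (r := ‖p‖ ^ m) (w := ‖w‖) (by positivity)
    (pow_lt_one₀ hn.le hp (by omega)) (norm_pos_iff.2 hw)).mul_right C
  refine Summable.of_norm_bounded g fun k => ?_
  rw [norm_mul, norm_mul, norm_mul, norm_zpow, norm_zpow, norm_zpow, zpow_mul, zpow_natCast]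
  simp only [norm_neg, norm_one, one_zpow, one_mul]
  gcongr
  exact hd k

/-! ### Finite products and partial fractions -/

lemma prod_Icc_split (f : ℤ → ℂ) (A B : ℕ) :
    ∏ j ∈ Icc (-(A : ℤ)) B, f j =
      (∏ l ∈ range (B + 1), f l) * ∏ l ∈ range A, f (-(l + 1 : ℤ)) := by
  rw [← prod_image (s := range (B + 1)) (g := fun l : ℕ => (l : ℤ)) (f := f) (by intro; simp),
    ← prod_image (s := range A) (g := fun l : ℕ => (-(l + 1 : ℤ))) (f := f)
      (by intro a _ b _ h; simp at h; omega), ← prod_union]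
  · congr 1
    ext j
    simp only [mem_Icc, mem_union, mem_image, mem_range]
    constructor
    · rintro ⟨h1, h2⟩
      rcases le_or_gt 0 j with h | h
      · exact Or.inl ⟨j.toNat, by omega, by omega⟩
      · exact Or.inr ⟨(-j - 1).toNat, by omega, by omega⟩
    · rintro (⟨a, h1, rfl⟩ | ⟨a, h1, rfl⟩) <;> omega
  · rw [disjoint_left]
    simp only [mem_image, mem_range, not_exists, not_and]
    rintro _ ⟨a, h1, rfl⟩ b h2
    omega

lemma prod_Icc_shift (f : ℤ → ℂ) {N A B : ℕ} {k : ℤ} (hA : (N : ℤ) + k = A)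
    (hB : (N : ℤ) - k = B) :
    ∏ j ∈ Icc (-(N : ℤ)) N, f (j - k) = ∏ j ∈ Icc (-(A : ℤ)) B, f j := by
  refine prod_nbij' (fun j => j - k) (fun j => j + k) ?_ ?_ ?_ ?_ ?_ <;>
    simp only [mem_Icc] <;> intros <;> first | omega | simp

lemma tri_add (a b : ℤ) : tri (a + b) = tri a + tri b + a * b := by
  have := two_tri a
  have := two_tri b
  have := two_tri (a + b)
  have : 2 * tri (a + b) = 2 * (tri a + tri b + a * b) := by linarith
  omega

lemma tri_zero : tri 0 = 0 := rfl
lemma tri_one : tri 1 = 1 := rfl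

/-- The factors with negative index, rewritten as a monomial times a convergent product. -/
lemma prod_neg {p β : ℂ} (hp : p ≠ 0) (hβ : β ≠ 0) (A : ℕ) :
    ∏ l ∈ range A, (1 - β * p ^ (-(l + 1 : ℤ))) =
      (-β) ^ A * p ^ (-tri A) * fp (p / β) p A := by
  induction A with
  | zero => simp [fp, tri_zero]
  | succ n ih =>
    rw [prod_range_succ, ih, fp, fp, prod_range_succ]
    push_cast
    rw [tri_add, tri_one, mul_one,
      show -(tri n + 1 + n : ℤ) = -tri n + -(n + 1 : ℤ) by ring, zpow_add₀ hp,
      zpow_neg p (n + 1 : ℤ), zpow_add_one₀ hp, zpow_natCast]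
    have := pow_ne_zero n hp
    field_simp
    ring

/-- The product of `1 - β p^(j-k)` over `|j| ≤ N` is a monomial times a truncation of `θ(β)` whose
two lengths are the distances from `k` to the ends of the range. -/
lemma prod_theta {p β : ℂ} (hp : p ≠ 0) (hβ : β ≠ 0) {N A B : ℕ} {k : ℤ}
    (hA : (N : ℤ) + k = A) (hB : (N : ℤ) - k = B) :
    ∏ j ∈ Icc (-(N : ℤ)) N, (1 - β * p ^ (j - k)) =
      ((-β) ^ A * p ^ (-tri A)) * (fp β p (B + 1) * fp (p / β) p A) := by
  rw [prod_Icc_shift (fun j => 1 - β * p ^ j) hA hB, prod_Icc_split, prod_neg hp hβ]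
  simp only [zpow_natCast, fp]
  ring

/-- The analogue of `prod_theta` for `β = 1`, with the vanishing factor removed. -/
lemma prod_theta_erase {p : ℂ} (hp : p ≠ 0) {N A B : ℕ} {k : ℤ}
    (hA : (N : ℤ) + k = A) (hB : (N : ℤ) - k = B) :
    ∏ j ∈ (Icc (-(N : ℤ)) N).erase k, (1 - p ^ (j - k)) =
      ((-1) ^ A * p ^ (-tri A)) * (fp p p B * fp p p A) := by
  -- the index `k` gives the factor `0`; it is replaced by `1` before shifting
  have h1 : ∏ j ∈ (Icc (-(N : ℤ)) N).erase k, (1 - p ^ (j - k)) =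
      ∏ j ∈ Icc (-(N : ℤ)) N, (fun i : ℤ => if i = 0 then 1 else 1 - p ^ i) (j - k) := by
    rw [← mul_prod_erase (Icc (-(N : ℤ)) N) _ (show k ∈ _ by rw [mem_Icc]; omega)]
    simp only [sub_self, if_true, one_mul]
    refine prod_congr rfl fun j hj => ?_
    rw [if_neg (by have := ne_of_mem_erase hj; omega)]
  rw [h1, prod_Icc_shift (fun i : ℤ => if i = 0 then 1 else 1 - p ^ i) hA hB, prod_Icc_split, prod_range_succ']
  have h2 := prod_neg hp one_ne_zero A
  simp only [one_mul, div_one] at h2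
  have h3 : ∏ l ∈ range A, (fun i : ℤ => if i = 0 then 1 else 1 - p ^ i) (-(l + 1 : ℤ)) =
      ∏ l ∈ range A, (1 - p ^ (-(l + 1 : ℤ))) :=
    prod_congr rfl fun l _ => if_neg (by omega)
  have h4 : ∏ l ∈ range B, (fun i : ℤ => if i = 0 then 1 else 1 - p ^ i) ((l + 1 : ℕ) : ℤ) =
      fp p p B := by
    refine prod_congr rfl fun l _ => ?_
    simp only
    rw [if_neg (by omega), zpow_natCast, pow_succ, mul_comm]
  rw [h3, h4, h2]
  simp
  ring

/-- Partial fractions with simple poles at the points `(α j)⁻¹`. -/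
lemma pf {ι : Type*} [DecidableEq ι] {s : Finset ι} {α : ι → ℂ} (hinj : Set.InjOn α s)
    (h0 : ∀ j ∈ s, α j ≠ 0) {u : ℂ} (h1 : ∀ j ∈ s, α j * u ≠ 1) {Q : Polynomial ℂ}
    (hQ : Q.degree < s.card) :
    Q.eval u / ∏ j ∈ s, (1 - α j * u) =
      ∑ j ∈ s, Q.eval (α j)⁻¹ / (∏ l ∈ s.erase j, (1 - α l / α j)) * (1 - α j * u)⁻¹ := by
  have hinj' : Set.InjOn (fun j => (α j)⁻¹) s := fun a ha b hb h => hinj ha hb (inv_injective h)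
  have hu : ∀ j ∈ s, u ≠ (α j)⁻¹ := fun j hj h => h1 j hj (by rw [h, mul_inv_cancel₀ (h0 j hj)])
  have hne : ∀ j ∈ s, 1 - α j * u ≠ 0 := fun j hj => sub_ne_zero.2 (h1 j hj).symm
  have e := congrArg (Polynomial.eval u) (Lagrange.eq_interpolate hinj' hQ)
  rw [Lagrange.eval_interpolate_not_at_node _ hu, Lagrange.eval_nodal] at e
  have e1 : ∏ j ∈ s, (u - (α j)⁻¹) = (∏ j ∈ s, -(α j)⁻¹) * ∏ j ∈ s, (1 - α j * u) := by
    rw [← prod_mul_distrib]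
    refine prod_congr rfl fun j hj => ?_
    have := h0 j hj
    field_simp
    ring
  have hP : ∏ j ∈ s, (1 - α j * u) ≠ 0 := prod_ne_zero_iff.2 hne
  rw [e, e1, mul_right_comm, mul_div_cancel_right₀ _ hP, mul_sum]
  refine sum_congr rfl fun j hj => ?_
  have e2 : ∏ l ∈ s.erase j, ((α j)⁻¹ - (α l)⁻¹)⁻¹ =
      (∏ l ∈ s.erase j, -(α l)⁻¹)⁻¹ * (∏ l ∈ s.erase j, (1 - α l / α j))⁻¹ := by
    rw [← mul_inv, ← prod_mul_distrib, prod_inv_distrib]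
    congr 1
    refine prod_congr rfl fun l hl => ?_
    have := h0 l (mem_of_mem_erase hl)
    have := h0 j hj
    field_simp
    ring
  have e3 : ∏ l ∈ s.erase j, -(α l)⁻¹ ≠ 0 :=
    prod_ne_zero_iff.2 fun l hl => neg_ne_zero.2 (inv_ne_zero (h0 l (mem_of_mem_erase hl)))
  have e4 : u - (α j)⁻¹ = -(α j)⁻¹ * (1 - α j * u) := by
    have := h0 j hj
    field_simp
    ring
  rw [Lagrange.nodalWeight, e2, ← mul_prod_erase s _ hj, e4, mul_inv, div_eq_mul_inv]
  have := h0 j hj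
  have := hne j hj
  generalize (∏ l ∈ s.erase j, (1 - α l / α j))⁻¹ = X
  generalize ∏ l ∈ s.erase j, -(α l)⁻¹ = Y at *
  field_simp

/-- The case of `pf` with numerator `u ^ d` in the limit where `u` tends to one of the poles,
`(α i)⁻¹ = 1`. The convention `0⁻¹ = 0` removes the index `i` from both sums. -/
lemma pf_double {ι : Type*} [DecidableEq ι] {s : Finset ι} {α : ι → ℂ} (hinj : Set.InjOn α s)
    (h0 : ∀ j ∈ s, α j ≠ 0) {i : ι} (hi : i ∈ s) (hi1 : α i = 1) {d : ℕ} (hd : d < s.card) :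
    ∑ j ∈ s, (α j)⁻¹ ^ d / (∏ l ∈ s.erase j, (1 - α l / α j)) * (1 - α j)⁻¹ =
      -(d + ∑ j ∈ s, α j * (1 - α j)⁻¹) * (∏ l ∈ s.erase i, (1 - α l))⁻¹ := by
  set r : ι → ℂ := fun j => (α j)⁻¹ ^ d / (∏ l ∈ s.erase j, (1 - α l / α j)) with hr
  set P : ℂ → ℂ := fun u => ∏ l ∈ s.erase i, (1 - α l * u) with hPdef
  set g : ℂ → ℂ := fun u => u ^ d / P u with hg
  have hne1 : ∀ j ∈ s.erase i, 1 - α j * 1 ≠ 0 := fun j hj h => by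
    refine ne_of_mem_erase hj (hinj (mem_of_mem_erase hj) hi ?_)
    rw [hi1]; linear_combination -h
  have hP1 : P 1 ≠ 0 := prod_ne_zero_iff.2 hne1
  have hri : r i = g 1 := by simp [hr, hg, hPdef, hi1]
  -- the derivative of `g` at `1`
  have hderP : HasDerivAt P (-(∑ j ∈ s.erase i, α j * (1 - α j)⁻¹) * P 1) 1 := by
    have h := HasDerivAt.fun_finsetProd (u := s.erase i) (f := fun l u => 1 - α l * u)
      (f' := fun l => -(α l)) (x := (1 : ℂ)) fun l _ => by
        simpa using ((hasDerivAt_id (1 : ℂ)).const_mul (α l)).const_sub 1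
    refine h.congr_deriv ?_
    rw [neg_mul, sum_mul, ← sum_neg_distrib]
    refine sum_congr rfl fun j hj => ?_
    have h2 : P 1 = (1 - α j * 1) * ∏ k ∈ (s.erase i).erase j, (1 - α k * 1) :=
      (mul_prod_erase _ _ hj).symm
    rw [h2]
    have h3 := hne1 j hj
    rw [mul_one] at h3 ⊢
    rw [smul_eq_mul]
    field_simp
  have hderg : HasDerivAt g ((d + ∑ j ∈ s.erase i, α j * (1 - α j)⁻¹) * g 1) 1 := by
    refine ((hasDerivAt_pow d (1 : ℂ)).div hderP hP1).congr_deriv ?_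
    simp only [hg, one_pow]
    field_simp
    ring
  -- the difference quotient of `g` is a sum of simple fractions
  have hev : ∀ᶠ u in 𝓝[≠] (1 : ℂ), slope g 1 u = -∑ j ∈ s.erase i, r j * (1 - α j * u)⁻¹ := by
    have hc : ∀ᶠ u in 𝓝[≠] (1 : ℂ), ∀ j ∈ s.erase i, 1 - α j * u ≠ 0 := by
      refine (eventually_all_finset _).2 fun j hj => ?_
      exact nhdsWithin_le_nhds ((by fun_prop : ContinuousAt (fun u => 1 - α j * u) 1).eventually_ne
        (hne1 j hj))
    filter_upwards [hc, self_mem_nhdsWithin] with u hu hu1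
    have hu1' : 1 - u ≠ 0 := sub_ne_zero.2 (Ne.symm hu1)
    have hall : ∀ j ∈ s, α j * u ≠ 1 := by
      intro j hj h
      by_cases hji : j = i
      · subst hji; rw [hi1, one_mul] at h; exact hu1 h
      · exact hu j (mem_erase.2 ⟨hji, hj⟩) (by rw [h, sub_self])
    have h := pf hinj h0 hall (Q := Polynomial.X ^ d) (by
      rw [Polynomial.degree_X_pow]; exact_mod_cast hd)
    simp only [Polynomial.eval_pow, Polynomial.eval_X] at h
    rw [← mul_prod_erase s _ hi, ← add_sum_erase s _ hi] at h
    have hPu : P u ≠ 0 := prod_ne_zero_iff.2 hu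
    change u ^ d / ((1 - α i * u) * P u) = r i * _ + ∑ j ∈ s.erase i, r j * (1 - α j * u)⁻¹ at h
    rw [hri, hi1, one_mul] at h
    rw [slope_def_field, ← sub_eq_iff_eq_add'.2 h]
    have hu1'' : u - 1 ≠ 0 := sub_ne_zero.2 hu1
    have : g u = u ^ d / P u := rfl
    rw [this]
    generalize g 1 = G
    field_simp
    ring
  have hlim : Tendsto (fun u => -∑ j ∈ s.erase i, r j * (1 - α j * u)⁻¹) (𝓝[≠] (1 : ℂ))
      (𝓝 (-∑ j ∈ s.erase i, r j * (1 - α j * 1)⁻¹)) := by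
    refine (tendsto_finsetSum _ fun j hj => ?_).neg.mono_left nhdsWithin_le_nhds
    exact ((by fun_prop : ContinuousAt (fun u => 1 - α j * u) 1).inv₀ (hne1 j hj)).const_mul _
  have huniq := tendsto_nhds_unique ((hasDerivAt_iff_tendsto_slope.1 hderg).congr' hev) hlim
  rw [← add_sum_erase s _ hi, ← add_sum_erase s (fun j => α j * (1 - α j)⁻¹) hi, hi1]
  simp only [sub_self, inv_zero, mul_zero, zero_add]
  simp only [mul_one] at huniq
  have hg1 : g 1 = (∏ l ∈ s.erase i, (1 - α l))⁻¹ := by simp [hg, hPdef]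
  rw [← hg1]
  linear_combination huniq

/-! ### Theta functions, Appell-type sums and their truncations -/

lemma zpow_inj_of_norm {p : ℂ} (hp0 : p ≠ 0) (hp : ‖p‖ < 1) {k l : ℤ} (h : p ^ k = p ^ l) :
    k = l := by
  have h2 : ‖p‖ ^ k = ‖p‖ ^ l := by rw [← norm_zpow, ← norm_zpow, h]
  exact zpow_right_injective₀ (norm_pos_iff.2 hp0) hp.ne h2

lemma pow_ne_one_of_norm {p : ℂ} (hp : ‖p‖ < 1) {n : ℕ} (hn : n ≠ 0) : p ^ n ≠ 1 := by
  intro h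
  have := pow_lt_one₀ (norm_nonneg p) hp hn
  rw [← norm_pow, h, norm_one] at this
  exact lt_irrefl _ this

/-- The theta function `θ(z) = (z;p)_∞ (p/z;p)_∞`. -/
noncomputable def theta (p z : ℂ) : ℂ := qPochInf z p * qPochInf (p / z) p

/-- The Appell-type sum `∑_{k ∈ ℤ} (-1)^k p^{3k(k+1)/2} w^k / (1 - b p^k)`; a vanishing
denominator drops the corresponding term. -/
noncomputable def App (p b w : ℂ) : ℂ :=
  ∑' k : ℤ, (-1) ^ k * p ^ (3 * tri k) * w ^ k * (1 - b * p ^ k)⁻¹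

/-- `b i / b j` is never an integral power of `p`: the orbits `b i p^ℤ` are disjoint. -/
def Generic (p : ℂ) (b : Fin 3 → ℂ) : Prop := ∀ i j, i ≠ j → ∀ k : ℤ, b j ≠ b i * p ^ k

/-- The part of the reciprocal weight at the node `b i p^k` that comes from the indices above `k`; here
`n = N - k`, and the limit for `n → ∞` is `((p;p)_∞ ∏_{j≠i} (b_j/b_i;p)_∞)⁻¹`. -/
noncomputable def wtU (p : ℂ) (b : Fin 3 → ℂ) (i : Fin 3) (n : ℕ) : ℂ :=
  (fp p p n * ∏ j ∈ univ.erase i, fp (b j / b i) p (n + 1))⁻¹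

/-- The part of the reciprocal weight at the node `b i p^k` that comes from the indices below `k`; here
`n = N + k`, and the limit for `n → ∞` is `((p;p)_∞ ∏_{j≠i} (p b_i/b_j;p)_∞)⁻¹`. -/
noncomputable def wtV (p : ℂ) (b : Fin 3 → ℂ) (i : Fin 3) (n : ℕ) : ℂ :=
  (fp p p n * ∏ j ∈ univ.erase i, fp (p / (b j / b i)) p n)⁻¹

/-- The monomial factor by which `∏_i ∏_{|k|≤N} (1 - b_i p^k)` differs from a product of truncated
theta functions. -/
noncomputable def monoL (p : ℂ) (b : Fin 3 → ℂ) (N : ℕ) : ℂ :=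
  ∏ i, ((-b i) ^ N * p ^ (-tri N))

/-- `b_i³ / (b_0 b_1 b_2)`, the base of the `k`-th power in the Appell sum attached to `b_i`. -/
noncomputable def wtW (b : Fin 3 → ℂ) (i : Fin 3) : ℂ := b i ^ 3 / ∏ j, b j

/-- The coefficient of the node `b i p^k` in the partial fraction expansion of
`u^(3N) / ∏_{i, |k|≤N} (1 - b_i p^k u)`: up to the common monomial it is the `k`-th numerator of an
Appell sum, times weights that converge as `N → ∞`. -/
lemma weight_eq {p : ℂ} (hp0 : p ≠ 0) {b : Fin 3 → ℂ} (hb : ∀ i, b i ≠ 0) {N : ℕ} (i : Fin 3)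
    {k : ℤ} (hk : k ∈ Icc (-(N : ℤ)) N) :
    (b i * p ^ k)⁻¹ ^ (3 * N) /
      (∏ l ∈ ((univ : Finset (Fin 3)) ×ˢ Icc (-(N : ℤ)) N).erase (i, k),
        (1 - b l.1 * p ^ l.2 / (b i * p ^ k))) =
      (monoL p b N)⁻¹ * ((-1) ^ k * p ^ (3 * tri k) * wtW b i ^ k *
        (wtU p b i (N - k).toNat * wtV p b i (N + k).toNat)) := by
  rw [mem_Icc] at hk
  obtain ⟨A, hA⟩ := Int.eq_ofNat_of_zero_le (show 0 ≤ (N : ℤ) + k by omega)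
  obtain ⟨B, hB⟩ := Int.eq_ofNat_of_zero_le (show 0 ≤ (N : ℤ) - k by omega)
  have hset : ((univ : Finset (Fin 3)) ×ˢ Icc (-(N : ℤ)) N).erase (i, k) =
      ({i} ×ˢ (Icc (-(N : ℤ)) N).erase k) ∪ ((univ.erase i) ×ˢ Icc (-(N : ℤ)) N) := by
    ext ⟨a, c⟩
    simp only [mem_erase, mem_union, mem_product, mem_singleton, mem_univ, true_and, ne_eq,
      Prod.mk.injEq, mem_Icc]
    by_cases h : a = i <;> simp [h]
  have hdisj : Disjoint ({i} ×ˢ (Icc (-(N : ℤ)) N).erase k)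
      ((univ.erase i) ×ˢ Icc (-(N : ℤ)) N) := by
    rw [disjoint_left]
    rintro ⟨a, c⟩ h1 h2
    simp only [mem_product, mem_singleton, mem_erase] at h1 h2
    exact h2.1.1 h1.1
  have hterm : ∀ (j : Fin 3) (l : ℤ), b j * p ^ l / (b i * p ^ k) = (b j / b i) * p ^ (l - k) := by
    intro j l
    rw [zpow_sub₀ hp0]; ring
  rw [hset, prod_union hdisj, prod_product, prod_product]
  simp only [hterm, prod_singleton, div_self (hb i), one_mul]
  rw [prod_theta_erase hp0 hA hB]
  rw [prod_congr rfl fun j _ => prod_theta hp0 (div_ne_zero (hb j) (hb i)) hA hB]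
  rw [prod_mul_distrib, prod_mul_distrib (f := fun j => fp (b j / b i) p (B + 1))]
  rw [hA, hB]
  simp only [Int.toNat_natCast, wtU, wtV]
  have hP : ∏ j, b j ≠ 0 := prod_ne_zero_iff.2 fun j _ => hb j
  have hmono : monoL p b N * (b i * p ^ k)⁻¹ ^ (3 * N) =
      (-1) ^ k * p ^ (3 * tri k) * wtW b i ^ k * (((-1) ^ A * p ^ (-tri A)) *
        ∏ j ∈ univ.erase i, ((-(b j / b i)) ^ A * p ^ (-tri A))) := by
    have e1 : ((-1) ^ A * p ^ (-tri A)) * ∏ j ∈ univ.erase i, ((-(b j / b i)) ^ A * p ^ (-tri A))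
        = (-1) ^ A * p ^ (-3 * tri A) * (wtW b i ^ A)⁻¹ := by
      have : ((-1) ^ A * p ^ (-tri A)) = ((-(b i / b i)) ^ A * p ^ (-tri A)) := by
        rw [div_self (hb i)]
      rw [this, mul_prod_erase univ (fun j => (-(b j / b i)) ^ A * p ^ (-tri A)) (mem_univ i)]
      rw [prod_mul_distrib, prod_pow]
      simp only [Fin.prod_univ_three, wtW]
      have : p ^ (-3 * tri A) = p ^ (-tri A) * p ^ (-tri A) * p ^ (-tri A) := by
        rw [← zpow_add₀ hp0, ← zpow_add₀ hp0]; congr 1; ring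
      have e : -(b 0 / b i) * -(b 1 / b i) * -(b 2 / b i) =
          -1 * (b i ^ 3 / (b 0 * b 1 * b 2))⁻¹ := by
        rw [inv_div]; ring
      rw [this, e, mul_pow, inv_pow]
      ring
    rw [e1]
    have e2 : monoL p b N = (-1) ^ N * p ^ (-3 * tri N) * (∏ j, b j) ^ N := by
      rw [monoL, prod_mul_distrib, prod_pow]
      simp only [Fin.prod_univ_three]
      have : p ^ (-3 * tri N) = p ^ (-tri N) * p ^ (-tri N) * p ^ (-tri N) := by
        rw [← zpow_add₀ hp0, ← zpow_add₀ hp0]; congr 1; ring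
      rw [this, show -b 0 * -b 1 * -b 2 = -1 * (b 0 * b 1 * b 2) by ring, mul_pow]
      ring
    have hW : wtW b i ≠ 0 := div_ne_zero (pow_ne_zero _ (hb i)) hP
    have e3 : (b i ^ 3) = wtW b i * ∏ j, b j := by rw [wtW, div_mul_cancel₀ _ hP]
    have hAk : (A : ℤ) = N + k := by omega
    have e4 : (b i * p ^ k)⁻¹ ^ (3 * N) = (wtW b i ^ N)⁻¹ * ((∏ j, b j) ^ N)⁻¹ *
        p ^ (-3 * N * k) := by
      rw [mul_inv, mul_pow, pow_mul, inv_pow _ 3, e3, mul_inv, mul_pow, inv_pow, inv_pow,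
        ← zpow_neg, ← zpow_natCast, ← zpow_natCast, ← zpow_natCast, ← zpow_mul]
      congr 2; push_cast; ring
    have e5 : p ^ (3 * tri k) * p ^ (-3 * tri A) = p ^ (-3 * tri N) * p ^ (-3 * N * k) := by
      rw [← zpow_add₀ hp0, ← zpow_add₀ hp0, hAk, tri_add]; congr 1; ring
    have e6 : wtW b i ^ k * (wtW b i ^ A)⁻¹ = (wtW b i ^ N)⁻¹ := by
      rw [← zpow_natCast, ← zpow_natCast, ← zpow_neg, ← zpow_neg, ← zpow_add₀ hW]
      congr 1; omega
    have e7 : (-1 : ℂ) ^ k * (-1) ^ A = (-1) ^ N := by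
      rw [← zpow_natCast, ← zpow_natCast, ← zpow_add₀ (by norm_num), hAk,
        show k + (N + k) = N + 2 * k by ring, zpow_add₀ (by norm_num), zpow_mul]
      norm_num
    rw [e2, e4]
    calc _ = (-1) ^ N * (p ^ (-3 * tri N) * p ^ (-3 * N * k)) * (wtW b i ^ N)⁻¹ *
          ((∏ j, b j) ^ N * ((∏ j, b j) ^ N)⁻¹) := by ring
      _ = _ := by
        rw [mul_inv_cancel₀ (pow_ne_zero _ hP), ← e5, ← e6, ← e7]; ring
  have hL : monoL p b N ≠ 0 := by
    refine prod_ne_zero_iff.2 fun j _ => mul_ne_zero (pow_ne_zero _ (neg_ne_zero.2 (hb j)))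
      (zpow_ne_zero _ hp0)
  have hM : (((-1) ^ A * p ^ (-tri A)) *
        ∏ j ∈ univ.erase i, ((-(b j / b i)) ^ A * p ^ (-tri A))) ≠ 0 := by
    refine mul_ne_zero (mul_ne_zero (by simp) (zpow_ne_zero _ hp0)) (prod_ne_zero_iff.2 fun j _ =>
      mul_ne_zero (pow_ne_zero _ (neg_ne_zero.2 (div_ne_zero (hb j) (hb i)))) (zpow_ne_zero _ hp0))
  have : (b i * p ^ k)⁻¹ ^ (3 * N) = (monoL p b N)⁻¹ * ((-1) ^ k * p ^ (3 * tri k) *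
      wtW b i ^ k * (((-1) ^ A * p ^ (-tri A)) *
        ∏ j ∈ univ.erase i, ((-(b j / b i)) ^ A * p ^ (-tri A)))) := by
    rw [← hmono, inv_mul_cancel_left₀ hL]
  rw [this]
  generalize ((-1 : ℂ) ^ A * p ^ (-tri A)) = m1 at *
  generalize (∏ j ∈ univ.erase i, ((-(b j / b i)) ^ A * p ^ (-tri A))) = m2 at *
  have h1 : m1 ≠ 0 := left_ne_zero_of_mul hM
  have h2 : m2 ≠ 0 := right_ne_zero_of_mul hM
  simp only [mul_inv, div_eq_mul_inv]
  have := mul_inv_cancel₀ h1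
  have := mul_inv_cancel₀ h2
  field_simp

/-! ### Chan's identity -/

lemma node_inj {p : ℂ} (hp0 : p ≠ 0) (hp : ‖p‖ < 1) {b : Fin 3 → ℂ} (hb : ∀ i, b i ≠ 0)
    (hg : Generic p b) : Function.Injective fun l : Fin 3 × ℤ => b l.1 * p ^ l.2 := by
  rintro ⟨i, k⟩ ⟨j, l⟩ h
  simp only at h
  have hij : i = j := by
    by_contra hij
    refine hg i j hij (k - l) ?_
    rw [zpow_sub₀ hp0, mul_div_assoc', eq_div_iff (zpow_ne_zero _ hp0), h]
  subst hij
  rw [zpow_inj_of_norm hp0 hp (mul_left_cancel₀ (hb i) h)]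

lemma ratio_ne {p : ℂ} (hp0 : p ≠ 0) {b : Fin 3 → ℂ} (hb : ∀ i, b i ≠ 0)
    (hg : Generic p b) {i j : Fin 3} (h : j ≠ i) (k : ℕ) : b j / b i * p ^ k ≠ 1 := by
  intro e
  refine hg i j h.symm (-k) ?_
  rw [zpow_neg, zpow_natCast, ← div_eq_mul_inv, eq_div_iff (pow_ne_zero _ hp0)]
  field_simp [hb i] at e
  exact e

lemma ratio_ne' {p : ℂ} (hp0 : p ≠ 0) {b : Fin 3 → ℂ} (hb : ∀ i, b i ≠ 0)
    (hg : Generic p b) {i j : Fin 3} (h : j ≠ i) (k : ℕ) : p / (b j / b i) * p ^ k ≠ 1 := by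
  intro e
  refine hg i j h.symm (k + 1) ?_
  rw [div_div_eq_mul_div, div_mul_eq_mul_div, div_eq_iff (hb j), one_mul] at e
  rw [← e, zpow_add₀ hp0, zpow_natCast, zpow_one]; ring

lemma self_ne {p : ℂ} (hp : ‖p‖ < 1) (k : ℕ) : p * p ^ k ≠ 1 := by
  rw [← pow_succ']; exact pow_ne_one_of_norm hp (Nat.succ_ne_zero k)

lemma wtU_tendsto {p : ℂ} (hp0 : p ≠ 0) (hp : ‖p‖ < 1) {b : Fin 3 → ℂ} (hb : ∀ i, b i ≠ 0)
    (hg : Generic p b) (i : Fin 3) : Tendsto (wtU p b i) atTop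
      (𝓝 (qPochInf p p * ∏ j ∈ univ.erase i, qPochInf (b j / b i) p)⁻¹) := by
  refine Tendsto.inv₀ ((fp_tendsto p hp).mul (tendsto_finsetProd _ fun j _ =>
    (fp_tendsto _ hp).comp (tendsto_add_atTop_nat 1))) (mul_ne_zero
      (qPochInf_ne_zero hp (self_ne hp)) (prod_ne_zero_iff.2 fun j hj => qPochInf_ne_zero hp
        (ratio_ne hp0 hb hg (ne_of_mem_erase hj))))

lemma wtV_tendsto {p : ℂ} (hp0 : p ≠ 0) (hp : ‖p‖ < 1) {b : Fin 3 → ℂ} (hb : ∀ i, b i ≠ 0)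
    (hg : Generic p b) (i : Fin 3) : Tendsto (wtV p b i) atTop
      (𝓝 (qPochInf p p * ∏ j ∈ univ.erase i, qPochInf (p / (b j / b i)) p)⁻¹) := by
  refine Tendsto.inv₀ ((fp_tendsto p hp).mul (tendsto_finsetProd _ fun j _ =>
    fp_tendsto _ hp)) (mul_ne_zero
      (qPochInf_ne_zero hp (self_ne hp)) (prod_ne_zero_iff.2 fun j hj => qPochInf_ne_zero hp
        (ratio_ne' hp0 hb hg (ne_of_mem_erase hj))))

lemma summable_app {p b w : ℂ} (hp0 : p ≠ 0) (hp : ‖p‖ < 1) (hb : b ≠ 0) (hw : w ≠ 0) :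
    Summable fun k : ℤ => (-1) ^ k * p ^ (3 * tri k) * w ^ k * (1 - b * p ^ k)⁻¹ := by
  obtain ⟨C, -, hC⟩ := inv_one_sub_bdd hp0 hp hb
  exact summable_gauss_mul hp0 hp hw (by norm_num) hC

/-- The right-hand side shared by the simple-pole and double-pole partial fraction identities. -/
lemma sum_tendsto {p : ℂ} (hp0 : p ≠ 0) (hp : ‖p‖ < 1) {b : Fin 3 → ℂ} (hb : ∀ i, b i ≠ 0)
    (hg : Generic p b) :
    Tendsto (fun N : ℕ => monoL p b N * ∑ l ∈ (univ : Finset (Fin 3)) ×ˢ Icc (-(N : ℤ)) N,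
      (b l.1 * p ^ l.2)⁻¹ ^ (3 * N) /
      (∏ m ∈ ((univ : Finset (Fin 3)) ×ˢ Icc (-(N : ℤ)) N).erase l,
        (1 - b m.1 * p ^ m.2 / (b l.1 * p ^ l.2))) * (1 - b l.1 * p ^ l.2)⁻¹) atTop
      (𝓝 (∑ i, App p (b i) (wtW b i) /
        (qPochInf p p ^ 2 * ∏ j ∈ univ.erase i, theta p (b j / b i)))) := by
  have hP : ∏ j, b j ≠ 0 := prod_ne_zero_iff.2 fun j _ => hb j
  have h : ∀ i, Tendsto _ atTop _ := fun i => tannery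
    (summable_app hp0 hp (hb i) (div_ne_zero (pow_ne_zero 3 (hb i)) hP))
    (wtU_tendsto hp0 hp hb hg i) (wtV_tendsto hp0 hp hb hg i)
  have h2 := tendsto_finsetSum univ fun i _ => h i
  convert h2 using 2 with N i i
  · have hL : monoL p b N ≠ 0 := by
      refine prod_ne_zero_iff.2 fun j _ => mul_ne_zero (pow_ne_zero _ (neg_ne_zero.2 (hb j)))
        (zpow_ne_zero _ hp0)
    rw [mul_sum, sum_product]
    refine sum_congr rfl fun i _ => sum_congr rfl fun k hk => ?_
    simp only
    rw [weight_eq hp0 hb i hk, wtW]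
    field_simp
  · refine sum_congr rfl fun i _ => ?_
    rw [App, wtW, ← mul_inv, div_eq_inv_mul]
    congr 2
    simp only [theta, prod_mul_distrib]
    ring

lemma monoL_ne {p : ℂ} (hp0 : p ≠ 0) {b : Fin 3 → ℂ} (hb : ∀ i, b i ≠ 0) (N : ℕ) :
    monoL p b N ≠ 0 :=
  prod_ne_zero_iff.2 fun j _ => mul_ne_zero (pow_ne_zero _ (neg_ne_zero.2 (hb j)))
    (zpow_ne_zero _ hp0)

lemma card_nodes (N : ℕ) : ((univ : Finset (Fin 3)) ×ˢ Icc (-(N : ℤ)) N).card = 3 * (2 * N + 1) := by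
  rw [card_product, Int.card_Icc, card_univ, Fintype.card_fin]; omega

lemma orbit_ne {p c : ℂ} (hp0 : p ≠ 0) (hc : ∀ k : ℤ, c * p ^ k ≠ 1) (k : ℕ) :
    c * p ^ k ≠ 1 ∧ p / c * p ^ k ≠ 1 := by
  refine ⟨by simpa using hc k, fun e => hc (-(k + 1)) ?_⟩
  have hc0 : c ≠ 0 := by rintro rfl; simp at e
  rw [zpow_neg, ← div_eq_mul_inv, div_eq_one_iff_eq (zpow_ne_zero _ hp0), zpow_add₀ hp0,
    zpow_natCast, zpow_one]
  field_simp at e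
  rw [← e]; ring

lemma theta_ne_zero {p c : ℂ} (hp0 : p ≠ 0) (hp : ‖p‖ < 1) (hc : ∀ k : ℤ, c * p ^ k ≠ 1) :
    theta p c ≠ 0 :=
  mul_ne_zero (qPochInf_ne_zero hp fun k => (orbit_ne hp0 hc k).1)
    (qPochInf_ne_zero hp fun k => (orbit_ne hp0 hc k).2)

/-- Chan's identity: a partial fraction expansion of a product of reciprocal theta functions into
Appell-type sums. It is the limit `N → ∞` of the expansion of `1 / ∏_{i, |k|≤N} (1 - b_i p^k u)`,
multiplied by `u^(3N)`, at `u = 1`. -/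
lemma chan {p : ℂ} (hp0 : p ≠ 0) (hp : ‖p‖ < 1) {b : Fin 3 → ℂ} (hb : ∀ i, b i ≠ 0)
    (hg : Generic p b) (h1 : ∀ i, ∀ k : ℤ, b i * p ^ k ≠ 1) :
    (∏ i, theta p (b i))⁻¹ = ∑ i, App p (b i) (wtW b i) /
        (qPochInf p p ^ 2 * ∏ j ∈ univ.erase i, theta p (b j / b i)) := by
  refine tendsto_nhds_unique ?_ (sum_tendsto hp0 hp hb hg)
  have hl : Tendsto (fun N : ℕ => (∏ i, (fp (b i) p (N + 1) * fp (p / b i) p N))⁻¹) atTop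
      (𝓝 (∏ i, theta p (b i))⁻¹) :=
    Tendsto.inv₀ (tendsto_finsetProd _ fun i _ => ((fp_tendsto _ hp).comp
      (tendsto_add_atTop_nat 1)).mul (fp_tendsto _ hp)) (prod_ne_zero_iff.2 fun i _ =>
        theta_ne_zero hp0 hp (h1 i))
  refine hl.congr fun N => ?_
  have key := pf (s := (univ : Finset (Fin 3)) ×ˢ Icc (-(N : ℤ)) N)
    (α := fun l => b l.1 * p ^ l.2) (node_inj hp0 hp hb hg).injOn
    (fun l _ => mul_ne_zero (hb _) (zpow_ne_zero _ hp0)) (u := 1)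
    (fun l _ => by rw [mul_one]; exact h1 _ _) (Q := Polynomial.X ^ (3 * N)) (by
      rw [Polynomial.degree_X_pow, card_nodes]; exact_mod_cast (by omega))
  simp only [Polynomial.eval_pow, Polynomial.eval_X, one_pow, mul_one] at key
  rw [← key, prod_product]
  have : ∀ i, ∏ k ∈ Icc (-(N : ℤ)) N, (1 - b i * p ^ k) =
      ((-b i) ^ N * p ^ (-tri N)) * (fp (b i) p (N + 1) * fp (p / b i) p N) := by
    intro i
    simpa using prod_theta (k := 0) hp0 (hb i) (show (N : ℤ) + 0 = N by simp)
      (show (N : ℤ) - 0 = N by simp)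
  simp only [this]
  rw [prod_mul_distrib (f := fun i => (-b i) ^ N * p ^ (-tri N))]
  have hL := monoL_ne hp0 hb N
  rw [show ∏ x, ((-b x) ^ N * p ^ (-tri ↑N)) = monoL p b N from rfl]
  rw [one_div, mul_inv, mul_inv_cancel_left₀ hL]

/-- The logarithmic-derivative sum `ρ(b) = ∑_{k≥0} b p^k/(1-b p^k) - ∑_{k≥1} (p^k/b)/(1-p^k/b)`. -/
noncomputable def rho (p b : ℂ) : ℂ :=
  ∑' k : ℕ, b * p ^ k * (1 - b * p ^ k)⁻¹ -
    ∑' k : ℕ, p ^ (k + 1) / b * (1 - p ^ (k + 1) / b)⁻¹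

lemma summable_lambert {p : ℂ} (hp : ‖p‖ < 1) (b : ℂ) :
    Summable fun k : ℕ => b * p ^ k * (1 - b * p ^ k)⁻¹ := by
  have hpow := tendsto_pow_atTop_nhds_zero_of_norm_lt_one hp
  have h1 : Tendsto (fun n : ℕ => (1 - b * p ^ n)⁻¹) atTop (𝓝 (1 - b * 0)⁻¹) :=
    (tendsto_const_nhds.sub (hpow.const_mul b)).inv₀ (by simp)
  obtain ⟨C, -, hC⟩ := bdd_of_tendsto h1
  refine Summable.of_norm_bounded
    ((summable_geometric_of_lt_one (norm_nonneg _) hp).mul_left (‖b‖ * C)) fun k => ?_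
  rw [norm_mul, norm_mul, norm_pow]
  calc _ ≤ ‖b‖ * ‖p‖ ^ k * C := by gcongr; exact hC k
    _ = _ := by ring

lemma summable_lambert' {p : ℂ} (hp : ‖p‖ < 1) (b : ℂ) :
    Summable fun k : ℕ => p ^ (k + 1) / b * (1 - p ^ (k + 1) / b)⁻¹ := by
  refine (summable_lambert hp (p / b)).congr fun k => ?_
  rw [pow_succ', mul_div_right_comm]

lemma sum_Icc_split (f : ℤ → ℂ) (N : ℕ) :
    ∑ j ∈ Icc (-(N : ℤ)) N, f j =
      (∑ l ∈ range (N + 1), f l) + ∑ l ∈ range N, f (-(l + 1 : ℤ)) := by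
  induction N with
  | zero => simp
  | succ n ih =>
    have : Icc (-((n + 1 : ℕ) : ℤ)) (n + 1 : ℕ) =
        insert ((n + 1 : ℕ) : ℤ) (insert (-((n + 1 : ℕ) : ℤ)) (Icc (-(n : ℤ)) n)) := by
      ext j; simp only [mem_Icc, mem_insert]; omega
    rw [this, sum_insert (by simp only [mem_insert, mem_Icc]; omega),
      sum_insert (by simp only [mem_Icc]; omega), ih, sum_range_succ _ (n + 1),
      sum_range_succ (fun l : ℕ => f (-(l + 1 : ℤ))) n]
    push_cast
    ring_nf

lemma rho_tendsto {p b : ℂ} (hp0 : p ≠ 0) (hp : ‖p‖ < 1) (hb : b ≠ 0)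
    (h : ∀ k : ℕ, p ^ (k + 1) ≠ b) :
    Tendsto (fun N : ℕ => (N : ℂ) + ∑ k ∈ Icc (-(N : ℤ)) N, b * p ^ k * (1 - b * p ^ k)⁻¹) atTop
      (𝓝 (rho p b)) := by
  have h1 := (summable_lambert hp b).hasSum.tendsto_sum_nat.comp (tendsto_add_atTop_nat 1)
  have h2 := (summable_lambert' hp b).hasSum.tendsto_sum_nat
  refine (h1.sub h2).congr fun N => ?_
  rw [sum_Icc_split]
  simp only [Function.comp, zpow_natCast]
  have : ∀ l : ℕ, b * p ^ (-(l + 1 : ℤ)) * (1 - b * p ^ (-(l + 1 : ℤ)))⁻¹ =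
      -1 - p ^ (l + 1) / b * (1 - p ^ (l + 1) / b)⁻¹ := by
    intro l
    have hl : p ^ (l + 1) ≠ 0 := pow_ne_zero _ hp0
    rw [zpow_neg, show ((l : ℤ) + 1) = ((l + 1 : ℕ) : ℤ) by push_cast; rfl, zpow_natCast]
    have e1 : 1 - b * (p ^ (l + 1))⁻¹ = (p ^ (l + 1) - b) / p ^ (l + 1) := by field_simp
    have e2 : 1 - p ^ (l + 1) / b = -(p ^ (l + 1) - b) / b := by field_simp; ring
    have e3 : p ^ (l + 1) - b ≠ 0 := sub_ne_zero.2 (h l)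
    rw [e1, e2]
    field_simp
    ring
  simp only [this, sum_sub_distrib, sum_const, card_range, nsmul_eq_mul]
  ring

lemma rho_one {p : ℂ} : rho p 1 = 0 := by
  by_cases h : Summable fun k : ℕ => 1 * p ^ k * (1 - 1 * p ^ k)⁻¹
  · rw [rho, h.tsum_eq_zero_add]; simp
  · have h' : ¬ Summable fun k : ℕ => p ^ (k + 1) / 1 * (1 - p ^ (k + 1) / 1)⁻¹ := by
      intro h2; apply h
      rw [← summable_nat_add_iff 1]
      simpa using h2
    rw [rho, tsum_eq_zero_of_not_summable h, tsum_eq_zero_of_not_summable h', sub_zero]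

/-- The degenerate case `b 0 = 1` of Chan's identity, where the partial fraction expansion is
evaluated at a pole. -/
lemma chan_degenerate {p : ℂ} (hp0 : p ≠ 0) (hp : ‖p‖ < 1) {b : Fin 3 → ℂ} (hb : ∀ i, b i ≠ 0)
    (hg : Generic p b) (h1 : b 0 = 1) :
    -(rho p (b 1) + rho p (b 2)) / (qPochInf p p ^ 2 * (theta p (b 1) * theta p (b 2))) =
      ∑ i, App p (b i) (wtW b i) /
        (qPochInf p p ^ 2 * ∏ j ∈ univ.erase i, theta p (b j / b i)) := by
  refine tendsto_nhds_unique ?_ (sum_tendsto hp0 hp hb hg)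
  have hne : ∀ i, ∀ k : ℕ, p ^ (k + 1) ≠ b i := by
    intro i k e
    by_cases hi : i = 0
    · subst hi
      exact pow_ne_one_of_norm hp k.succ_ne_zero (e.trans h1)
    · refine hg 0 i (Ne.symm hi) (k + 1) ?_
      rw [h1, one_mul, ← e]; exact_mod_cast rfl
  have hl : Tendsto (fun N : ℕ => -(∑ i, ((N : ℂ) + ∑ k ∈ Icc (-(N : ℤ)) N,
      b i * p ^ k * (1 - b i * p ^ k)⁻¹)) * (wtU p b 0 N * wtV p b 0 N)) atTop _ :=
    ((tendsto_finsetSum univ fun i _ => rho_tendsto hp0 hp (hb i) (hne i)).neg).mul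
      ((wtU_tendsto hp0 hp hb hg 0).mul (wtV_tendsto hp0 hp hb hg 0))
  convert hl.congr fun N => ?_ using 2
  · rw [Fin.sum_univ_three, h1, rho_one, zero_add, div_eq_mul_inv, ← mul_inv]
    congr 2
    rw [show (univ : Finset (Fin 3)).erase 0 = {1, 2} from rfl]
    simp only [theta]
    rw [prod_pair (by decide), prod_pair (by decide)]
    simp only [div_one]
    ring
  -- the node at which the expansion is evaluated is `b 0 * p ^ 0 = 1`
  · have key := pf_double (s := (univ : Finset (Fin 3)) ×ˢ Icc (-(N : ℤ)) N)
      (α := fun l => b l.1 * p ^ l.2) (node_inj hp0 hp hb hg).injOn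
      (fun l _ => mul_ne_zero (hb _) (zpow_ne_zero _ hp0)) (i := (0, 0))
      (by simp) (by simp [h1]) (d := 3 * N) (by rw [card_nodes]; omega)
    have w := weight_eq (N := N) hp0 hb 0 (k := 0) (by simp)
    simp only [h1, zpow_zero, mul_one, inv_one, one_pow, div_one, tri_zero, mul_zero, one_mul,
      sub_zero, add_zero, Int.toNat_natCast] at w
    rw [one_div] at w
    rw [key, w, sum_product]
    have hL := monoL_ne hp0 hb N
    simp only [sum_add_distrib, sum_const, card_univ, Fintype.card_fin, nsmul_eq_mul]
    push_cast
    field_simp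

/-! ### Logarithmic-derivative sums of theta functions -/

lemma theta_inv {p z : ℂ} (hp : ‖p‖ < 1) (hz : z ≠ 0) : theta p z⁻¹ = -z⁻¹ * theta p z := by
  have step : ∀ a : ℂ, qPochInf a p = (1 - a) * qPochInf (a * p) p := by
    intro a
    have h1 := (fp_tendsto a hp).comp (tendsto_add_atTop_nat 1)
    have h2 := (fp_tendsto (a * p) hp).const_mul (1 - a)
    refine tendsto_nhds_unique h1 (h2.congr fun n => ?_)
    rw [Function.comp, fp, fp, prod_range_succ', mul_comm]
    simp only [pow_zero, mul_one, pow_succ']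
    congr 1
    exact prod_congr rfl fun k _ => by ring
  rw [theta, theta, step z⁻¹, step z, div_inv_eq_mul, mul_comm p z, div_eq_inv_mul]
  field_simp
  ring

/-- The tail `(1 - b p^{-n})⁻¹` decays geometrically. -/
lemma inv_one_sub_neg {p b : ℂ} (hp0 : p ≠ 0) (hb : b ≠ 0) (n : ℕ) :
    (1 - b * p ^ (-(n : ℤ)))⁻¹ = -(b⁻¹ * p ^ n) * (1 - b⁻¹ * p ^ (n : ℤ))⁻¹ := by
  have hl : p ^ n ≠ 0 := pow_ne_zero _ hp0
  rw [zpow_neg, zpow_natCast]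
  by_cases h : p ^ n = b
  · simp [h, hb]
  have e1 : 1 - b * (p ^ n)⁻¹ = (p ^ n - b) / p ^ n := by field_simp
  have e2 : 1 - b⁻¹ * p ^ n = -(p ^ n - b) / b := by field_simp; ring
  have e3 : p ^ n - b ≠ 0 := sub_ne_zero.2 h
  rw [e1, e2]
  field_simp

lemma summable_two_inv {p a b : ℂ} (hp0 : p ≠ 0) (hp : ‖p‖ < 1) (ha : a ≠ 0) (hb : b ≠ 0) :
    Summable fun k : ℤ => (1 - a * p ^ (-k))⁻¹ * (1 - b * p ^ k)⁻¹ := by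
  obtain ⟨A, hA0, hA⟩ := inv_one_sub_bdd hp0 hp ha
  obtain ⟨A', hA0', hA'⟩ := inv_one_sub_bdd hp0 hp (inv_ne_zero ha)
  obtain ⟨B, hB0, hB⟩ := inv_one_sub_bdd hp0 hp hb
  obtain ⟨B', hB0', hB'⟩ := inv_one_sub_bdd hp0 hp (inv_ne_zero hb)
  have g := summable_geometric_of_lt_one (norm_nonneg p) hp
  refine Summable.of_nat_of_neg ?_ ?_
  · refine Summable.of_norm_bounded (g.mul_left (‖a⁻¹‖ * A' * B)) fun n => ?_
    rw [inv_one_sub_neg hp0 ha, norm_mul, norm_mul, norm_neg, norm_mul, norm_pow]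
    calc _ ≤ ‖a⁻¹‖ * ‖p‖ ^ n * A' * B := by gcongr; exacts [hA' _, hB _]
      _ = _ := by ring
  · refine Summable.of_norm_bounded (g.mul_left (A * ‖b⁻¹‖ * B')) fun n => ?_
    rw [inv_one_sub_neg hp0 hb, norm_mul, norm_mul, norm_neg, norm_mul, norm_pow]
    calc _ ≤ A * (‖b⁻¹‖ * ‖p‖ ^ n * B') := by gcongr; exacts [hA _, hB' _]
      _ = _ := by ring

lemma tsum_eq_of_Icc {t : ℤ → ℂ} (ht : Summable t) {l : ℂ}
    (h : Tendsto (fun N : ℕ => ∑ k ∈ Icc (-(N : ℤ)) N, t k) atTop (𝓝 l)) : ∑' k, t k = l := by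
  have := tannery ht (u := fun _ => 1) (v := fun _ => 1) tendsto_const_nhds tendsto_const_nhds
  simp only [mul_one, one_mul] at this
  exact tendsto_nhds_unique this h

/-- The part of the weight in the expansion behind `rho_theta` that comes from the `n` indices above
the node, for theta functions with argument ratio `z`. -/
noncomputable def gU (p z : ℂ) (n : ℕ) : ℂ := fp z p (n + 1) ^ 2 / (fp p p n * fp (z ^ 2) p (n + 1))

/-- The part of the weight in the expansion behind `rho_theta` that comes from the `n` indices below
the node, for theta functions with argument ratio `z`. -/
noncomputable def gV (p z : ℂ) (n : ℕ) : ℂ := fp (p / z) p n ^ 2 / (fp p p n * fp (p / z ^ 2) p n)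

lemma gU_tendsto {p z : ℂ} (hp0 : p ≠ 0) (hp : ‖p‖ < 1) (hz2 : ∀ k : ℤ, z ^ 2 * p ^ k ≠ 1) :
    Tendsto (gU p z) atTop (𝓝 (qPochInf z p ^ 2 / (qPochInf p p * qPochInf (z ^ 2) p))) := by
  have s := tendsto_add_atTop_nat 1
  exact (((fp_tendsto z hp).comp s).pow 2).div ((fp_tendsto p hp).mul ((fp_tendsto _ hp).comp s))
    (mul_ne_zero (qPochInf_ne_zero hp (self_ne hp))
      (qPochInf_ne_zero hp fun k => (orbit_ne hp0 hz2 k).1))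

lemma gV_tendsto {p z : ℂ} (hp0 : p ≠ 0) (hp : ‖p‖ < 1) (hz2 : ∀ k : ℤ, z ^ 2 * p ^ k ≠ 1) :
    Tendsto (gV p z) atTop
      (𝓝 (qPochInf (p / z) p ^ 2 / (qPochInf p p * qPochInf (p / z ^ 2) p))) :=
  ((fp_tendsto _ hp).pow 2).div ((fp_tendsto p hp).mul (fp_tendsto _ hp))
    (mul_ne_zero (qPochInf_ne_zero hp (self_ne hp))
      (qPochInf_ne_zero hp fun k => (orbit_ne hp0 hz2 k).2))

/-- The coefficient of one node in the truncated partial fraction expansion behind `rho_theta`. Removing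
the index `0` from one numerator keeps its degree below that of the denominator; it is the source of
the extra factor `(1 - z p^(-k))⁻¹`, which makes the limiting sums converge. -/
lemma weight2_eq {p z : ℂ} (hp0 : p ≠ 0) (hz : z ≠ 0) (hz1 : ∀ k : ℤ, z * p ^ k ≠ 1) {N : ℕ} {k : ℤ}
    (hk : k ∈ Icc (-(N : ℤ)) N) :
    (∏ j ∈ (Icc (-(N : ℤ)) N).erase 0, (1 - z * p ^ (j - k))) *
        (∏ j ∈ Icc (-(N : ℤ)) N, (1 - z * p ^ (j - k))) /
      ((∏ j ∈ (Icc (-(N : ℤ)) N).erase k, (1 - p ^ (j - k))) *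
        ∏ j ∈ Icc (-(N : ℤ)) N, (1 - z ^ 2 * p ^ (j - k))) =
      (1 - z * p ^ (-k))⁻¹ * (gU p z (N - k).toNat * gV p z (N + k).toNat) := by
  rw [mem_Icc] at hk
  obtain ⟨A, hA⟩ := Int.eq_ofNat_of_zero_le (show 0 ≤ (N : ℤ) + k by omega)
  obtain ⟨B, hB⟩ := Int.eq_ofNat_of_zero_le (show 0 ≤ (N : ℤ) - k by omega)
  have h0 : (1 - z * p ^ (-k)) ≠ 0 := sub_ne_zero.2 (hz1 _).symm
  have e : ∏ j ∈ (Icc (-(N : ℤ)) N).erase 0, (1 - z * p ^ (j - k)) =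
      (1 - z * p ^ (-k))⁻¹ * ∏ j ∈ Icc (-(N : ℤ)) N, (1 - z * p ^ (j - k)) := by
    rw [← mul_prod_erase (Icc (-(N : ℤ)) N) _ (show (0 : ℤ) ∈ _ by rw [mem_Icc]; omega)]
    rw [zero_sub, inv_mul_cancel_left₀ h0]
  rw [e, prod_theta_erase hp0 hA hB, prod_theta hp0 hz hA hB,
    prod_theta hp0 (pow_ne_zero 2 hz) hA hB, hA, hB]
  simp only [Int.toNat_natCast, gU, gV]
  have hz2 : ((-z) ^ A) ^ 2 = (-1) ^ A * (-z ^ 2) ^ A := by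
    rw [← pow_mul, mul_comm A 2, pow_mul, ← mul_pow]; ring
  have h1 : (-1 : ℂ) ^ A ≠ 0 := by simp
  have h2 : p ^ (-tri A) ≠ 0 := zpow_ne_zero _ hp0
  have h3 : (-z ^ 2) ^ A ≠ 0 := pow_ne_zero _ (neg_ne_zero.2 (pow_ne_zero 2 hz))
  generalize (1 - z * p ^ (-k))⁻¹ = d
  generalize p ^ (-tri A) = P at *
  calc _ = d * ((((-z) ^ A) ^ 2 * P * P) * (fp z p (B + 1) * fp (p / z) p A) ^ 2) /
        (((-1) ^ A * (-z ^ 2) ^ A * P * P) * ((fp p p B * fp p p A) *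
          (fp (z ^ 2) p (B + 1) * fp (p / z ^ 2) p A))) := by congr 1 <;> ring
    _ = _ := by
      rw [hz2, mul_left_comm d, mul_div_mul_left _ _
        (mul_ne_zero (mul_ne_zero (mul_ne_zero h1 h3) h2) h2)]
      simp only [div_eq_mul_inv, mul_inv]
      ring

/-- A Frobenius–Stickelberger type identity expressing a logarithmic-derivative sum as a quotient of
theta functions. It comes from the partial fraction expansion in `u` of
`θ(y²u)² / (θ(yu) θ(y³u))`, truncated to `|k| ≤ N` and evaluated at `u = 1`; the two bilateral sums of
residues are combinations of `ρ(y)` and `ρ(y³)`. -/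
lemma rho_theta {p y : ℂ} (hp0 : p ≠ 0) (hp : ‖p‖ < 1) (hy : y ≠ 0)
    (h1 : ∀ k : ℤ, y * p ^ k ≠ 1) (h2 : ∀ k : ℤ, y ^ 2 * p ^ k ≠ 1)
    (h3 : ∀ k : ℤ, y ^ 3 * p ^ k ≠ 1) :
    3 * rho p y - rho p (y ^ 3) + 1 =
      qPochInf p p ^ 2 * theta p (y ^ 2) ^ 3 / (theta p y ^ 3 * theta p (y ^ 3)) := by
  have hy1 : ∀ k : ℤ, y⁻¹ * p ^ k ≠ 1 := fun k e => h1 (-k) (by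
    rw [zpow_neg]; rw [← inv_inj, mul_inv, inv_inv, inv_one] at e; exact e)
  have hy2 : ∀ k : ℤ, (y⁻¹) ^ 2 * p ^ k ≠ 1 := fun k e => h2 (-k) (by
    rw [zpow_neg]; rw [← inv_inj, mul_inv, inv_pow, inv_inv, inv_one] at e; exact e)
  have hnn : ∀ {c : ℂ}, (∀ k : ℤ, c * p ^ k ≠ 1) → ∀ k : ℕ, p ^ (k + 1) ≠ c := fun {c} hc k e => by
    apply hc (-(k + 1))
    rw [← e, ← zpow_natCast, ← zpow_add₀ hp0]; simp
  have r1 := rho_tendsto hp0 hp hy (hnn h1)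
  have r3 := rho_tendsto hp0 hp (pow_ne_zero 3 hy) (hnn h3)
  -- By elementary partial fractions, the two bilateral sums over the orbits of `y` and of `y ^ 3`
  -- are combinations of the series `ρ`.
  have s1 := summable_two_inv hp0 hp hy hy
  have s2 := summable_two_inv hp0 hp (inv_ne_zero hy) (pow_ne_zero 3 hy)
  have t1 : ∑' k : ℤ, (1 - y ^ 2) * ((1 - y * p ^ (-k))⁻¹ * (1 - y * p ^ k)⁻¹) =
      1 + 2 * rho p y := by
    refine tsum_eq_of_Icc (s1.mul_left _) (((r1.const_mul 2).const_add 1).congr fun N => ?_)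
    have : ∀ k : ℤ, (1 - y ^ 2) * ((1 - y * p ^ (-k))⁻¹ * (1 - y * p ^ k)⁻¹) =
        1 + y * p ^ k * (1 - y * p ^ k)⁻¹ + y * p ^ (-k) * (1 - y * p ^ (-k))⁻¹ := by
      intro k
      have a1 : 1 - y * p ^ k ≠ 0 := sub_ne_zero.2 (h1 _).symm
      have a2 : 1 - y * p ^ (-k) ≠ 0 := sub_ne_zero.2 (h1 _).symm
      have a3 : p ^ k * p ^ (-k) = 1 := by rw [← zpow_add₀ hp0]; simp
      generalize p ^ k = s at *
      generalize p ^ (-k) = t at *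
      field_simp
      linear_combination (y ^ 2) * a3
    simp only [this, sum_add_distrib, sum_const, Int.card_Icc, nsmul_eq_mul]
    have e : ∑ k ∈ Icc (-(N : ℤ)) N, y * p ^ (-k) * (1 - y * p ^ (-k))⁻¹ =
        ∑ k ∈ Icc (-(N : ℤ)) N, y * p ^ k * (1 - y * p ^ k)⁻¹ := by
      refine sum_nbij' (fun k => -k) (fun k => -k) ?_ ?_ ?_ ?_ ?_ <;>
        simp only [mem_Icc] <;> intros <;> first | omega | simp
    rw [e, show ((N : ℤ) + 1 - -(N : ℤ)).toNat = 2 * N + 1 by omega]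
    push_cast
    ring
  have t2 : ∑' k : ℤ, (1 - y ^ 2) * ((1 - y⁻¹ * p ^ (-k))⁻¹ * (1 - y ^ 3 * p ^ k)⁻¹) =
      rho p (y ^ 3) - rho p y := by
    refine tsum_eq_of_Icc (s2.mul_left _) ((r3.sub r1).congr fun N => ?_)
    have : ∀ k : ℤ, (1 - y ^ 2) * ((1 - y⁻¹ * p ^ (-k))⁻¹ * (1 - y ^ 3 * p ^ k)⁻¹) =
        y ^ 3 * p ^ k * (1 - y ^ 3 * p ^ k)⁻¹ - y * p ^ k * (1 - y * p ^ k)⁻¹ := by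
      intro k
      have a1 : 1 - y * p ^ k ≠ 0 := sub_ne_zero.2 (h1 _).symm
      have a2 : 1 - y ^ 3 * p ^ k ≠ 0 := sub_ne_zero.2 (h3 _).symm
      have hs : p ^ k ≠ 0 := zpow_ne_zero _ hp0
      rw [zpow_neg]
      generalize p ^ k = s at *
      have a3 : 1 - y⁻¹ * s⁻¹ = -(1 - y * s) / (y * s) := by field_simp; ring
      rw [a3, inv_div]
      field_simp
      ring
    simp only [this, sum_sub_distrib]
    ring
  set b : Fin 2 → ℂ := ![y, y ^ 3] with hb
  have hb0 : ∀ i, b i ≠ 0 := by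
    intro i; fin_cases i
    · exact hy
    · exact pow_ne_zero 3 hy
  have hb1 : ∀ i, ∀ k : ℤ, b i * p ^ k ≠ 1 := by
    intro i; fin_cases i
    · exact h1
    · exact h3
  have hinj : Function.Injective fun l : Fin 2 × ℤ => b l.1 * p ^ l.2 := by
    have hne : ∀ k l : ℤ, y * p ^ k ≠ y ^ 3 * p ^ l := by
      intro k l h
      apply h2 (l - k)
      rw [zpow_sub₀ hp0, mul_div_assoc', div_eq_one_iff_eq (zpow_ne_zero _ hp0)]
      apply mul_left_cancel₀ hy
      rw [h]; ring
    rintro ⟨i, k⟩ ⟨j, l⟩ h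
    simp only at h
    fin_cases i <;> fin_cases j <;> simp only [hb] at h
    · rw [zpow_inj_of_norm hp0 hp (mul_left_cancel₀ hy h)]
    · exact absurd h (hne _ _)
    · exact absurd h.symm (hne _ _)
    · rw [zpow_inj_of_norm hp0 hp (mul_left_cancel₀ (pow_ne_zero 3 hy) h)]
  have L1 := tannery (s1.mul_left (1 - y ^ 2)) (gU_tendsto hp0 hp h2) (gV_tendsto hp0 hp h2)
  have L2 := tannery (s2.mul_left (1 - y ^ 2)) (gU_tendsto hp0 hp hy2) (gV_tendsto hp0 hp hy2)
  have s := tendsto_add_atTop_nat 1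
  have hl : Tendsto (fun N : ℕ => (fp (y ^ 2) p (N + 1) * fp (p / y ^ 2) p N) ^ 2 /
      ((fp y p (N + 1) * fp (p / y) p N) * (fp (y ^ 3) p (N + 1) * fp (p / y ^ 3) p N))) atTop
      (𝓝 (theta p (y ^ 2) ^ 2 / (theta p y * theta p (y ^ 3)))) :=
    ((((fp_tendsto _ hp).comp s).mul (fp_tendsto _ hp)).pow 2).div
      ((((fp_tendsto _ hp).comp s).mul (fp_tendsto _ hp)).mul
        (((fp_tendsto _ hp).comp s).mul (fp_tendsto _ hp)))
      (mul_ne_zero (theta_ne_zero hp0 hp h1) (theta_ne_zero hp0 hp h3))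
  have key := tendsto_nhds_unique hl ((L1.add L2).congr fun N => ?_)
  · have ti : theta p y⁻¹ = -y⁻¹ * theta p y := theta_inv hp hy
    have ti2 : theta p (y⁻¹ ^ 2) = -(y ^ 2)⁻¹ * theta p (y ^ 2) := by
      rw [inv_pow]; exact theta_inv hp (pow_ne_zero 2 hy)
    have n1 := theta_ne_zero hp0 hp h1
    have n2 := theta_ne_zero hp0 hp h2
    have n3 := theta_ne_zero hp0 hp h3
    have nJ := qPochInf_ne_zero hp (self_ne hp)
    rw [t1, t2] at key
    have c1 : ∀ z, qPochInf z p ^ 2 / (qPochInf p p * qPochInf (z ^ 2) p) *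
        (qPochInf (p / z) p ^ 2 / (qPochInf p p * qPochInf (p / z ^ 2) p)) =
        theta p z ^ 2 / (qPochInf p p ^ 2 * theta p (z ^ 2)) := by
      intro z; rw [theta, theta, div_mul_div_comm]; congr 1 <;> ring
    rw [c1, c1, ti, ti2] at key
    generalize theta p y = A1 at *
    generalize theta p (y ^ 2) = A2 at *
    generalize theta p (y ^ 3) = A3 at *
    generalize qPochInf p p = J at *
    field_simp at key ⊢
    linear_combination -key
  · -- the partial fraction expansion for the truncated products
    have hIcc0 : (0 : ℤ) ∈ Icc (-(N : ℤ)) N := by simp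
    have card1 : (Icc (-(N : ℤ)) N).card = 2 * N + 1 := by rw [Int.card_Icc]; omega
    have hdeg : ∀ (t : Finset ℤ), (∏ k ∈ t, (1 - Polynomial.C (y ^ 2 * p ^ k) *
        Polynomial.X)).degree ≤ (t.card : WithBot ℕ) := by
      intro t
      refine (Polynomial.degree_prod_le _ _).trans ?_
      refine (sum_le_sum (g := fun _ => (1 : WithBot ℕ)) fun k _ => ?_).trans (by simp)
      refine (Polynomial.degree_sub_le _ _).trans (max_le ?_ ?_)
      · simp
      · exact (Polynomial.degree_C_mul_X_le _)
    have hev : ∀ (t : Finset ℤ) (u : ℂ), Polynomial.eval u (∏ k ∈ t,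
        (1 - Polynomial.C (y ^ 2 * p ^ k) * Polynomial.X)) =
        ∏ k ∈ t, (1 - y ^ 2 * p ^ k * u) := by
      intro t u; simp [Polynomial.eval_prod]
    have k0 := pf (s := (univ : Finset (Fin 2)) ×ˢ Icc (-(N : ℤ)) N)
      (α := fun l => b l.1 * p ^ l.2) hinj.injOn
      (fun l _ => mul_ne_zero (hb0 _) (zpow_ne_zero _ hp0)) (u := 1)
      (fun l _ => by rw [mul_one]; exact hb1 _ _)
      (Q := (∏ k ∈ (Icc (-(N : ℤ)) N).erase 0, (1 - Polynomial.C (y ^ 2 * p ^ k) *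
        Polynomial.X)) * ∏ k ∈ Icc (-(N : ℤ)) N, (1 - Polynomial.C (y ^ 2 * p ^ k) *
        Polynomial.X)) (by
        rw [card_product, card1, card_univ, Fintype.card_fin]
        refine (Polynomial.degree_mul_le _ _).trans_lt
          ((add_le_add (hdeg _) (hdeg _)).trans_lt ?_)
        rw [card_erase_of_mem hIcc0, card1]
        exact_mod_cast (by omega))
    simp only [Polynomial.eval_mul, hev, mul_one] at k0
    rw [prod_product, sum_product, Fin.prod_univ_two, Fin.sum_univ_two] at k0
    have hpt : ∀ β : ℂ, β ≠ 0 → ∏ k ∈ Icc (-(N : ℤ)) N, (1 - β * p ^ k) =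
        ((-β) ^ N * p ^ (-tri N)) * (fp β p (N + 1) * fp (p / β) p N) := by
      intro β hβ
      simpa using prod_theta (k := 0) hp0 hβ (show (N : ℤ) + 0 = N by simp)
        (show (N : ℤ) - 0 = N by simp)
    have hE : (1 - y ^ 2) * ∏ k ∈ (Icc (-(N : ℤ)) N).erase 0, (1 - y ^ 2 * p ^ k) =
        ∏ k ∈ Icc (-(N : ℤ)) N, (1 - y ^ 2 * p ^ k) := by
      rw [← mul_prod_erase _ _ hIcc0]; simp
    have hv0 : b 0 = y := rfl
    have hv1 : b 1 = y ^ 3 := rfl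
    have hLHS : (1 - y ^ 2) * ((∏ k ∈ (Icc (-(N : ℤ)) N).erase 0, (1 - y ^ 2 * p ^ k)) *
        (∏ k ∈ Icc (-(N : ℤ)) N, (1 - y ^ 2 * p ^ k)) /
        ((∏ k ∈ Icc (-(N : ℤ)) N, (1 - b 0 * p ^ k)) *
          ∏ k ∈ Icc (-(N : ℤ)) N, (1 - b 1 * p ^ k))) =
        (fp (y ^ 2) p (N + 1) * fp (p / y ^ 2) p N) ^ 2 /
      ((fp y p (N + 1) * fp (p / y) p N) * (fp (y ^ 3) p (N + 1) * fp (p / y ^ 3) p N)) := by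
      rw [mul_div_assoc', ← mul_assoc, hE, hpt _ (hb0 0), hpt _ (hb0 1), hpt _ (pow_ne_zero 2 hy)]
      have hm : (-y ^ 2) ^ N * (-y ^ 2) ^ N = (-y) ^ N * (-y ^ 3) ^ N := by
        rw [← mul_pow, ← mul_pow]; ring
      have hm0 : (-y) ^ N * (-y ^ 3) ^ N * p ^ (-tri N) * p ^ (-tri N) ≠ 0 :=
        mul_ne_zero (mul_ne_zero (mul_ne_zero (pow_ne_zero _ (neg_ne_zero.2 hy))
          (pow_ne_zero _ (neg_ne_zero.2 (pow_ne_zero 3 hy)))) (zpow_ne_zero _ hp0))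
          (zpow_ne_zero _ hp0)
      rw [← mul_div_mul_left ((fp (y ^ 2) p (N + 1) * fp (p / y ^ 2) p N) ^ 2) _ hm0]
      rw [hv0, hv1]
      rw [show ((-y) ^ N * p ^ (-tri N) * (fp y p (N + 1) * fp (p / y) p N) *
        ((-y ^ 3) ^ N * p ^ (-tri N) * (fp (y ^ 3) p (N + 1) * fp (p / y ^ 3) p N))) =
        ((-y) ^ N * (-y ^ 3) ^ N) * p ^ (-tri N) * p ^ (-tri N) *
          ((fp y p (N + 1) * fp (p / y) p N) * (fp (y ^ 3) p (N + 1) * fp (p / y ^ 3) p N)) by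
        generalize (-y) ^ N = M1
        generalize (-y ^ 3) ^ N = M3
        generalize p ^ (-tri N) = M2
        ring, ← hm]
      generalize (-y ^ 2) ^ N = M1
      generalize p ^ (-tri N) = M2
      congr 1 <;> ring
    have herase : ∀ (i i' : Fin 2) (k : ℤ), i ≠ i' → ∀ f : Fin 2 × ℤ → ℂ,
        ∏ l ∈ ((univ : Finset (Fin 2)) ×ˢ Icc (-(N : ℤ)) N).erase (i, k), f l =
        (∏ j ∈ (Icc (-(N : ℤ)) N).erase k, f (i, j)) * ∏ j ∈ Icc (-(N : ℤ)) N, f (i', j) := by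
      intro i i' k hi f
      have hset : ((univ : Finset (Fin 2)) ×ˢ Icc (-(N : ℤ)) N).erase (i, k) =
          ({i} ×ˢ (Icc (-(N : ℤ)) N).erase k) ∪ ({i'} ×ˢ Icc (-(N : ℤ)) N) := by
        ext ⟨a, c⟩
        simp only [mem_erase, mem_union, mem_product, mem_singleton, mem_univ, true_and, ne_eq,
          Prod.mk.injEq]
        have : a = i ∨ a = i' := by omega
        rcases this with rfl | rfl
        · simp [hi]
        · simp [hi.symm]
      have hdisj : Disjoint ({i} ×ˢ (Icc (-(N : ℤ)) N).erase k)
          ({i'} ×ˢ Icc (-(N : ℤ)) N) := by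
        rw [disjoint_left]
        rintro ⟨a, c⟩ h1 h2
        simp only [mem_product, mem_singleton] at h1 h2
        exact hi (h1.1.symm.trans h2.1)
      rw [hset, prod_union hdisj, prod_product, prod_product, prod_singleton, prod_singleton]
    rw [← hLHS, k0, mul_add, mul_sum, mul_sum]
    congr 1
    · refine sum_congr rfl fun k hk => ?_
      rw [herase 0 1 k (by decide)]
      have w := weight2_eq hp0 hy h1 hk
      have f1 : ∀ j : ℤ, 1 - y ^ 2 * p ^ j * (b 0 * p ^ k)⁻¹ = 1 - y * p ^ (j - k) := by
        intro j; rw [zpow_sub₀ hp0]; rw [hv0]; field_simp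
      have f2 : ∀ j : ℤ, 1 - b 0 * p ^ j / (b 0 * p ^ k) = 1 - p ^ (j - k) := by
        intro j; rw [zpow_sub₀ hp0]; rw [hv0]; field_simp
      have f3 : ∀ j : ℤ, 1 - b 1 * p ^ j / (b 0 * p ^ k) = 1 - y ^ 2 * p ^ (j - k) := by
        intro j; rw [zpow_sub₀ hp0]
        rw [hv0, hv1]; field_simp
      simp only [f1, f2, f3, w]
      rw [hv0]
      ring
    · refine sum_congr rfl fun k hk => ?_
      rw [herase 1 0 k (by decide)]
      have w := weight2_eq hp0 (inv_ne_zero hy) hy1 hk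
      have f1 : ∀ j : ℤ, 1 - y ^ 2 * p ^ j * (b 1 * p ^ k)⁻¹ = 1 - y⁻¹ * p ^ (j - k) := by
        intro j; rw [zpow_sub₀ hp0]; rw [hv1]; field_simp
      have f2 : ∀ j : ℤ, 1 - b 1 * p ^ j / (b 1 * p ^ k) = 1 - p ^ (j - k) := by
        intro j; rw [zpow_sub₀ hp0]; rw [hv1]; field_simp
      have f3 : ∀ j : ℤ, 1 - b 0 * p ^ j / (b 1 * p ^ k) = 1 - y⁻¹ ^ 2 * p ^ (j - k) := by
        intro j; rw [zpow_sub₀ hp0]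
        rw [hv0, hv1]; field_simp
      simp only [f1, f2, f3, w]
      rw [hv1]
      ring

/-! ### The q-binomial theorem and the Jacobi triple product -/

/-- The finite `q`-binomial theorem. -/
lemma q_binomial {p : ℂ} (hp : ‖p‖ < 1) (z : ℂ) (n : ℕ) :
    fp z p n = ∑ k ∈ range (n + 1), (-1) ^ k * p ^ (k.choose 2) *
      (fp p p n / (fp p p k * fp p p (n - k))) * z ^ k := by
  have hf : ∀ n, fp p p n ≠ 0 := fp_ne_zero (self_ne hp)
  have fs : ∀ n, fp p p (n + 1) = fp p p n * (1 - p ^ (n + 1)) := fun n => by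
    rw [fp, prod_range_succ, ← fp, pow_succ']
  have f0 : fp p p 0 = 1 := rfl
  induction n with
  | zero => simp [fp]
  | succ n ih =>
    have h1 : fp z p (n + 1) = fp z p n * (1 - z * p ^ n) := by rw [fp, prod_range_succ, ← fp]
    rw [h1, ih, mul_sub, mul_one]
    nth_rw 1 [sum_range_succ']
    rw [sum_range_succ _ n, sum_range_succ', sum_range_succ]
    have hmid : ∀ k ∈ range n, (-1) ^ (k + 1) * p ^ ((k + 1).choose 2) *
        (fp p p (n + 1) / (fp p p (k + 1) * fp p p (n + 1 - (k + 1)))) * z ^ (k + 1) =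
        (-1) ^ (k + 1) * p ^ ((k + 1).choose 2) *
        (fp p p n / (fp p p (k + 1) * fp p p (n - (k + 1)))) * z ^ (k + 1) -
        (-1) ^ k * p ^ (k.choose 2) * (fp p p n / (fp p p k * fp p p (n - k))) * z ^ k *
          (z * p ^ n) := by
      intro k hk
      obtain ⟨m, rfl⟩ := Nat.exists_eq_add_of_lt (mem_range.1 hk)
      rw [show k + m + 1 + 1 - (k + 1) = m + 1 by omega, show k + m + 1 - (k + 1) = m by omega,
        show k + m + 1 - k = m + 1 by omega, fs (k + m + 1), fs k, fs m]
      have c2 : (k + 1).choose 2 = k + k.choose 2 := by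
        rw [Nat.choose_succ_succ' k 1, Nat.choose_one_right]
      have n1 := hf k
      have n2 := hf m
      have n3 : 1 - p ^ (k + 1) ≠ 0 := sub_ne_zero.2 (pow_ne_one_of_norm hp k.succ_ne_zero).symm
      have n4 : 1 - p ^ (m + 1) ≠ 0 := sub_ne_zero.2 (pow_ne_one_of_norm hp m.succ_ne_zero).symm
      rw [c2]
      field_simp
      ring
    rw [sum_congr rfl hmid, sum_sub_distrib]
    have c2 : (n + 1).choose 2 = n + n.choose 2 := by
      rw [Nat.choose_succ_succ' n 1, Nat.choose_one_right]
    simp only [Nat.sub_self, f0, Nat.choose_zero_succ, pow_zero, Nat.sub_zero, c2, one_mul, mul_one,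
      div_self (hf _)]
    rw [← sum_mul]
    rw [add_mul]
    ring

/-- The Jacobi triple product identity: the `q`-binomial theorem with `2N` factors starting at
`z p^(-N)`, in the limit `N → ∞`. -/
lemma jacobi {p z : ℂ} (hp0 : p ≠ 0) (hp : ‖p‖ < 1) (hz : z ≠ 0) :
    ∑' k : ℤ, (-1) ^ k * p ^ tri (k - 1) * z ^ k = theta p z * qPochInf p p := by
  have hJ := qPochInf_ne_zero hp (self_ne hp)
  have hs : Summable fun k : ℤ => (-1) ^ k * p ^ tri (k - 1) * z ^ k := by
    have := summable_gauss_mul hp0 hp (w := z / p) (div_ne_zero hz hp0) (a := 1) one_pos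
      (d := fun _ => 1) (C := 1) (by simp)
    refine this.congr fun k => ?_
    have e : tri (k - 1) = tri k - k := by
      have h1 := two_tri k
      have h2 := two_tri (k - 1)
      have : 2 * tri (k - 1) = 2 * (tri k - k) := by rw [h2, mul_sub, h1]; ring
      omega
    rw [e, zpow_sub₀ hp0, div_zpow, one_mul]
    ring
  have hu : Tendsto (fun n => (fp p p n)⁻¹) atTop (𝓝 (qPochInf p p)⁻¹) := (fp_tendsto p hp).inv₀ hJ
  have T := tannery hs hu hu
  have T2 : Tendsto (fun N : ℕ => fp p p (2 * N)) atTop (𝓝 (qPochInf p p)) :=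
    (fp_tendsto p hp).comp (tendsto_id.const_mul_atTop' two_pos)
  have T3 := T2.mul T
  have L : Tendsto (fun N : ℕ => fp z p N * fp (p / z) p N) atTop (𝓝 (theta p z)) :=
    (fp_tendsto _ hp).mul (fp_tendsto _ hp)
  have key := tendsto_nhds_unique L (T3.congr fun N => ?_)
  · rw [key]; field_simp
  have hb := q_binomial hp (z * p ^ (-(N : ℤ))) (2 * N)
  have hl : fp (z * p ^ (-(N : ℤ))) p (2 * N) =
      (-z) ^ N * p ^ (-tri N) * (fp z p N * fp (p / z) p N) := by
    have := prod_neg hp0 hz N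
    rw [fp, two_mul, prod_range_add, mul_comm]
    rw [show ∏ x ∈ range N, (1 - z * p ^ (-(N : ℤ)) * p ^ x) =
      ∏ l ∈ range N, (1 - z * p ^ (-(l + 1 : ℤ))) by
        rw [← prod_range_reflect]
        refine prod_congr rfl fun j hj => ?_
        rw [mem_range] at hj
        rw [mul_assoc, ← zpow_natCast, ← zpow_add₀ hp0]
        congr 3; omega, this]
    rw [show ∏ x ∈ range N, (1 - z * p ^ (-(N : ℤ)) * p ^ (N + x)) = fp z p N by
        refine prod_congr rfl fun j hj => ?_
        rw [mul_assoc, ← zpow_natCast, ← zpow_add₀ hp0, ← zpow_natCast p j]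
        congr 3; push_cast; ring]
    ring
  rw [hl] at hb
  have hm : (-z) ^ N * p ^ (-tri N) ≠ 0 :=
    mul_ne_zero (pow_ne_zero _ (neg_ne_zero.2 hz)) (zpow_ne_zero _ hp0)
  refine mul_left_cancel₀ hm ?_
  rw [hb, mul_sum, mul_sum]
  refine sum_nbij' (fun k => (k + N).toNat) (fun k => (k : ℤ) - N) ?_ ?_ ?_ ?_ ?_
  · intro k hk; rw [mem_Icc] at hk; rw [mem_range]; omega
  · intro k hk; rw [mem_range] at hk; rw [mem_Icc]; omega
  · intro k hk; rw [mem_Icc] at hk; omega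
  · intro k hk; omega
  intro k hk
  rw [mem_Icc] at hk
  obtain ⟨A, hA⟩ := Int.eq_ofNat_of_zero_le (show 0 ≤ (N : ℤ) + k by omega)
  obtain ⟨B, hB⟩ := Int.eq_ofNat_of_zero_le (show 0 ≤ (N : ℤ) - k by omega)
  rw [add_comm k, hA, hB]
  simp only [Int.toNat_natCast]
  rw [show 2 * N - A = B by omega]
  have hk' : k = (A : ℤ) - N := by omega
  -- the powers of `p` match: `A(A-1)/2 - AN = -N(N+1)/2 + k(k-1)/2` for `A = N + k`
  have e2 : ((A.choose 2 : ℕ) : ℤ) + A * (-N) = -tri N + tri (k - 1) := by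
    have h1 := two_tri N
    have h2 := two_tri (k - 1)
    have h3 : 2 * ((A.choose 2 : ℕ) : ℤ) = A * (A - 1) := by
      have := Nat.triangle_succ
      have h : A.choose 2 * 2 = A * (A - 1) := by
        rw [Nat.choose_two_right, Nat.div_mul_cancel (Nat.even_mul_pred_self A).two_dvd]
      rcases A with _ | A
      · simp
      · push_cast at h ⊢
        zify at h
        simp at h ⊢
        linarith
    have : 2 * (((A.choose 2 : ℕ) : ℤ) + A * (-N)) = 2 * (-tri N + tri (k - 1)) := by
      rw [mul_add, h3, mul_add, h2, mul_neg (2 : ℤ), h1, hk']; ring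
    omega
  have e3 : p ^ (A.choose 2) * (p ^ (-(N : ℤ))) ^ A = p ^ (-tri N) * p ^ tri (k - 1) := by
    rw [← zpow_add₀ hp0, ← e2, zpow_add₀ hp0, zpow_natCast, mul_comm (A : ℤ), zpow_mul, zpow_natCast]
  have e4 : (-z) ^ N * ((-1) ^ k * z ^ k) = (-1) ^ A * z ^ A := by
    rw [← mul_zpow, ← mul_pow, neg_one_mul, ← zpow_natCast, ← zpow_add₀ (neg_ne_zero.2 hz),
      ← zpow_natCast, hk']
    congr 1; ring
  rw [mul_pow z]
  calc _ = ((-z) ^ N * ((-1) ^ k * z ^ k)) * (p ^ (-tri N) * p ^ tri (k - 1)) *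
        (fp p p (2 * N) * ((fp p p B)⁻¹ * (fp p p A)⁻¹)) := by ring
    _ = _ := by rw [e4, ← e3, div_eq_mul_inv, mul_inv]; ring

lemma tsum_mod5 {f : ℤ → ℂ} (hf : Summable f) :
    ∑' n, f n = ∑ r ∈ range 5, ∑' m : ℤ, f (5 * m + r) := by
  have e := (Int.divModEquiv 5).symm
  rw [← (Int.divModEquiv 5).symm.tsum_eq f]
  have hs : Summable fun c : ℤ × Fin 5 => f ((Int.divModEquiv 5).symm c) :=
    (Int.divModEquiv 5).symm.summable_iff.2 hf
  rw [← (Equiv.prodComm (Fin 5) ℤ).tsum_eq]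
  have hs2 := (Equiv.prodComm (Fin 5) ℤ).summable_iff.2 hs
  rw [Summable.tsum_prod (f := fun c => f ((Int.divModEquiv 5).symm (Equiv.prodComm (Fin 5) ℤ c))) hs2]
  rw [tsum_fintype, ← Fin.sum_univ_eq_sum_range (fun r => ∑' m : ℤ, f (5 * m + r))]
  refine sum_congr rfl fun r _ => tsum_congr fun m => ?_
  congr 1
  simp [Int.divModEquiv]
  ring

/-! ### The 5-dissection of Euler's product -/

lemma qPochInf_step {p : ℂ} (hp : ‖p‖ < 1) (a : ℂ) :
    qPochInf a p = (1 - a) * qPochInf (a * p) p := by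
  have h1 := (fp_tendsto a hp).comp (tendsto_add_atTop_nat 1)
  have h2 := (fp_tendsto (a * p) hp).const_mul (1 - a)
  refine tendsto_nhds_unique h1 (h2.congr fun n => ?_)
  rw [Function.comp, fp, fp, prod_range_succ', mul_comm]
  simp only [pow_zero, mul_one, pow_succ']
  congr 1
  exact prod_congr rfl fun k _ => by ring

lemma theta_symm {p z : ℂ} (hp0 : p ≠ 0) : theta p (p / z) = theta p z := by
  rw [theta, theta, div_div_cancel₀ hp0, mul_comm]

lemma theta_shift {p z : ℂ} (hp0 : p ≠ 0) (hp : ‖p‖ < 1) (hz : z ≠ 0) :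
    theta p (p * z) = -z⁻¹ * theta p z := by
  rw [← theta_inv hp hz, ← theta_symm hp0 (z := z⁻¹), div_inv_eq_mul]

lemma theta_one {p : ℂ} (hp : ‖p‖ < 1) : theta p 1 = 0 := by
  have := theta_inv (p := p) (z := 1) hp one_ne_zero
  rw [inv_one] at this
  linear_combination this / 2

lemma summable_jacobi {p z : ℂ} (hp0 : p ≠ 0) (hp : ‖p‖ < 1) (hz : z ≠ 0) :
    Summable fun k : ℤ => (-1) ^ k * p ^ tri (k - 1) * z ^ k := by
  have := summable_gauss_mul hp0 hp (w := z / p) (div_ne_zero hz hp0) (a := 1) one_pos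
    (d := fun _ => 1) (C := 1) (by simp)
  refine this.congr fun k => ?_
  have e : tri (k - 1) = tri k - k := by
    have h1 := two_tri k
    have h2 := two_tri (k - 1)
    have : 2 * tri (k - 1) = 2 * (tri k - k) := by rw [h2, mul_sub, h1]; ring
    omega
  rw [e, zpow_sub₀ hp0, div_zpow, one_mul]
  ring

lemma tri_unique {a b : ℤ} (h : 2 * b = a * (a + 1)) : tri a = b := by
  have := two_tri a; omega

/-- Quasi-periodicity values of `θ` with base `x^5` at powers of `x`. -/
lemma theta_six {x : ℂ} (hx0 : x ≠ 0) (hx : ‖x‖ < 1) :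
    theta (x ^ 5) (x ^ 3) = theta (x ^ 5) (x ^ 2) ∧ theta (x ^ 5) (x ^ 4) = theta (x ^ 5) x ∧
    theta (x ^ 5) (x ^ 5) = 0 ∧ theta (x ^ 5) (x ^ 6) = -x⁻¹ * theta (x ^ 5) x := by
  have hp0 : x ^ 5 ≠ 0 := pow_ne_zero 5 hx0
  have hp : ‖x ^ 5‖ < 1 := by rw [norm_pow]; exact pow_lt_one₀ (norm_nonneg _) hx (by norm_num)
  refine ⟨?_, ?_, ?_, ?_⟩
  · rw [← theta_symm hp0 (z := x ^ 2)]; congr 1; field_simp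
  · rw [← theta_symm hp0 (z := x)]; congr 1; field_simp
  · rw [← theta_symm hp0, div_self hp0, theta_one hp]
  · rw [← theta_shift hp0 hp hx0]; congr 1

/-- 5-dissection of `θ_q(z) (q;q)_∞` for a fifth root of unity `z`: the residue classes of the
summation index in the Jacobi triple product again give theta functions, and `θ(x^5) = 0` kills one
of the five. -/
lemma theta_dissect {q z : ℂ} (hq0 : q ≠ 0) (hq : ‖q‖ < 1) (hz : z ^ 5 = 1) :
    theta q z * qPochInf q q = qPochInf ((q ^ 5) ^ 5) ((q ^ 5) ^ 5) *
      (theta ((q ^ 5) ^ 5) ((q ^ 5) ^ 2) * (1 - z) +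
        q * theta ((q ^ 5) ^ 5) (q ^ 5) * (z ^ 2 - z ^ 4)) := by
  have hz0 : z ≠ 0 := by rintro rfl; norm_num at hz
  have hx0 : q ^ 5 ≠ 0 := pow_ne_zero 5 hq0
  have hx : ‖q ^ 5‖ < 1 := by rw [norm_pow]; exact pow_lt_one₀ (norm_nonneg _) hq (by norm_num)
  have hp0 : (q ^ 5) ^ 5 ≠ 0 := pow_ne_zero 5 hx0
  have hp : ‖(q ^ 5) ^ 5‖ < 1 := by
    rw [norm_pow]; exact pow_lt_one₀ (norm_nonneg _) hx (by norm_num)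
  obtain ⟨h3, h4, h5, h6⟩ := theta_six hx0 hx
  rw [← jacobi hq0 hq hz0, tsum_mod5 (summable_jacobi hq0 hq hz0)]
  have hr : ∀ r : ℕ, ∑' m : ℤ, (-1) ^ (5 * m + r) * q ^ tri (5 * m + r - 1) * z ^ (5 * m + r) =
      (-1) ^ r * z ^ r * q ^ tri (r - 1) * (theta ((q ^ 5) ^ 5) ((q ^ 5) ^ (2 + r)) *
        qPochInf ((q ^ 5) ^ 5) ((q ^ 5) ^ 5)) := by
    intro r
    rw [← jacobi hp0 hp (pow_ne_zero (2 + r) hx0), ← tsum_mul_left]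
    refine tsum_congr fun m => ?_
    have e1 : (-1 : ℂ) ^ (5 * m + r) = (-1) ^ r * (-1) ^ m := by
      rw [zpow_add₀ (by norm_num), zpow_mul, zpow_natCast, mul_comm]; norm_num
    have e2 : z ^ (5 * m + r) = z ^ r := by
      rw [zpow_add₀ hz0, zpow_mul, zpow_natCast, show z ^ (5 : ℤ) = z ^ 5 by norm_cast, hz,
        one_zpow, one_mul]
    have e3 : q ^ tri (5 * m + r - 1) = q ^ tri (r - 1) * (((q ^ 5) ^ 5) ^ tri (m - 1) *
        ((q ^ 5) ^ (2 + r)) ^ m) := by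
      have : tri (5 * m + r - 1) = tri (r - 1) + 5 * 5 * tri (m - 1) + 5 * (2 + r) * m := by
        apply tri_unique
        have h1 := two_tri (r - 1)
        have h2 := two_tri (m - 1)
        linear_combination h1 + 25 * h2
      rw [this, zpow_add₀ hq0, zpow_add₀ hq0, ← pow_mul, ← pow_mul]
      rw [mul_assoc]
      congr 2
      · rw [← zpow_natCast, ← zpow_mul]; norm_num
      · rw [← zpow_natCast, ← zpow_mul]; push_cast; rfl
    rw [e1, e2, e3]; ring
  simp only [hr]
  simp only [sum_range_succ, range_zero, sum_empty]
  norm_num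
  rw [h3, h4, h5, h6, show tri (-1) = 0 from rfl, tri_zero, tri_one, show tri 2 = 3 from rfl,
    show tri 3 = 6 from rfl]
  rw [show q ^ (6 : ℤ) = q ^ 6 by norm_cast]
  simp only [zpow_zero, zpow_one]
  field_simp
  ring

/-- The factors of `(x;x)_∞`, sorted by residue class mod 5. -/
lemma qPochInf_five {x : ℂ} (hx0 : x ≠ 0) (hx : ‖x‖ < 1) :
    qPochInf x x = theta (x ^ 5) x * theta (x ^ 5) (x ^ 2) * qPochInf (x ^ 5) (x ^ 5) := by
  have hp : ‖x ^ 5‖ < 1 := by rw [norm_pow]; exact pow_lt_one₀ (norm_nonneg _) hx (by norm_num)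
  have h1 := (fp_tendsto x hx).comp (tendsto_id.const_mul_atTop' (show 0 < 5 by norm_num))
  have h2 := (((fp_tendsto x hp).mul (fp_tendsto (x ^ 5 / x) hp)).mul
    ((fp_tendsto (x ^ 2) hp).mul (fp_tendsto (x ^ 5 / x ^ 2) hp))).mul (fp_tendsto (x ^ 5) hp)
  refine tendsto_nhds_unique h1 (h2.congr fun n => ?_)
  simp only [Function.comp, id]
  induction n with
  | zero => simp [fp]
  | succ n ih =>
    simp only [fp] at ih ⊢
    rw [show 5 * (n + 1) = 5 * n + 1 + 1 + 1 + 1 + 1 by ring]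
    simp only [prod_range_succ]
    rw [← ih]
    have e1 : x ^ 5 / x = x ^ 4 := by field_simp
    have e2 : x ^ 5 / x ^ 2 = x ^ 3 := by field_simp
    rw [e1, e2]
    ring

/-- Rogers-type 5-dissection of Euler's product. It follows by multiplying the cases `z` and `z²` of
`theta_dissect`, because the product of `1 - z^j w` over `j` mod 5 is `1 - w^5`. -/
lemma euler_dissect {q z : ℂ} (hq0 : q ≠ 0) (hq : ‖q‖ < 1) (hz : z ^ 4 + z ^ 3 + z ^ 2 + z + 1 = 0) :
    qPochInf q q = qPochInf ((q ^ 5) ^ 5) ((q ^ 5) ^ 5) *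
      (theta ((q ^ 5) ^ 5) ((q ^ 5) ^ 2) / theta ((q ^ 5) ^ 5) (q ^ 5) - q -
        q ^ 2 * (theta ((q ^ 5) ^ 5) (q ^ 5) / theta ((q ^ 5) ^ 5) ((q ^ 5) ^ 2))) := by
  have hz5 : z ^ 5 = 1 := by linear_combination (z - 1) * hz
  have hz0 : z ≠ 0 := by rintro rfl; norm_num at hz
  have hz1 : 1 - z ≠ 0 := by
    intro h
    have : z = 1 := by linear_combination -h
    rw [this] at hz; norm_num at hz
  have hz2 : 1 - z ^ 2 ≠ 0 := by
    intro h
    have : z ^ 2 = 1 := by linear_combination -h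
    have h3 : z = 1 := by linear_combination hz5 - (z ^ 3 + z) * this
    exact hz1 (by rw [h3]; ring)
  have hx0 : q ^ 5 ≠ 0 := pow_ne_zero 5 hq0
  have hx : ‖q ^ 5‖ < 1 := by rw [norm_pow]; exact pow_lt_one₀ (norm_nonneg _) hq (by norm_num)
  have hprod : qPochInf q q * (qPochInf (z * q) q * qPochInf (q / z) q) *
      (qPochInf (z ^ 2 * q) q * qPochInf (q / z ^ 2) q) = qPochInf (q ^ 5) (q ^ 5) := by
    refine tendsto_nhds_unique ((((fp_tendsto _ hq).mul ((fp_tendsto _ hq).mul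
      (fp_tendsto _ hq))).mul ((fp_tendsto _ hq).mul (fp_tendsto _ hq))))
      ((fp_tendsto _ hx).congr fun n => ?_)
    simp only [fp, ← prod_mul_distrib]
    refine prod_congr rfl fun k _ => ?_
    have i1 : q / z = z ^ 4 * q := by field_simp; linear_combination -hz5
    have i2 : q / z ^ 2 = z ^ 3 * q := by field_simp; linear_combination -hz5
    rw [i1, i2]
    have : (q ^ 5) * (q ^ 5) ^ k = (q * q ^ k) ^ 5 := by ring
    rw [this]
    simp only [mul_assoc]
    generalize q * q ^ k = t
    have hf : ∀ w : ℂ, (1 - w) * ((1 - z * w) * (1 - z ^ 4 * w)) *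
        ((1 - z ^ 2 * w) * (1 - z ^ 3 * w)) = 1 - w ^ 5 := by
      intro w
      have c1 : z + z ^ 4 = -1 - (z ^ 2 + z ^ 3) := by linear_combination hz
      have a1 : (1 - z * w) * (1 - z ^ 4 * w) = 1 - (z + z ^ 4) * w + w ^ 2 := by
        linear_combination (w ^ 2) * hz5
      have a2 : (1 - z ^ 2 * w) * (1 - z ^ 3 * w) = 1 - (z ^ 2 + z ^ 3) * w + w ^ 2 := by
        linear_combination (w ^ 2) * hz5
      have a3 : (z + z ^ 4) * (z ^ 2 + z ^ 3) = -1 := by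
        linear_combination (z + z ^ 2) * hz5 + hz
      rw [a1, a2]
      rw [c1] at a3 ⊢
      linear_combination (1 - w) * w ^ 2 * a3
    rw [← hf t]
    ring
  have d1 := theta_dissect hq0 hq hz5
  have d2 := theta_dissect (z := z ^ 2) hq0 hq (by rw [← pow_mul, mul_comm, pow_mul, hz5, one_pow])
  have s1 : theta q z = (1 - z) * (qPochInf (z * q) q * qPochInf (q / z) q) := by
    rw [theta, qPochInf_step hq]; ring
  have s2 : theta q (z ^ 2) = (1 - z ^ 2) * (qPochInf (z ^ 2 * q) q * qPochInf (q / z ^ 2) q) := by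
    rw [theta, qPochInf_step hq]; ring
  rw [s1] at d1
  rw [s2] at d2
  have h5 := qPochInf_five hx0 hx
  have hp0 : (q ^ 5) ^ 5 ≠ 0 := pow_ne_zero 5 hx0
  have hp : ‖(q ^ 5) ^ 5‖ < 1 := by
    rw [norm_pow]; exact pow_lt_one₀ (norm_nonneg _) hx (by norm_num)
  have hE : qPochInf (q ^ 5) (q ^ 5) ≠ 0 := qPochInf_ne_zero hx (self_ne hx)
  rw [h5] at hE
  have n3 := right_ne_zero_of_mul hE
  have n1 := left_ne_zero_of_mul (left_ne_zero_of_mul hE)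
  have n2 := right_ne_zero_of_mul (left_ne_zero_of_mul hE)
  rw [h5] at hprod
  generalize theta ((q ^ 5) ^ 5) (q ^ 5) = A1 at *
  generalize theta ((q ^ 5) ^ 5) ((q ^ 5) ^ 2) = A2 at *
  generalize qPochInf ((q ^ 5) ^ 5) ((q ^ 5) ^ 5) = J at *
  generalize (qPochInf (z * q) q * qPochInf (q / z) q) = X1 at *
  generalize (qPochInf (z ^ 2 * q) q * qPochInf (q / z ^ 2) q) = X2 at *
  generalize qPochInf q q = E at *
  have d1' : X1 * E = J * (A2 + q * A1 * (z ^ 2 + z ^ 3)) := by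
    apply mul_left_cancel₀ hz1
    linear_combination d1
  have d2' : X2 * E = J * (A2 + q * A1 * (z ^ 4 + z)) := by
    apply mul_left_cancel₀ hz2
    linear_combination d2 + J * q * A1 * (z - z ^ 3) * hz5
  have hm : E * (A1 * A2 * J) = J ^ 2 * (A2 ^ 2 - q * A1 * A2 - q ^ 2 * A1 ^ 2) := by
    have a3 : (z + z ^ 4) * (z ^ 2 + z ^ 3) = -1 := by
      linear_combination (z + z ^ 2) * hz5 + hz
    have : E * (A1 * A2 * J) = (X1 * E) * (X2 * E) := by rw [← hprod]; ring
    rw [this, d1', d2']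
    linear_combination J ^ 2 * q ^ 2 * A1 ^ 2 * a3 + J ^ 2 * q * A1 * A2 * hz
  field_simp
  apply mul_left_cancel₀ n3
  linear_combination hm

/-! ### Chan's identity at powers of `x`, with base `x^5` -/

lemma rho_symm {p c : ℂ} (hp0 : p ≠ 0) (hc : c ≠ 0) : rho p (p / c) = -rho p c := by
  rw [rho, rho, neg_sub]
  congr 1
  · refine tsum_congr fun k => ?_
    rw [pow_succ', mul_div_right_comm]
  · refine tsum_congr fun k => ?_
    have : p ^ (k + 1) / (p / c) = c * p ^ k := by rw [pow_succ']; field_simp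
    rw [this]

lemma rho_shift {p c : ℂ} (hp0 : p ≠ 0) (hp : ‖p‖ < 1) (hc : c ≠ 0) (hc1 : c ≠ 1) :
    rho p (p * c) = rho p c + 1 := by
  have s1 := (summable_lambert hp c).tsum_eq_zero_add
  have s2 := (summable_lambert hp c⁻¹).tsum_eq_zero_add
  have e1 : ∑' k : ℕ, c * p ^ (k + 1) * (1 - c * p ^ (k + 1))⁻¹ =
      ∑' k : ℕ, p * c * p ^ k * (1 - p * c * p ^ k)⁻¹ := by
    refine tsum_congr fun k => ?_
    rw [pow_succ', show c * (p * p ^ k) = p * c * p ^ k by ring]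
  have e2 : ∑' k : ℕ, c⁻¹ * p ^ k * (1 - c⁻¹ * p ^ k)⁻¹ =
      ∑' k : ℕ, p ^ (k + 1) / (p * c) * (1 - p ^ (k + 1) / (p * c))⁻¹ := by
    refine tsum_congr fun k => ?_
    have : p ^ (k + 1) / (p * c) = c⁻¹ * p ^ k := by rw [pow_succ']; field_simp
    rw [this]
  have e3 : ∑' k : ℕ, c⁻¹ * p ^ (k + 1) * (1 - c⁻¹ * p ^ (k + 1))⁻¹ =
      ∑' k : ℕ, p ^ (k + 1) / c * (1 - p ^ (k + 1) / c)⁻¹ := by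
    refine tsum_congr fun k => ?_
    rw [show c⁻¹ * p ^ (k + 1) = p ^ (k + 1) / c by ring]
  rw [e1] at s1
  rw [e2, e3] at s2
  rw [rho, rho, s1, s2]
  have h1 : 1 - c ≠ 0 := sub_ne_zero.2 hc1.symm
  have h2 : 1 - c⁻¹ = -(1 - c) / c := by field_simp; ring
  simp only [pow_zero, mul_one]
  rw [h2]
  field_simp
  ring

section Modulus
variable {x : ℂ}

lemma norm_pow_five (hx : ‖x‖ < 1) : ‖x ^ 5‖ < 1 := by
  rw [norm_pow]; exact pow_lt_one₀ (norm_nonneg _) hx (by norm_num)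

lemma zpow_five_mul (hx0 : x ≠ 0) (e k : ℤ) : x ^ e * (x ^ 5) ^ k = x ^ (e + 5 * k) := by
  rw [zpow_add₀ hx0, zpow_mul]; norm_cast

lemma orbit_zpow (hx0 : x ≠ 0) (hx : ‖x‖ < 1) {e : ℤ} (he : ¬ (5 : ℤ) ∣ e) (k : ℤ) :
    x ^ e * (x ^ 5) ^ k ≠ 1 := by
  rw [zpow_five_mul hx0]
  intro h
  have := zpow_inj_of_norm hx0 hx (h.trans (zpow_zero x).symm)
  omega

lemma generic_zpow (hx0 : x ≠ 0) (hx : ‖x‖ < 1) {e : Fin 3 → ℤ}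
    (he : ∀ i j, i ≠ j → ¬ (5 : ℤ) ∣ e j - e i) : Generic (x ^ 5) fun i => x ^ e i := by
  intro i j hij k h
  simp only at h
  rw [zpow_five_mul hx0] at h
  have := zpow_inj_of_norm hx0 hx h
  have := he i j hij
  omega

/-- The bilateral sum `A(r,j)` with `b = x^r`, `w = x^(3r+j-7)` and base `x^5`. -/
noncomputable def AA (x : ℂ) (r j : ℤ) : ℂ := App (x ^ 5) (x ^ r) (x ^ (3 * r + j - 7))

lemma wtW_zpow (hx0 : x ≠ 0) (e : Fin 3 → ℤ) (i : Fin 3) :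
    wtW (fun i => x ^ e i) i = x ^ (3 * e i - (e 0 + e 1 + e 2)) := by
  rw [wtW, Fin.prod_univ_three, ← zpow_add₀ hx0, ← zpow_add₀ hx0, ← zpow_natCast, ← zpow_mul,
    ← zpow_sub₀ hx0]
  congr 1; push_cast; ring

/-- Chan's identity with `b_i = x^(e_i)` and base `x^5`. -/
lemma chan_zpow (hx0 : x ≠ 0) (hx : ‖x‖ < 1) {e : Fin 3 → ℤ}
    (he : ∀ i j, i ≠ j → ¬ (5 : ℤ) ∣ e j - e i) (h0 : ∀ i, ¬ (5 : ℤ) ∣ e i) :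
    (∏ i, theta (x ^ 5) (x ^ e i))⁻¹ = ∑ i, AA x (e i) (7 - (e 0 + e 1 + e 2)) /
      (qPochInf (x ^ 5) (x ^ 5) ^ 2 * ∏ j ∈ univ.erase i, theta (x ^ 5) (x ^ (e j - e i))) := by
  rw [chan (pow_ne_zero 5 hx0) (norm_pow_five hx) (b := fun i => x ^ e i)
    (fun i => zpow_ne_zero _ hx0) (generic_zpow hx0 hx he)
    (fun i => orbit_zpow hx0 hx (h0 i))]
  refine sum_congr rfl fun i _ => ?_
  simp only [wtW_zpow hx0, AA, zpow_sub₀ hx0 (_ : ℤ) (e i)]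
  congr 2
  congr 1; ring

/-- The degenerate case of Chan's identity with `b_i = x^(e_i)`, `e_0 = 0`, and base `x^5`. -/
lemma chan_degenerate_zpow (hx0 : x ≠ 0) (hx : ‖x‖ < 1) {e : Fin 3 → ℤ}
    (he : ∀ i j, i ≠ j → ¬ (5 : ℤ) ∣ e j - e i) (h0 : e 0 = 0) :
    -(rho (x ^ 5) (x ^ e 1) + rho (x ^ 5) (x ^ e 2)) / (qPochInf (x ^ 5) (x ^ 5) ^ 2 *
        (theta (x ^ 5) (x ^ e 1) * theta (x ^ 5) (x ^ e 2))) =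
      ∑ i, AA x (e i) (7 - (e 0 + e 1 + e 2)) /
      (qPochInf (x ^ 5) (x ^ 5) ^ 2 * ∏ j ∈ univ.erase i, theta (x ^ 5) (x ^ (e j - e i))) := by
  rw [chan_degenerate (pow_ne_zero 5 hx0) (norm_pow_five hx) (b := fun i => x ^ e i)
    (fun i => zpow_ne_zero _ hx0) (generic_zpow hx0 hx he) (by simp [h0])]
  refine sum_congr rfl fun i _ => ?_
  simp only [wtW_zpow hx0, AA, zpow_sub₀ hx0 (_ : ℤ) (e i)]
  congr 2
  congr 1; ring

lemma theta_zpow (hx0 : x ≠ 0) (hx : ‖x‖ < 1) :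
    theta (x ^ 5) (x ^ (1 : ℤ)) = theta (x ^ 5) x ∧
    theta (x ^ 5) (x ^ (2 : ℤ)) = theta (x ^ 5) (x ^ 2) ∧
    theta (x ^ 5) (x ^ (3 : ℤ)) = theta (x ^ 5) (x ^ 2) ∧
    theta (x ^ 5) (x ^ (4 : ℤ)) = theta (x ^ 5) x ∧
    theta (x ^ 5) (x ^ (-1 : ℤ)) = -x⁻¹ * theta (x ^ 5) x ∧
    theta (x ^ 5) (x ^ (-2 : ℤ)) = -(x ^ 2)⁻¹ * theta (x ^ 5) (x ^ 2) ∧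
    theta (x ^ 5) (x ^ (-3 : ℤ)) = -(x ^ 3)⁻¹ * theta (x ^ 5) (x ^ 2) ∧
    theta (x ^ 5) (x ^ (-4 : ℤ)) = -(x ^ 4)⁻¹ * theta (x ^ 5) x := by
  obtain ⟨h3, h4, -, -⟩ := theta_six hx0 hx
  have hp := norm_pow_five hx
  have hn : ∀ n : ℕ, theta (x ^ 5) (x ^ (-(n : ℤ))) = -(x ^ n)⁻¹ * theta (x ^ 5) (x ^ n) := by
    intro n; rw [zpow_neg, zpow_natCast, theta_inv hp (pow_ne_zero _ hx0)]
  have hc : ∀ n : ℕ, theta (x ^ 5) (x ^ (n : ℤ)) = theta (x ^ 5) (x ^ n) := by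
    intro n; rw [zpow_natCast]
  refine ⟨by rw [zpow_one], hc 2, (hc 3).trans h3, (hc 4).trans h4, ?_, hn 2, ?_, ?_⟩
  · simpa using hn 1
  · have := hn 3; rwa [h3] at this
  · have := hn 4; rwa [h4] at this

lemma erase_three : (univ : Finset (Fin 3)).erase 0 = {1, 2} ∧ (univ : Finset (Fin 3)).erase 1 = {0, 2}
    ∧ (univ : Finset (Fin 3)).erase 2 = {0, 1} := ⟨rfl, rfl, rfl⟩

lemma thetas_ne (hx0 : x ≠ 0) (hx : ‖x‖ < 1) : theta (x ^ 5) x ≠ 0 ∧ theta (x ^ 5) (x ^ 2) ≠ 0 ∧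
    qPochInf (x ^ 5) (x ^ 5) ≠ 0 := by
  have hp0 := pow_ne_zero 5 hx0
  have hp := norm_pow_five hx
  refine ⟨theta_ne_zero hp0 hp ?_, theta_ne_zero hp0 hp ?_, qPochInf_ne_zero hp (self_ne hp)⟩
  · simpa using fun k => orbit_zpow hx0 hx (e := 1) (by norm_num) k
  · exact_mod_cast fun k => orbit_zpow hx0 hx (e := 2) (by norm_num) k

/-- Chan's identity for `b = (x, x², x³)` and base `x^5`. -/
lemma chan123 (hx0 : x ≠ 0) (hx : ‖x‖ < 1) :
    AA x 1 1 - x * AA x 2 1 * theta (x ^ 5) (x ^ 2) / theta (x ^ 5) x + x ^ 3 * AA x 3 1 =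
      qPochInf (x ^ 5) (x ^ 5) ^ 2 / theta (x ^ 5) (x ^ 2) := by
  have h := chan_zpow hx0 hx (e := ![1, 2, 3]) (by decide) (by decide)
  obtain ⟨t1, t2, t3, t4, s1, s2, s3, s4⟩ := theta_zpow hx0 hx
  obtain ⟨n1, n2, n3⟩ := thetas_ne hx0 hx
  rw [Fin.sum_univ_three, Fin.prod_univ_three, erase_three.1, erase_three.2.1, erase_three.2.2,
    prod_pair (by decide), prod_pair (by decide), prod_pair (by decide)] at h
  simp only [Matrix.cons_val, Int.reduceSub, Int.reduceAdd, Int.reduceNeg, t1, t2, t3, t4, s1, s2, s3, s4] at h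
  generalize theta (x ^ 5) x = A1 at *
  generalize theta (x ^ 5) (x ^ 2) = A2 at *
  generalize qPochInf (x ^ 5) (x ^ 5) = J at *
  field_simp at h ⊢
  linear_combination -h

/-- Chan's identity for `b = (x, x², x⁴)` and base `x^5`. -/
lemma chan124 (hx0 : x ≠ 0) (hx : ‖x‖ < 1) :
    x ^ 5 * AA x 4 0 * theta (x ^ 5) x / theta (x ^ 5) (x ^ 2) + AA x 1 0 - x * AA x 2 0 =
      qPochInf (x ^ 5) (x ^ 5) ^ 2 / theta (x ^ 5) x := by
  have h := chan_zpow hx0 hx (e := ![1, 2, 4]) (by decide) (by decide)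
  obtain ⟨t1, t2, t3, t4, s1, s2, s3, s4⟩ := theta_zpow hx0 hx
  obtain ⟨n1, n2, n3⟩ := thetas_ne hx0 hx
  rw [Fin.sum_univ_three, Fin.prod_univ_three, erase_three.1, erase_three.2.1, erase_three.2.2,
    prod_pair (by decide), prod_pair (by decide), prod_pair (by decide)] at h
  simp only [Matrix.cons_val, Int.reduceSub, Int.reduceAdd, Int.reduceNeg, t1, t2, t3, t4, s1, s2, s3, s4] at h
  generalize theta (x ^ 5) x = A1 at *
  generalize theta (x ^ 5) (x ^ 2) = A2 at *
  generalize qPochInf (x ^ 5) (x ^ 5) = J at *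
  field_simp at h ⊢
  linear_combination -h

lemma rhos (hx0 : x ≠ 0) (hx : ‖x‖ < 1) :
    rho (x ^ 5) (x ^ (3 : ℤ)) = -rho (x ^ 5) (x ^ 2) ∧ rho (x ^ 5) (x ^ (4 : ℤ)) = -rho (x ^ 5) x ∧
    rho (x ^ 5) (x ^ (6 : ℤ)) = rho (x ^ 5) x + 1 := by
  have hp0 := pow_ne_zero 5 hx0
  have hp := norm_pow_five hx
  refine ⟨?_, ?_, ?_⟩
  · rw [← rho_symm hp0 (pow_ne_zero 2 hx0)]; congr 1
    rw [show x ^ (3 : ℤ) = x ^ 3 by norm_cast]; field_simp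
  · rw [← rho_symm hp0 hx0]; congr 1
    rw [show x ^ (4 : ℤ) = x ^ 4 by norm_cast]; field_simp
  · rw [← rho_shift hp0 hp hx0]
    · congr 1
    · rintro rfl; simp at hx

/-- The degenerate case of Chan's identity for `b = (1, x³, x⁴)` and base `x^5`. -/
lemma chan034 (hx0 : x ≠ 0) (hx : ‖x‖ < 1) :
    AA x 0 0 - x ^ 3 * AA x 3 0 + theta (x ^ 5) (x ^ 2) / theta (x ^ 5) x * (x ^ 5 * AA x 4 0) =
      rho (x ^ 5) x + rho (x ^ 5) (x ^ 2) := by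
  have h := chan_degenerate_zpow hx0 hx (e := ![0, 3, 4]) (by decide) (by decide)
  obtain ⟨t1, t2, t3, t4, s1, s2, s3, s4⟩ := theta_zpow hx0 hx
  obtain ⟨n1, n2, n3⟩ := thetas_ne hx0 hx
  obtain ⟨r3, r4, -⟩ := rhos hx0 hx
  rw [Fin.sum_univ_three, erase_three.1, erase_three.2.1, erase_three.2.2,
    prod_pair (by decide), prod_pair (by decide), prod_pair (by decide)] at h
  simp only [Matrix.cons_val, Int.reduceSub, Int.reduceAdd, Int.reduceNeg, t1, t2, t3, t4, s1, s2, s3, s4, r3, r4] at h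
  generalize theta (x ^ 5) x = A1 at *
  generalize theta (x ^ 5) (x ^ 2) = A2 at *
  generalize qPochInf (x ^ 5) (x ^ 5) = J at *
  field_simp at h ⊢
  linear_combination -h

/-- The degenerate case of Chan's identity for `b = (1, x², x⁴)` and base `x^5`. -/
lemma chan024 (hx0 : x ≠ 0) (hx : ‖x‖ < 1) :
    AA x 0 1 + x ^ 6 * AA x 4 1 - x * theta (x ^ 5) x / theta (x ^ 5) (x ^ 2) * (x * AA x 2 1) =
      rho (x ^ 5) x - rho (x ^ 5) (x ^ 2) := by
  have h := chan_degenerate_zpow hx0 hx (e := ![0, 2, 4]) (by decide) (by decide)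
  obtain ⟨t1, t2, t3, t4, s1, s2, s3, s4⟩ := theta_zpow hx0 hx
  obtain ⟨n1, n2, n3⟩ := thetas_ne hx0 hx
  obtain ⟨r3, r4, -⟩ := rhos hx0 hx
  rw [Fin.sum_univ_three, erase_three.1, erase_three.2.1, erase_three.2.2,
    prod_pair (by decide), prod_pair (by decide), prod_pair (by decide)] at h
  simp only [Matrix.cons_val, Int.reduceSub, Int.reduceAdd, Int.reduceNeg, t1, t2, t3, t4, s1, s2, s3, s4, r3, r4,
    show x ^ (2 : ℤ) = x ^ 2 by norm_cast] at h
  generalize theta (x ^ 5) x = A1 at *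
  generalize theta (x ^ 5) (x ^ 2) = A2 at *
  generalize qPochInf (x ^ 5) (x ^ 5) = J at *
  field_simp at h ⊢
  linear_combination -h

/-- The case `y = x` of `rho_theta` with base `x^5`. -/
lemma rho_X (hx0 : x ≠ 0) (hx : ‖x‖ < 1) :
    3 * rho (x ^ 5) x + rho (x ^ 5) (x ^ 2) + 1 =
      qPochInf (x ^ 5) (x ^ 5) ^ 2 * theta (x ^ 5) (x ^ 2) ^ 2 / theta (x ^ 5) x ^ 3 := by
  obtain ⟨n1, n2, n3⟩ := thetas_ne hx0 hx
  obtain ⟨r3, -, -⟩ := rhos hx0 hx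
  obtain ⟨h3, -, -, -⟩ := theta_six hx0 hx
  have h := rho_theta (pow_ne_zero 5 hx0) (norm_pow_five hx) hx0
    (by simpa using fun k => orbit_zpow hx0 hx (e := 1) (by norm_num) k)
    (by exact_mod_cast fun k => orbit_zpow hx0 hx (e := 2) (by norm_num) k)
    (by exact_mod_cast fun k => orbit_zpow hx0 hx (e := 3) (by norm_num) k)
  rw [show x ^ (3 : ℤ) = x ^ 3 by norm_cast] at r3
  rw [r3, h3] at h
  field_simp at h ⊢
  linear_combination h

/-- The case `y = x²` of `rho_theta` with base `x^5`. -/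
lemma rho_Y (hx0 : x ≠ 0) (hx : ‖x‖ < 1) :
    rho (x ^ 5) x - 3 * rho (x ^ 5) (x ^ 2) =
      x * qPochInf (x ^ 5) (x ^ 5) ^ 2 * theta (x ^ 5) x ^ 2 / theta (x ^ 5) (x ^ 2) ^ 3 := by
  obtain ⟨n1, n2, n3⟩ := thetas_ne hx0 hx
  obtain ⟨-, -, r6⟩ := rhos hx0 hx
  obtain ⟨-, h4, -, h6⟩ := theta_six hx0 hx
  have h := rho_theta (pow_ne_zero 5 hx0) (norm_pow_five hx) (y := x ^ 2) (pow_ne_zero 2 hx0)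
    (by exact_mod_cast fun k => orbit_zpow hx0 hx (e := 2) (by norm_num) k)
    (by
      rw [← pow_mul]
      exact_mod_cast fun k => orbit_zpow hx0 hx (e := 4) (by norm_num) k)
    (by
      rw [← pow_mul]
      exact_mod_cast fun k => orbit_zpow hx0 hx (e := 6) (by norm_num) k)
  rw [show x ^ (6 : ℤ) = x ^ 6 by norm_cast] at r6
  rw [show (x ^ 2) ^ 3 = x ^ 6 by ring, show (x ^ 2) ^ 2 = x ^ 4 by ring, r6, h4, h6] at h
  field_simp at h ⊢
  linear_combination -h

end Modulus

/-! ### The 5-dissection of the Lambert series -/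

/-- `T j = ∑_{n ≠ 0} (-1)^n q^{3n(n+1)/2 + (j-1)n} / (1 - q^{5n})`; the term `n = 0` vanishes since
`0⁻¹ = 0`. -/
noncomputable def TT (q : ℂ) (j : ℤ) : ℂ :=
  ∑' n : ℤ, (-1) ^ n * q ^ (3 * tri n) * (q ^ (j - 1)) ^ n * (1 - 1 * (q ^ 5) ^ n)⁻¹

lemma TT_summable {q : ℂ} (hq0 : q ≠ 0) (hq : ‖q‖ < 1) (j : ℤ) : Summable fun n : ℤ =>
    (-1) ^ n * q ^ (3 * tri n) * (q ^ (j - 1)) ^ n * (1 - 1 * (q ^ 5) ^ n)⁻¹ := by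
  obtain ⟨C, -, hC⟩ := inv_one_sub_bdd (b := 1) (pow_ne_zero 5 hq0) (norm_pow_five hq) one_ne_zero
  exact summable_gauss_mul hq0 hq (zpow_ne_zero _ hq0) (by norm_num) hC

lemma TT_term {q : ℂ} (hq0 : q ≠ 0) (j r m : ℤ) :
    (-1) ^ (5 * m + r) * q ^ (3 * tri (5 * m + r)) * (q ^ (j - 1)) ^ (5 * m + r) *
        (1 - 1 * (q ^ 5) ^ (5 * m + r))⁻¹ =
      (-1) ^ r * q ^ (3 * tri r + (j - 1) * r) * ((-1) ^ m * ((q ^ 5) ^ 5) ^ (3 * tri m) *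
        ((q ^ 5) ^ (3 * r + j - 7)) ^ m * (1 - (q ^ 5) ^ r * ((q ^ 5) ^ 5) ^ m)⁻¹) := by
  have ht : tri (5 * m + r) = 25 * tri m - 10 * m + tri r + 5 * m * r := by
    apply tri_unique
    linear_combination 25 * two_tri m + two_tri r
  have e5 : ∀ k : ℤ, (q ^ 5) ^ k = q ^ (5 * k) := fun k => by rw [zpow_mul]; norm_cast
  have e25 : ∀ k : ℤ, ((q ^ 5) ^ 5) ^ k = q ^ (25 * k) := fun k => by
    rw [← pow_mul, zpow_mul]; norm_cast
  have s : (-1 : ℂ) ^ (5 * m + r) = (-1) ^ r * (-1) ^ m := by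
    rw [zpow_add₀ (by norm_num), zpow_mul]; norm_num [mul_comm]
  have d : (q ^ 5) ^ r * ((q ^ 5) ^ 5) ^ m = 1 * (q ^ 5) ^ (5 * m + r) := by
    rw [e5, e25, e5, ← zpow_add₀ hq0, one_mul]; congr 1; ring
  rw [d, s, ht]
  have w : q ^ (3 * (25 * tri m - 10 * m + tri r + 5 * m * r)) * (q ^ (j - 1)) ^ (5 * m + r) =
      q ^ (3 * tri r + (j - 1) * r) * (((q ^ 5) ^ 5) ^ (3 * tri m) *
        ((q ^ 5) ^ (3 * r + j - 7)) ^ m) := by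
    rw [e25, e5, ← zpow_mul, ← zpow_mul, ← zpow_add₀ hq0, ← zpow_add₀ hq0, ← zpow_add₀ hq0]
    congr 1; ring
  linear_combination (-1) ^ r * (-1) ^ m * (1 - 1 * (q ^ 5) ^ (5 * m + r))⁻¹ * w

/-- Sorting the terms of `T j` by `n` mod 5 gives Appell sums with base `(q^5)^5`. -/
lemma TT_split {q : ℂ} (hq0 : q ≠ 0) (hq : ‖q‖ < 1) (j : ℤ) :
    TT q j = ∑ r ∈ range 5, (-1) ^ (r : ℤ) * q ^ (3 * tri r + (j - 1) * r) * AA (q ^ 5) r j := by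
  rw [TT, tsum_mod5 (TT_summable hq0 hq j)]
  refine sum_congr rfl fun r _ => ?_
  rw [AA, App, ← tsum_mul_left]
  exact tsum_congr fun m => TT_term hq0 j r m

lemma TT_zero {q : ℂ} (hq0 : q ≠ 0) (hq : ‖q‖ < 1) :
    TT q 0 = AA (q ^ 5) 0 0 - q ^ 2 * AA (q ^ 5) 1 0 + q ^ 7 * AA (q ^ 5) 2 0
      - q ^ 15 * AA (q ^ 5) 3 0 + q ^ 26 * AA (q ^ 5) 4 0 := by
  rw [TT_split hq0 hq]
  simp only [sum_range_succ, sum_range_zero, Nat.cast_zero, Nat.cast_one, Nat.cast_ofNat,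
    show tri 0 = 0 from rfl, show tri 1 = 1 from rfl, show tri 2 = 3 from rfl,
    show tri 3 = 6 from rfl, show tri 4 = 10 from rfl]
  norm_num
  norm_cast

lemma TT_one {q : ℂ} (hq0 : q ≠ 0) (hq : ‖q‖ < 1) :
    TT q 1 = AA (q ^ 5) 0 1 - q ^ 3 * AA (q ^ 5) 1 1 + q ^ 9 * AA (q ^ 5) 2 1
      - q ^ 18 * AA (q ^ 5) 3 1 + q ^ 30 * AA (q ^ 5) 4 1 := by
  rw [TT_split hq0 hq]
  simp only [sum_range_succ, sum_range_zero, Nat.cast_zero, Nat.cast_one, Nat.cast_ofNat,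
    show tri 0 = 0 from rfl, show tri 1 = 1 from rfl, show tri 2 = 3 from rfl,
    show tri 3 = 6 from rfl, show tri 4 = 10 from rfl]
  norm_num
  norm_cast

/-- The component of exponents `≡ 0 mod 5` in the 5-dissection of the rank generating function at a
fifth root of unity, as a function of `x = q^5` and `c = z + z⁻¹`. -/
noncomputable def RR0 (c x : ℂ) : ℂ :=
  theta (x ^ 5) (x ^ 2) / theta (x ^ 5) x * (qPochInf (x ^ 5) (x ^ 5) / theta (x ^ 5) x) -
    (2 - c) * (x ^ 5 * AA x 4 0) / qPochInf (x ^ 5) (x ^ 5)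

/-- The component of exponents `≡ 3 mod 5` in the 5-dissection of the rank generating function at a
fifth root of unity (without the factor `q³`), as a function of `x = q^5` and `c = z + z⁻¹`. -/
noncomputable def RR3 (c x : ℂ) : ℂ :=
  -((1 + 2 * c) * (x * AA x 2 1)) / qPochInf (x ^ 5) (x ^ 5) -
    c * (theta (x ^ 5) x / theta (x ^ 5) (x ^ 2)) *
      (qPochInf (x ^ 5) (x ^ 5) / theta (x ^ 5) (x ^ 2))

/-- The 5-dissection, cleared of the denominator `(q;q)_∞`. Four cases of Chan's identity and two of
`rho_theta` eliminate everything except the Appell sums `A(4,0)` and `A(2,1)`, which occur only in the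
components of the classes `0` and `3`; there is no component of the class `4`. -/
lemma dissect {q z c : ℂ} (hq0 : q ≠ 0) (hq : ‖q‖ < 1) (hz : z ^ 4 + z ^ 3 + z ^ 2 + z + 1 = 0) :
    1 + (2 - c) * TT q 0 + (1 + 2 * c) * TT q 1 = qPochInf q q * (RR0 c (q ^ 5) +
      q * (qPochInf ((q ^ 5) ^ 5) ((q ^ 5) ^ 5) / theta ((q ^ 5) ^ 5) (q ^ 5)) +
      q ^ 2 * (c * (qPochInf ((q ^ 5) ^ 5) ((q ^ 5) ^ 5) / theta ((q ^ 5) ^ 5) ((q ^ 5) ^ 2))) +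
      q ^ 3 * RR3 c (q ^ 5)) := by
  rw [TT_zero hq0 hq, TT_one hq0 hq, euler_dissect hq0 hq hz, RR0, RR3]
  have hx0 := pow_ne_zero 5 hq0
  have hx := norm_pow_five hq
  obtain ⟨n1, n2, n3⟩ := thetas_ne hx0 hx
  have e1 := chan123 hx0 hx
  have e2 := chan124 hx0 hx
  have e3 := chan034 hx0 hx
  have e4 := chan024 hx0 hx
  have e5 := rho_X hx0 hx
  have e6 := rho_Y hx0 hx
  have hxq : q ^ 5 = q ^ 5 := rfl
  generalize hX : q ^ 5 = x at *
  generalize theta (x ^ 5) x = t1 at *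
  generalize theta (x ^ 5) (x ^ 2) = t2 at *
  generalize qPochInf (x ^ 5) (x ^ 5) = J at *
  generalize rho (x ^ 5) x = r1 at *
  generalize rho (x ^ 5) (x ^ 2) = r2 at *
  generalize AA x 0 0 = a00 at *
  generalize AA x 1 0 = a10 at *
  generalize AA x 2 0 = a20 at *
  generalize AA x 3 0 = a30 at *
  generalize AA x 4 0 = a40 at *
  generalize AA x 0 1 = a01 at *
  generalize AA x 1 1 = a11 at *
  generalize AA x 2 1 = a21 at *
  generalize AA x 3 1 = a31 at *
  generalize AA x 4 1 = a41 at *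
  have p7 : q ^ 7 = q ^ 2 * x := by rw [← hX]; ring
  have p15 : q ^ 15 = x ^ 3 := by rw [← hX]; ring
  have p26 : q ^ 26 = q * x ^ 5 := by rw [← hX]; ring
  have p9 : q ^ 9 = q ^ 4 * x := by rw [← hX]; ring
  have p18 : q ^ 18 = q ^ 3 * x ^ 3 := by rw [← hX]; ring
  have p30 : q ^ 30 = x ^ 6 := by rw [← hX]; ring
  rw [p7, p15, p26, p9, p18, p30]
  -- Eliminate the Appell sums that occur only once and the two Lambert series.
  obtain rfl : a11 = J ^ 2 / t2 + x * a21 * t2 / t1 - x ^ 3 * a31 := by linear_combination e1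
  obtain rfl : a10 = J ^ 2 / t1 + x * a20 - x ^ 5 * a40 * t1 / t2 := by linear_combination e2
  obtain rfl : a00 = r1 + r2 + x ^ 3 * a30 - t2 / t1 * (x ^ 5 * a40) := by linear_combination e3
  obtain rfl : a01 = r1 - r2 - x ^ 6 * a41 + x * t1 / t2 * (x * a21) := by linear_combination e4
  obtain rfl : r2 = J ^ 2 * t2 ^ 2 / t1 ^ 3 - 1 - 3 * r1 := by linear_combination e5
  have hr1 : r1 = (x * J ^ 2 * t1 ^ 2 / t2 ^ 3 + 3 * (J ^ 2 * t2 ^ 2 / t1 ^ 3) - 3) / 10 := by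
    linear_combination e6 / 10
  rw [hr1]
  clear e1 e2 e3 e4 e5 e6 hr1 p7 p15 p26 p9 p18 p30 hxq
  have key : q ^ 5 = x := hX
  rw [← sub_eq_zero]
  -- what remains is a multiple of `q ^ 5 - x`, with the following cofactor
  have h0 : J * (t1 / t2) * (-((1 + 2 * c) * (x * a21)) / J - c * (t1 / t2) * (J / t2)) *
    (q ^ 5 - x) = 0 := by rw [key, sub_self, mul_zero]
  rw [← h0]
  field_simp
  ring

/-! ### Dyson's adjoint symmetry -/

lemma sup_mem_of_ne_zero {s : Multiset ℕ} (h : s ≠ 0) : s.sup ∈ s := by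
  induction s using Multiset.induction with
  | empty => exact absurd rfl h
  | cons a t ih =>
    rw [Multiset.sup_cons]
    rcases eq_or_ne t 0 with rfl | ht
    · simp
    · rcases le_total a t.sup with h' | h'
      · rw [sup_eq_right.2 h']; exact Multiset.mem_cons_of_mem (ih ht)
      · rw [sup_eq_left.2 h']; exact Multiset.mem_cons_self _ _

/-- Dyson's map: remove the largest part, add `1` to every other part, and adjoin parts `1` until
there are `K` parts. -/
def dysonUp (K : ℕ) (s : Multiset ℕ) : Multiset ℕ :=
  (s.erase s.sup).map (· + 1) + Multiset.replicate (K - (s.erase s.sup).card) 1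

/-- The inverse of Dyson's map: subtract `1` from every part, discard zeros, and adjoin the
part `a` (if `a ≠ 0`). -/
def dysonDown (a : ℕ) (t : Multiset ℕ) : Multiset ℕ :=
  (a ::ₘ t.map (· - 1)).filter (· ≠ 0)

lemma card_erase_sup (s : Multiset ℕ) : (s.erase s.sup).card = s.card - 1 := by
  rcases eq_or_ne s 0 with rfl | h
  · simp
  · rw [Multiset.card_erase_of_mem (sup_mem_of_ne_zero h)]; rfl

lemma card_dysonUp {K : ℕ} {s : Multiset ℕ} (h : s.card ≤ K + 1) : (dysonUp K s).card = K := by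
  rw [dysonUp, Multiset.card_add, Multiset.card_map, Multiset.card_replicate, card_erase_sup]
  omega

lemma sum_map_succ (s : Multiset ℕ) : (s.map (· + 1)).sum = s.sum + s.card := by
  rw [Multiset.sum_map_add]; simp

lemma sum_erase_sup (s : Multiset ℕ) : (s.erase s.sup).sum + s.sup = s.sum := by
  rcases eq_or_ne s 0 with rfl | h
  · simp
  · rw [add_comm, Multiset.sum_erase (sup_mem_of_ne_zero h)]

lemma sum_dysonUp {K : ℕ} {s : Multiset ℕ} (h : s.card ≤ K + 1) :
    (dysonUp K s).sum + s.sup = s.sum + K := by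
  rw [dysonUp, Multiset.sum_add, sum_map_succ, Multiset.sum_replicate, smul_eq_mul, mul_one]
  have := sum_erase_sup s
  have := card_erase_sup s
  omega

lemma dysonDown_dysonUp {K : ℕ} {s : Multiset ℕ} (hs : ∀ i ∈ s, 0 < i) :
    dysonDown s.sup (dysonUp K s) = s := by
  rw [dysonDown, dysonUp, Multiset.map_add, Multiset.map_map, Multiset.map_replicate]
  have : (fun x => x - 1) ∘ (fun x => x + 1) = (id : ℕ → ℕ) := by ext; simp
  rw [this, Multiset.map_id, ← Multiset.cons_add, Multiset.filter_add]
  have h0 : Multiset.filter (fun x => x ≠ 0)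
      (Multiset.replicate (K - (s.erase s.sup).card) (1 - 1)) = 0 := by
    rw [Multiset.filter_eq_nil]
    intro a ha
    simpa using Multiset.eq_of_mem_replicate ha
  rw [h0, add_zero]
  rcases eq_or_ne s 0 with rfl | h
  · simp
  · rw [Multiset.cons_erase (sup_mem_of_ne_zero h), Multiset.filter_eq_self]
    exact fun a ha => (hs a ha).ne'

lemma dysonUp_dysonDown {a : ℕ} {t : Multiset ℕ} (ht : ∀ i ∈ t, 0 < i) (ha : t.sup ≤ a + 1) :
    dysonUp t.card (dysonDown a t) = t := by
  have hle : ∀ b ∈ t, b ≤ a + 1 := Multiset.sup_le.1 ha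
  have hsup : (dysonDown a t).sup = a := by
    apply le_antisymm
    · refine Multiset.sup_le.2 fun b hb => ?_
      rw [dysonDown, Multiset.mem_filter, Multiset.mem_cons, Multiset.mem_map] at hb
      obtain ⟨rfl | ⟨c, hc, rfl⟩, -⟩ := hb
      · exact le_rfl
      · have := hle c hc; omega
    · rcases Nat.eq_zero_or_pos a with rfl | h
      · exact Nat.zero_le _
      · apply Multiset.le_sup
        rw [dysonDown, Multiset.mem_filter]
        exact ⟨Multiset.mem_cons_self _ _, h.ne'⟩
  have her : (dysonDown a t).erase a = (t.map (· - 1)).filter (· ≠ 0) := by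
    rw [dysonDown]
    rcases Nat.eq_zero_or_pos a with rfl | h
    · have h0 : (t.map (· - 1)).filter (· ≠ 0) = 0 := by
        rw [Multiset.filter_eq_nil]
        intro b hb
        obtain ⟨c, hc, rfl⟩ := Multiset.mem_map.1 hb
        have := hle c hc
        simp only [ne_eq, not_not]; omega
      rw [Multiset.filter_cons_of_neg _ (by simp), h0]; rfl
    · rw [Multiset.filter_cons_of_pos (p := (· ≠ 0)) _ h.ne', Multiset.erase_cons_head]
  rw [dysonUp, hsup, her]
  clear hsup her hle ha
  induction t using Multiset.induction with
  | empty => simp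
  | cons b t ih =>
    have ih := ih fun i hi => ht i (Multiset.mem_cons_of_mem hi)
    have hb := ht b (Multiset.mem_cons_self _ _)
    have hcard : ((t.map (· - 1)).filter (· ≠ 0)).card ≤ t.card :=
      (Multiset.card_le_card (Multiset.filter_le _ _)).trans (Multiset.card_map _ _).le
    rw [Multiset.map_cons]
    rcases Nat.eq_or_lt_of_le (Nat.succ_le_of_lt hb) with rfl | h
    · rw [Multiset.filter_cons_of_neg _ (by simp), Multiset.card_cons, Nat.sub_add_comm hcard,
        Multiset.replicate_succ, Multiset.add_cons, ih]
    · rw [Multiset.filter_cons_of_pos _ (by omega), Multiset.card_cons, Multiset.card_cons,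
        Multiset.map_cons, Nat.add_sub_add_right, Multiset.cons_add, ih]
      congr 1; omega

/-- The number of partitions of `n` with rank at least `m`. -/
noncomputable def rankGE (m : ℤ) (n : ℕ) : ℕ := #{p : n.Partition | m ≤ partitionRank p}

/-- The number of partitions of `n` with rank at most `m`. -/
noncomputable def rankLE (m : ℤ) (n : ℕ) : ℕ := #{p : n.Partition | partitionRank p ≤ m}

lemma partition_ext {n : ℕ} {p p' : n.Partition} (h : p.parts = p'.parts) : p = p' :=
  Nat.Partition.ext h

lemma pos_dysonUp (K : ℕ) (s : Multiset ℕ) : ∀ i ∈ dysonUp K s, 0 < i := by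
  intro i hi
  rw [dysonUp, Multiset.mem_add] at hi
  rcases hi with hi | hi
  · obtain ⟨c, -, rfl⟩ := Multiset.mem_map.1 hi; omega
  · rw [Multiset.eq_of_mem_replicate hi]; exact one_pos

lemma sup_dysonUp (K : ℕ) (s : Multiset ℕ) : (dysonUp K s).sup ≤ s.sup + 1 := by
  refine Multiset.sup_le.2 fun i hi => ?_
  rw [dysonUp, Multiset.mem_add] at hi
  rcases hi with hi | hi
  · obtain ⟨c, hc, rfl⟩ := Multiset.mem_map.1 hi
    have := Multiset.le_sup (Multiset.mem_of_mem_erase hc); omega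
  · rw [Multiset.eq_of_mem_replicate hi]; omega

lemma dysonDown_le (a : ℕ) {t : Multiset ℕ} (ht : ∀ i ∈ t, 0 < i) :
    (dysonDown a t).card ≤ t.card + 1 ∧ (dysonDown a t).sum + t.card = t.sum + a := by
  constructor
  · refine (Multiset.card_le_card (Multiset.filter_le _ _)).trans ?_
    rw [Multiset.card_cons, Multiset.card_map]
  · have h0 : ∀ l : Multiset ℕ, (l.filter (· ≠ 0)).sum = l.sum := fun l => by
      have lz : (l.filter (· = 0)).sum = 0 := by simp [Multiset.sum_eq_zero_iff]
      conv_rhs => rw [← Multiset.filter_add_not (· = 0) l, Multiset.sum_add, lz, zero_add]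
    rw [dysonDown, h0, Multiset.sum_cons]
    have : (t.map (· - 1)).sum + t.card = t.sum := by
      clear h0
      induction t using Multiset.induction with
      | empty => simp
      | cons b t ih =>
        have ih := ih fun i hi => ht i (Multiset.mem_cons_of_mem hi)
        have hb := ht b (Multiset.mem_cons_self _ _)
        simp only [Multiset.map_cons, Multiset.sum_cons, Multiset.card_cons]
        omega
    omega

lemma sup_dysonDown {a : ℕ} {t : Multiset ℕ} (ha : t.sup ≤ a + 1) : (dysonDown a t).sup = a := by
  apply le_antisymm
  · refine Multiset.sup_le.2 fun b hb => ?_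
    rw [dysonDown, Multiset.mem_filter, Multiset.mem_cons, Multiset.mem_map] at hb
    obtain ⟨rfl | ⟨c, hc, rfl⟩, -⟩ := hb
    · exact le_rfl
    · have := Multiset.sup_le.1 ha c hc; omega
  · rcases Nat.eq_zero_or_pos a with rfl | h
    · exact Nat.zero_le _
    · apply Multiset.le_sup
      rw [dysonDown, Multiset.mem_filter]
      exact ⟨Multiset.mem_cons_self _ _, h.ne'⟩

/-- Dyson's adjoint symmetry: partitions of `n` with rank at least `m` correspond to partitions of
`n - m - 1` with rank at most `m + 2`. The condition on `m` excludes the values for which the empty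
partition (of rank `0`) breaks the correspondence. -/
lemma dyson {m : ℤ} (hm : 1 ≤ m ∨ m ≤ -3) {n n' : ℕ} (hn : (n' : ℤ) = n - m - 1) :
    rankGE m n = rankLE (m + 2) n' := by
  classical
  -- facts about a partition with rank at least `m`
  have hK : ∀ p : n.Partition, m ≤ partitionRank p →
      (((p.parts.sup : ℤ) - m - 1).toNat : ℤ) = p.parts.sup - m - 1 ∧
      p.parts.card ≤ ((p.parts.sup : ℤ) - m - 1).toNat + 1 := by
    intro p hp
    rw [partitionRank] at hp
    rcases eq_or_ne p.parts 0 with h | h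
    · rw [h] at hp ⊢; simp at hp ⊢; omega
    · have := Multiset.card_pos.2 h; omega
  have hA : ∀ p : n'.Partition, partitionRank p ≤ m + 2 →
      (((p.parts.card : ℤ) + m + 1).toNat : ℤ) = p.parts.card + m + 1 ∧
      p.parts.sup ≤ ((p.parts.card : ℤ) + m + 1).toNat + 1 := by
    intro p hp
    rw [partitionRank] at hp
    rcases eq_or_ne p.parts 0 with h | h
    · rw [h] at hp ⊢; simp at hp ⊢; omega
    · have := p.parts_pos (sup_mem_of_ne_zero h); omega
  rw [rankGE, rankLE]
  refine Finset.card_bij'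
    (fun p hp => ⟨dysonUp ((p.parts.sup : ℤ) - m - 1).toNat p.parts, fun {i} => pos_dysonUp _ _ i, ?_⟩)
    (fun p hp => ⟨dysonDown ((p.parts.card : ℤ) + m + 1).toNat p.parts,
      fun {i} hi => Nat.pos_of_ne_zero (Multiset.mem_filter.1 hi).2, ?_⟩) ?_ ?_ ?_ ?_
  · obtain ⟨h1, h2⟩ := hK p (by simpa using hp)
    have := sum_dysonUp h2
    have := p.parts_sum
    omega
  · obtain ⟨h1, h2⟩ := hA p (by simpa using hp)
    have := (dysonDown_le ((p.parts.card : ℤ) + m + 1).toNat fun i => p.parts_pos).2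
    have := p.parts_sum
    omega
  · intro p hp
    obtain ⟨h1, h2⟩ := hK p (by simpa using hp)
    have h3 := card_dysonUp h2
    have h4 := sup_dysonUp ((p.parts.sup : ℤ) - m - 1).toNat p.parts
    refine mem_filter.2 ⟨mem_univ _, ?_⟩
    simp only [partitionRank, h3]
    omega
  · intro p hp
    obtain ⟨h1, h2⟩ := hA p (by simpa using hp)
    have h3 := sup_dysonDown h2
    have h4 := (dysonDown_le ((p.parts.card : ℤ) + m + 1).toNat fun i => p.parts_pos).1
    refine mem_filter.2 ⟨mem_univ _, ?_⟩
    simp only [partitionRank, h3]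
    omega
  · intro p hp
    obtain ⟨h1, h2⟩ := hK p (by simpa using hp)
    apply partition_ext
    simp only
    rw [card_dysonUp h2, show ((((p.parts.sup : ℤ) - m - 1).toNat : ℤ) + m + 1).toNat = p.parts.sup
      by omega]
    exact dysonDown_dysonUp fun i => p.parts_pos
  · intro p hp
    obtain ⟨h1, h2⟩ := hA p (by simpa using hp)
    apply partition_ext
    simp only
    rw [sup_dysonDown h2, show ((((p.parts.card : ℤ) + m + 1).toNat : ℤ) - m - 1).toNat
      = p.parts.card by omega]
    exact dysonUp_dysonDown (fun i => p.parts_pos) h2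

lemma rankGE_add_rankLE (m : ℤ) (n : ℕ) :
    rankGE m n + rankLE (m - 1) n = Fintype.card n.Partition := by
  rw [rankGE, rankLE, ← card_univ, ← card_filter_add_card_filter_not (s := univ)
    fun p : n.Partition => m ≤ partitionRank p]
  congr 2
  ext p
  simp only [mem_filter, mem_univ, true_and]
  omega

lemma rank_bounds {n : ℕ} (p : n.Partition) :
    partitionRank p ≤ n ∧ -(n : ℤ) ≤ partitionRank p ∧
    (n ≠ 0 → partitionRank p < n ∧ -(n : ℤ) < partitionRank p) := by
  have hs := p.parts_sum
  have h1 : p.parts.sup ≤ n := Multiset.sup_le.2 fun b hb => p.le_of_mem_parts hb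
  have h2 : p.parts.card ≤ n := by
    have := Multiset.card_nsmul_le_sum (s := p.parts) (a := 1) fun i hi => p.parts_pos hi
    simpa [hs] using this
  rw [partitionRank]
  refine ⟨by omega, by omega, fun hn => ?_⟩
  have hne : p.parts ≠ 0 := fun h => hn (by rw [← hs, h]; rfl)
  have := Multiset.card_pos.2 hne
  have := p.parts_pos (sup_mem_of_ne_zero hne)
  omega

lemma rankGE_eq_zero {m : ℤ} (hm : 1 ≤ m) {n : ℕ} (hn : n ≤ m) : rankGE m n = 0 := by
  rw [rankGE, card_eq_zero, filter_eq_empty_iff]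
  intro p _
  have := rank_bounds p
  rcases eq_or_ne n 0 with rfl | h
  · simp at this; omega
  · have := (this.2.2 h).1; omega

lemma rankLE_eq_zero {m : ℤ} (hm : 1 ≤ m) {n : ℕ} (hn : n ≤ m) : rankLE (-m) n = 0 := by
  rw [rankLE, card_eq_zero, filter_eq_empty_iff]
  intro p _
  have := rank_bounds p
  rcases eq_or_ne n 0 with rfl | h
  · simp at this; omega
  · have := (this.2.2 h).2; omega

/-- The recursion `h_m(n + m + 1) + h_{m+3}(n) = p(n)` for the number of partitions with rank at
least `m`. -/
lemma rankGE_rec (m n : ℕ) (hm : 1 ≤ m) :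
    rankGE m (n + (m + 1)) + rankGE (m + 3) n = Fintype.card n.Partition := by
  rw [dyson (n' := n) (Or.inl (by omega)) (by push_cast; ring), add_comm,
    ← rankGE_add_rankLE (m + 3) n]
  congr 2; ring

/-- The same recursion for the number of partitions with rank at most `-m`. -/
lemma rankLE_rec (m n : ℕ) (hm : 1 ≤ m) :
    rankLE (-m) (n + (m + 1)) + rankLE (-(m + 3)) n = Fintype.card n.Partition := by
  have h := dyson (m := -m - 2) (n := n) (n' := n + (m + 1)) (Or.inr (by omega))
    (by push_cast; ring)
  rw [show -(m : ℤ) - 2 + 2 = -m by ring] at h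
  rw [← h, ← rankGE_add_rankLE (-m - 2) n]
  congr 2; ring

/-! ### The partition generating function -/

/-- The number of partitions of `n` with all parts at most `k`. -/
noncomputable def partsLE (k n : ℕ) : ℕ := #{p : n.Partition | ∀ i ∈ p.parts, i ≤ k}

lemma partsLE_zero (n : ℕ) : partsLE 0 n = if n = 0 then 1 else 0 := by
  split_ifs with h
  · subst h
    rw [partsLE, filter_true_of_mem (by simp), card_univ]; simp
  · rw [partsLE, card_eq_zero, filter_eq_empty_iff]
    intro p _ hp
    apply h
    rw [← p.parts_sum]
    exact Multiset.sum_eq_zero fun i hi => Nat.le_zero.1 (hp i hi)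

lemma partsLE_of_le {k n : ℕ} (h : n ≤ k) : partsLE k n = Fintype.card n.Partition := by
  rw [partsLE, filter_true_of_mem fun p _ i hi => (p.le_of_mem_parts hi).trans h, card_univ]

lemma partsLE_le (k n : ℕ) : partsLE k n ≤ Fintype.card n.Partition := by
  rw [partsLE, ← card_univ]; exact card_le_card (filter_subset _ _)

lemma partsLE_succ_of_lt {k n : ℕ} (h : n < k + 1) : partsLE (k + 1) n = partsLE k n := by
  rw [partsLE_of_le h.le, partsLE_of_le (Nat.lt_succ_iff.1 h)]

/-- Partitions into parts at most `k + 1` either have no part `k + 1`, or lose one such part. -/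
lemma partsLE_succ_add (k n : ℕ) :
    partsLE (k + 1) (n + (k + 1)) = partsLE k (n + (k + 1)) + partsLE (k + 1) n := by
  classical
  rw [partsLE, ← card_filter_add_card_filter_not (s := filter _ univ)
    fun p : (n + (k + 1)).Partition => (∀ i ∈ p.parts, i ≤ k)]
  congr 1
  · rw [filter_filter, partsLE]
    congr 1; ext p
    simp only [mem_filter, mem_univ, true_and, and_iff_right_iff_imp]
    exact fun h i hi => (h i hi).trans (Nat.le_succ k)
  · rw [partsLE]
    have hmem : ∀ p : (n + (k + 1)).Partition, ((∀ i ∈ p.parts, i ≤ k + 1) ∧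
        ¬ ∀ i ∈ p.parts, i ≤ k) → k + 1 ∈ p.parts := by
      rintro p ⟨h1, h2⟩
      push Not at h2
      obtain ⟨i, hi, h⟩ := h2
      obtain rfl : i = k + 1 := le_antisymm (h1 i hi) h
      exact hi
    refine Finset.card_bij'
      (fun p hp => ⟨p.parts.erase (k + 1), fun {i} hi => p.parts_pos (Multiset.mem_of_mem_erase hi), ?_⟩)
      (fun p hp => ⟨(k + 1) ::ₘ p.parts, fun {i} hi => ?_, ?_⟩) ?_ ?_ ?_ ?_
    · have h1 := hmem p (by simpa using hp)
      have h2 := p.parts_sum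
      rw [← Multiset.sum_erase h1] at h2
      omega
    · rcases Multiset.mem_cons.1 hi with rfl | hi
      · omega
      · exact p.parts_pos hi
    · rw [Multiset.sum_cons, p.parts_sum]; ring
    · intro p hp
      have h1 : (∀ i ∈ p.parts, i ≤ k + 1) ∧ ¬ ∀ i ∈ p.parts, i ≤ k := by simpa using hp
      exact mem_filter.2 ⟨mem_univ _, fun i hi => h1.1 i (Multiset.mem_of_mem_erase hi)⟩
    · intro p hp
      have h1 : (∀ i ∈ p.parts, i ≤ k + 1) := by simpa using hp
      refine mem_filter.2 ⟨mem_filter.2 ⟨mem_univ _, fun i hi => ?_⟩, fun h => ?_⟩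
      · rcases Multiset.mem_cons.1 hi with rfl | hi
        · omega
        · exact h1 i hi
      · have := h (k + 1) (Multiset.mem_cons_self _ _); omega
    · intro p hp
      exact partition_ext (Multiset.cons_erase (hmem p (by simpa using hp)))
    · intro p hp
      exact partition_ext (Multiset.erase_cons_head _ _)

/-- Convergence of `∑ b n r^n` passes to the solution `a` of `a (n + d) = b (n + d) + a n`: the
partial sums of `a` are bounded by `(∑ b n r^n) / (1 - r^d)`. -/
lemma lag_summable {a b : ℕ → ℝ} {d : ℕ} (hd : d ≠ 0) (ha : ∀ n, 0 ≤ a n) (hb : ∀ n, 0 ≤ b n)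
    (h0 : ∀ n < d, a n = b n) (h1 : ∀ n, a (n + d) = b (n + d) + a n) {r : ℝ} (hr0 : 0 ≤ r)
    (hr : r < 1) (hs : Summable fun n => b n * r ^ n) : Summable fun n => a n * r ^ n := by
  have hrd : r ^ d < 1 := pow_lt_one₀ hr0 hr hd
  refine summable_of_sum_range_le (c := (∑' n, b n * r ^ n) / (1 - r ^ d))
    (fun n => mul_nonneg (ha n) (pow_nonneg hr0 n)) fun N => ?_
  have hmono : ∑ n ∈ range N, a n * r ^ n ≤ ∑ n ∈ range (d + N), a n * r ^ n :=
    sum_le_sum_of_subset_of_nonneg (range_mono (Nat.le_add_left _ _))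
      fun n _ _ => mul_nonneg (ha n) (pow_nonneg hr0 n)
  have hB : ∑ n ∈ range (d + N), b n * r ^ n ≤ ∑' n, b n * r ^ n :=
    hs.sum_le_tsum _ fun n _ => mul_nonneg (hb n) (pow_nonneg hr0 n)
  have e : ∑ n ∈ range (d + N), a n * r ^ n =
      ∑ n ∈ range (d + N), b n * r ^ n + r ^ d * ∑ n ∈ range N, a n * r ^ n := by
    rw [sum_range_add, sum_range_add, mul_sum, add_assoc, ← sum_add_distrib]
    congr 1
    · exact sum_congr rfl fun n hn => by rw [h0 n (mem_range.1 hn)]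
    · refine sum_congr rfl fun n _ => ?_
      rw [add_comm d n, h1, pow_add]; ring
  rw [le_div_iff₀ (by linarith)]
  nlinarith

lemma summable_ofReal_mul {a : ℕ → ℝ} (ha : ∀ n, 0 ≤ a n) {x : ℂ}
    (h : Summable fun n => a n * ‖x‖ ^ n) : Summable fun n => (a n : ℂ) * x ^ n := by
  refine Summable.of_norm ?_
  refine h.congr fun n => ?_
  rw [norm_mul, norm_pow, Complex.norm_real, Real.norm_of_nonneg (ha n)]

lemma lag_tsum {a b : ℕ → ℂ} {d : ℕ} (h0 : ∀ n < d, a n = b n)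
    (h1 : ∀ n, a (n + d) = b (n + d) + a n) {x : ℂ} (hsa : Summable fun n => a n * x ^ n)
    (hsb : Summable fun n => b n * x ^ n) :
    (∑' n, a n * x ^ n) * (1 - x ^ d) = ∑' n, b n * x ^ n := by
  have e1 := hsa.sum_add_tsum_nat_add d
  have e2 := hsb.sum_add_tsum_nat_add d
  have hsb' : Summable fun n => b (n + d) * x ^ (n + d) := (summable_nat_add_iff d).2 hsb
  have e3 : ∑' n, a (n + d) * x ^ (n + d) =
      ∑' n, b (n + d) * x ^ (n + d) + x ^ d * ∑' n, a n * x ^ n := by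
    rw [← tsum_mul_left, ← hsb'.tsum_add (hsa.mul_left _)]
    refine tsum_congr fun n => ?_
    rw [h1, pow_add]; ring
  have e4 : ∑ n ∈ range d, a n * x ^ n = ∑ n ∈ range d, b n * x ^ n :=
    sum_congr rfl fun n hn => by rw [h0 n (mem_range.1 hn)]
  rw [e4, e3] at e1
  linear_combination -e1 + e2

/-- The generating function of the partitions into parts at most `k` is `1 / (x;x)_k`. -/
lemma partsLE_gf (k : ℕ) {x : ℂ} (hx : ‖x‖ < 1) :
    (Summable fun n => (partsLE k n : ℝ) * ‖x‖ ^ n) ∧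
    (∑' n, (partsLE k n : ℂ) * x ^ n) * fp x x k = 1 := by
  induction k with
  | zero =>
    constructor
    · refine summable_of_ne_finset_zero (s := {0}) fun n hn => ?_
      rw [partsLE_zero, if_neg (by simpa using hn)]; simp
    · rw [tsum_eq_single 0 fun n hn => by rw [partsLE_zero, if_neg hn]; simp]
      simp [partsLE_zero, fp]
  | succ k ih =>
    have h0 : ∀ n < k + 1, partsLE (k + 1) n = partsLE k n := fun n hn => partsLE_succ_of_lt hn
    have h1 := partsLE_succ_add k
    have s : Summable fun n => (partsLE (k + 1) n : ℝ) * ‖x‖ ^ n :=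
      lag_summable (a := fun n => partsLE (k + 1) n) (b := fun n => partsLE k n) (d := k + 1)
        (Nat.succ_ne_zero k) (fun n => Nat.cast_nonneg _) (fun n => Nat.cast_nonneg _)
        (fun n hn => by simp only [h0 n hn]) (fun n => by simp only [h1 n, Nat.cast_add])
        (norm_nonneg x) hx ih.1
    refine ⟨s, ?_⟩
    have s1 := summable_ofReal_mul (fun n => Nat.cast_nonneg (partsLE (k + 1) n)) s
    have s2 := summable_ofReal_mul (fun n => Nat.cast_nonneg (partsLE k n)) ih.1
    simp only [Complex.ofReal_natCast] at s1 s2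
    have := lag_tsum (a := fun n => partsLE (k + 1) n) (b := fun n => partsLE k n) (d := k + 1)
      (fun n hn => by simp only [h0 n hn]) (fun n => by simp only [h1 n, Nat.cast_add]) s1 s2
    rw [← ih.2, ← this, fp, fp, prod_range_succ, pow_succ' x k]
    ring

/-- The partial sum up to `N` is at most the generating function of partitions into parts at most `N`,
which converges to `1 / (r;r)_∞`. -/
lemma partition_summable_real {r : ℝ} (hr0 : 0 ≤ r) (hr : r < 1) :
    Summable fun n => (Fintype.card (Nat.Partition n) : ℝ) * r ^ n := by
  have hn : ‖(r : ℂ)‖ = r := by rw [Complex.norm_real, Real.norm_of_nonneg hr0]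
  have hx : ‖(r : ℂ)‖ < 1 := by rwa [hn]
  have hlim := (fp_tendsto (r : ℂ) hx).inv₀ (qPochInf_ne_zero hx (self_ne hx))
  obtain ⟨C, -, hC⟩ := bdd_of_tendsto hlim
  refine summable_of_sum_range_le (c := C)
    (fun n => mul_nonneg (Nat.cast_nonneg _) (pow_nonneg hr0 n)) fun N => ?_
  obtain ⟨s, e⟩ := partsLE_gf N hx
  rw [hn] at s
  have h1 : ∑ n ∈ range N, (Fintype.card (Nat.Partition n) : ℝ) * r ^ n =
      ∑ n ∈ range N, (partsLE N n : ℝ) * r ^ n :=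
    sum_congr rfl fun n hn => by rw [partsLE_of_le (mem_range.1 hn).le]
  rw [h1]
  refine (s.sum_le_tsum _ fun n _ => mul_nonneg (Nat.cast_nonneg _) (pow_nonneg hr0 n)).trans ?_
  have h2 : ((∑' n, (partsLE N n : ℝ) * r ^ n : ℝ) : ℂ) = (fp r r N)⁻¹ := by
    rw [← eq_inv_of_mul_eq_one_left e, Complex.ofReal_tsum]
    push_cast
    rfl
  refine (le_abs_self _).trans ?_
  rw [← Real.norm_eq_abs, ← Complex.norm_real, h2]
  exact hC N

lemma partition_summable {x : ℂ} (hx : ‖x‖ < 1) :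
    Summable fun n => (Fintype.card (Nat.Partition n) : ℂ) * x ^ n := by
  have := summable_ofReal_mul (fun n => Nat.cast_nonneg (Fintype.card (Nat.Partition n)))
    (partition_summable_real (norm_nonneg x) hx)
  simpa using this

/-- Euler: `∑ p(n) x^n = 1 / (x;x)_∞`. -/
lemma partition_gf {x : ℂ} (hx : ‖x‖ < 1) :
    (∑' n, (Fintype.card (Nat.Partition n) : ℂ) * x ^ n) * qPochInf x x = 1 := by
  have h1 : Tendsto (fun k => ∑' n, (partsLE k n : ℂ) * x ^ n) atTop
      (𝓝 (∑' n, (Fintype.card (Nat.Partition n) : ℂ) * x ^ n)) := by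
    refine tendsto_tsum_of_dominated_convergence (partition_summable_real (norm_nonneg x) hx) ?_
      (Eventually.of_forall fun k n => ?_)
    · intro n
      refine tendsto_const_nhds.congr' ?_
      filter_upwards [eventually_ge_atTop n] with k hk
      rw [partsLE_of_le hk]
    · rw [norm_mul, norm_pow, Complex.norm_natCast]
      gcongr
      exact partsLE_le k n
  refine tendsto_nhds_unique (h1.mul (fp_tendsto x hx)) ?_
  exact tendsto_const_nhds.congr fun k => (partsLE_gf k hx).2.symm

/-! ### The Lambert series of the rank generating function -/

/-- The pentagonal-type exponent `k(3k+1)/2`. -/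
def pent (k : ℕ) : ℕ := k * (3 * k + 1) / 2

lemma two_pent (k : ℕ) : 2 * pent k = k * (3 * k + 1) := by
  apply Nat.mul_div_cancel'
  rcases Nat.even_or_odd k with h | h
  · exact (h.mul_right _).two_dvd
  · apply Even.two_dvd
    apply Even.mul_left
    obtain ⟨l, rfl⟩ := h
    exact ⟨3 * l + 2, by ring⟩

lemma pent_succ (k : ℕ) : pent (k + 1) = pent k + (3 * k + 2) := by
  have := two_pent k
  have := two_pent (k + 1)
  have : 2 * pent (k + 1) = 2 * (pent k + (3 * k + 2)) := by nlinarith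
  omega

lemma le_pent (k : ℕ) : k ≤ pent k := by
  induction k with
  | zero => exact Nat.zero_le _
  | succ k ih => rw [pent_succ]; omega

/-- A bounded solution of `h u = x^(u+2) (P - h (u+3))` is `P` times an alternating series. -/
lemma rec_solve {x P : ℂ} (hx : ‖x‖ < 1) {h : ℕ → ℂ} {C : ℝ} (hC : ∀ u, ‖h u‖ ≤ C)
    (hr : ∀ u, h u = x ^ (u + 2) * (P - h (u + 3))) (u : ℕ) :
    h u = P * ∑' k : ℕ, (-1) ^ k * x ^ (pent (k + 1) + (k + 1) * u) := by
  have hs : Summable fun k : ℕ => (-1) ^ k * x ^ (pent (k + 1) + (k + 1) * u) := by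
    refine Summable.of_norm_bounded (summable_geometric_of_lt_one (norm_nonneg x) hx) fun k => ?_
    rw [norm_mul, norm_pow, norm_neg, norm_one, one_pow, one_mul, norm_pow]
    exact pow_le_pow_of_le_one (norm_nonneg _) hx.le (by have := le_pent (k + 1); nlinarith)
  have hK : ∀ K : ℕ, h u = P * ∑ k ∈ range K, (-1) ^ k * x ^ (pent (k + 1) + (k + 1) * u) +
      (-1) ^ K * x ^ (pent K + K * u) * h (u + 3 * K) := by
    intro K
    induction K with
    | zero => simp [pent]
    | succ K ih =>
      have e : x ^ (pent (K + 1) + (K + 1) * u) =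
          x ^ (pent K + K * u) * x ^ (u + 3 * K + 2) := by
        rw [← pow_add, pent_succ]; congr 1; ring
      rw [ih, hr (u + 3 * K), sum_range_succ, e, show u + 3 * (K + 1) = u + 3 * K + 3 by ring]
      ring
  have h1 : Tendsto (fun K : ℕ => (-1) ^ K * x ^ (pent K + K * u) * h (u + 3 * K)) atTop
      (𝓝 0) := by
    have hg := (tendsto_pow_atTop_nhds_zero_of_lt_one (norm_nonneg x) hx).mul_const C
    rw [zero_mul] at hg
    refine squeeze_zero_norm (fun K => ?_) hg
    rw [norm_mul, norm_mul, norm_pow, norm_neg, norm_one, one_pow, one_mul, norm_pow]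
    refine mul_le_mul ?_ (hC _) (norm_nonneg _) (by positivity)
    exact pow_le_pow_of_le_one (norm_nonneg _) hx.le (by have := le_pent K; nlinarith)
  have h2 := (hs.hasSum.tendsto_sum_nat.const_mul P).add h1
  rw [add_zero] at h2
  exact tendsto_nhds_unique (tendsto_const_nhds.congr hK) h2

/-- The partition generating function. -/
noncomputable def PP (x : ℂ) : ℂ := ∑' n, (Fintype.card (Nat.Partition n) : ℂ) * x ^ n

/-- Properties shared by the sequences `rankGE (u + 1)` and `rankLE (-(u + 1))`. -/
structure RankSeq (f : ℕ → ℕ → ℕ) : Prop where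
  low : ∀ u n, n ≤ u + 1 → f u n = 0
  step : ∀ u n, f u (n + (u + 2)) + f (u + 3) n = Fintype.card n.Partition
  le : ∀ u n, f u n ≤ Fintype.card n.Partition

lemma rankSeq_GE : RankSeq fun u n => rankGE (u + 1) n where
  low u n h := rankGE_eq_zero (by omega) (by exact_mod_cast h)
  step u n := by
    have := rankGE_rec (u + 1) n (by omega)
    rw [← this]; push_cast; congr 2
  le u n := by have := rankGE_add_rankLE (u + 1) n; omega

lemma rankSeq_LE : RankSeq fun u n => rankLE (-(u + 1)) n where
  low u n h := rankLE_eq_zero (by omega) (by exact_mod_cast h)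
  step u n := by
    have := rankLE_rec (u + 1) n (by omega)
    rw [← this]; push_cast; congr 2
  le u n := by
    have := rankGE_add_rankLE (-(u + 1) + 1) n
    rw [add_sub_cancel_right] at this
    omega

namespace RankSeq
variable {f : ℕ → ℕ → ℕ}

lemma summable_real (hf : RankSeq f) (u : ℕ) {r : ℝ} (hr0 : 0 ≤ r) (hr : r < 1) :
    Summable fun n => (f u n : ℝ) * r ^ n := by
  refine Summable.of_nonneg_of_le (fun n => by positivity) (fun n => ?_)
    (partition_summable_real hr0 hr)
  gcongr
  exact hf.le u n

lemma tsum_real_le (hf : RankSeq f) (u : ℕ) {r : ℝ} (hr0 : 0 ≤ r) (hr : r < 1) :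
    ∑' n, (f u n : ℝ) * r ^ n ≤
      r ^ (u + 2) * ∑' n, (Fintype.card (Nat.Partition n) : ℝ) * r ^ n := by
  have h0 : ∑ n ∈ range (u + 2), (f u n : ℝ) * r ^ n = 0 := sum_eq_zero fun n hn => by
    rw [hf.low u n (by have := mem_range.1 hn; omega)]; simp
  rw [← (hf.summable_real u hr0 hr).sum_add_tsum_nat_add (u + 2), h0, zero_add, ← tsum_mul_left]
  have sa : Summable fun n => (f u (n + (u + 2)) : ℝ) * r ^ (n + (u + 2)) :=
    (summable_nat_add_iff (f := fun n => (f u n : ℝ) * r ^ n) (u + 2)).2 (hf.summable_real u hr0 hr)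
  have sb : Summable fun n => r ^ (u + 2) * ((Fintype.card (Nat.Partition n) : ℝ) * r ^ n) :=
    (partition_summable_real hr0 hr).mul_left _
  refine sa.tsum_le_tsum (fun n => ?_) sb
  have : (f u (n + (u + 2)) : ℝ) ≤ Fintype.card n.Partition := by
    have := hf.step u n
    exact_mod_cast (by omega : f u (n + (u + 2)) ≤ Fintype.card n.Partition)
  calc (f u (n + (u + 2)) : ℝ) * r ^ (n + (u + 2))
      ≤ (Fintype.card n.Partition : ℝ) * r ^ (n + (u + 2)) := by gcongr
    _ = _ := by rw [pow_add]; ring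

lemma summable (hf : RankSeq f) (u : ℕ) {x : ℂ} (hx : ‖x‖ < 1) : Summable fun n => (f u n : ℂ) * x ^ n := by
  have := summable_ofReal_mul (fun n => Nat.cast_nonneg (f u n))
    (hf.summable_real u (norm_nonneg x) hx)
  simpa using this

lemma tsum_eq (hf : RankSeq f) (u : ℕ) {x : ℂ} (hx : ‖x‖ < 1) : ∑' n, (f u n : ℂ) * x ^ n =
    PP x * ∑' k : ℕ, (-1) ^ k * x ^ (pent (k + 1) + (k + 1) * u) := by
  refine rec_solve (h := fun u => ∑' n, (f u n : ℂ) * x ^ n)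
    (C := ∑' n, (Fintype.card (Nat.Partition n) : ℝ) * ‖x‖ ^ n) hx (fun u => ?_) (fun u => ?_) u
  · refine tsum_of_norm_bounded (partition_summable_real (norm_nonneg x) hx).hasSum fun n => ?_
    rw [norm_mul, norm_pow, Complex.norm_natCast]
    gcongr
    exact hf.le u n
  · have h0 : ∑ n ∈ range (u + 2), (f u n : ℂ) * x ^ n = 0 := sum_eq_zero fun n hn => by
      rw [hf.low u n (by have := mem_range.1 hn; omega)]; simp
    rw [← (hf.summable u hx).sum_add_tsum_nat_add (u + 2), h0, zero_add, PP,
      ← (partition_summable hx).tsum_sub (hf.summable _ hx), ← tsum_mul_left]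
    refine tsum_congr fun n => ?_
    rw [← hf.step u n, pow_add]; push_cast; ring

/-- The double series `∑_{n,u} f u n (z^(u+1) - z^u) x^n`, evaluated in closed form. -/
lemma double (hf : RankSeq f) {x z : ℂ} (hx : ‖x‖ < 1) (hz : ‖z‖ = 1) :
    (Summable fun n => (∑ u ∈ range n, (f u n : ℂ) * (z ^ (u + 1) - z ^ u)) * x ^ n) ∧
    ∑' n, (∑ u ∈ range n, (f u n : ℂ) * (z ^ (u + 1) - z ^ u)) * x ^ n =
      PP x * ∑' k : ℕ, (-1) ^ k * x ^ pent (k + 1) * ((z - 1) / (1 - z * x ^ (k + 1))) := by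
  have hr0 := norm_nonneg x
  have hzz : ∀ u : ℕ, ‖z ^ (u + 1) - z ^ u‖ ≤ 2 := fun u => by
    refine (norm_sub_le _ _).trans ?_
    rw [norm_pow, norm_pow, hz]; norm_num
  have s1 : Summable fun a : ℕ × ℕ => (f a.1 a.2 : ℝ) * ‖x‖ ^ a.2 := by
    refine (summable_prod_of_nonneg fun a => by positivity).2
      ⟨fun u => hf.summable_real u hr0 hx, ?_⟩
    refine Summable.of_nonneg_of_le (fun u => tsum_nonneg fun n => by positivity)
      (fun u => hf.tsum_real_le u hr0 hx) ?_
    exact (((summable_geometric_of_lt_one hr0 hx).comp_injective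
      (add_left_injective 2))).mul_right _
  have s2 : Summable fun a : ℕ × ℕ => (f a.1 a.2 : ℂ) * (z ^ (a.1 + 1) - z ^ a.1) * x ^ a.2 := by
    refine Summable.of_norm_bounded (s1.mul_left 2) fun a => ?_
    rw [norm_mul, norm_mul, norm_pow, Complex.norm_natCast]
    have := hzz a.1
    calc (f a.1 a.2 : ℝ) * ‖z ^ (a.1 + 1) - z ^ a.1‖ * ‖x‖ ^ a.2
        ≤ (f a.1 a.2 : ℝ) * 2 * ‖x‖ ^ a.2 := by gcongr
      _ = _ := by ring
  have e1 : ∀ n : ℕ, ∑' u, (f u n : ℂ) * (z ^ (u + 1) - z ^ u) * x ^ n =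
      (∑ u ∈ range n, (f u n : ℂ) * (z ^ (u + 1) - z ^ u)) * x ^ n := by
    intro n
    rw [sum_mul, tsum_eq_sum]
    intro u hu
    rw [hf.low u n (by have := mem_range.not.1 hu; omega)]; simp
  have s3 : Summable fun a : ℕ × ℕ =>
      (-1) ^ a.2 * x ^ (pent (a.2 + 1) + (a.2 + 1) * a.1) * (z ^ (a.1 + 1) - z ^ a.1) := by
    have g := summable_geometric_of_lt_one hr0 hx
    refine Summable.of_norm_bounded ((g.mul_of_nonneg g (fun _ => by positivity)
      (fun _ => by positivity)).mul_left 2) fun a => ?_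
    rw [norm_mul, norm_mul, norm_pow, norm_neg, norm_one, one_pow, one_mul, norm_pow, mul_comm,
      ← pow_add]
    refine mul_le_mul (hzz _) ?_ (by positivity) (by norm_num)
    exact pow_le_pow_of_le_one hr0 hx.le (by have := le_pent (a.2 + 1); nlinarith)
  constructor
  · have := ((Equiv.prodComm ℕ ℕ).summable_iff.2 s2).prod
    exact this.congr fun n => (e1 n)
  -- interchange the sums, solve the recursion in `u`, interchange again and sum over `u`
  · rw [tsum_congr fun n => (e1 n).symm]
    have c1 := Summable.tsum_comm (f := fun (u n : ℕ) =>
      (f u n : ℂ) * (z ^ (u + 1) - z ^ u) * x ^ n) s2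
    rw [c1]
    have c2 : ∀ u : ℕ, ∑' n, (f u n : ℂ) * (z ^ (u + 1) - z ^ u) * x ^ n = PP x *
        ∑' k : ℕ, (-1) ^ k * x ^ (pent (k + 1) + (k + 1) * u) * (z ^ (u + 1) - z ^ u) := by
      intro u
      rw [tsum_mul_right, ← mul_assoc, ← hf.tsum_eq u hx, ← tsum_mul_right]
      exact tsum_congr fun n => by ring
    rw [tsum_congr c2, tsum_mul_left]
    have c3 := Summable.tsum_comm (f := fun (u k : ℕ) =>
      (-1) ^ k * x ^ (pent (k + 1) + (k + 1) * u) * (z ^ (u + 1) - z ^ u)) s3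
    rw [← c3]
    congr 1
    refine tsum_congr fun k => ?_
    have hlt : ‖z * x ^ (k + 1)‖ < 1 := by
      rw [norm_mul, hz, one_mul, norm_pow]
      exact pow_lt_one₀ hr0 hx (Nat.succ_ne_zero k)
    rw [div_eq_mul_inv, ← tsum_geometric_of_norm_lt_one hlt, ← tsum_mul_left, ← tsum_mul_left]
    refine tsum_congr fun u => ?_
    rw [pow_add, mul_pow, ← pow_mul]; ring

end RankSeq

/-- Telescoping: `z^r - 1` is the sum of the increments of the powers of `z` (for `r ≥ 0`) or of `z⁻¹`
(for `r ≤ 0`) up to the exponent `|r|`. -/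
lemma zpow_layers (z : ℂ) (n : ℕ) (r : ℤ) (h1 : r ≤ n) (h2 : -(n : ℤ) ≤ r) :
    z ^ r = 1 + ∑ u ∈ range n, (if (u : ℤ) + 1 ≤ r then z ^ (u + 1) - z ^ u else 0) +
      ∑ u ∈ range n, (if r ≤ -((u : ℤ) + 1) then z⁻¹ ^ (u + 1) - z⁻¹ ^ u else 0) := by
  have key : ∀ (w : ℂ) (m : ℕ), m ≤ n →
      ∑ u ∈ range n, (if (u : ℤ) + 1 ≤ m then w ^ (u + 1) - w ^ u else 0) = w ^ m - 1 := by
    intro w m hm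
    rw [← sum_filter, ← pow_zero w, ← sum_range_sub (fun u => w ^ u) m]
    refine sum_congr ?_ fun _ _ => rfl
    ext u; simp only [mem_filter, mem_range]; omega
  rcases le_total 0 r with h | h
  · obtain ⟨m, rfl⟩ := Int.eq_ofNat_of_zero_le h
    rw [key z m (by omega), sum_eq_zero fun u _ => if_neg (by omega), zpow_natCast]; ring
  · obtain ⟨m, hm⟩ := Int.eq_ofNat_of_zero_le (neg_nonneg.2 h)
    obtain rfl : r = -m := by omega
    have e : ∑ u ∈ range n, (if -(m : ℤ) ≤ -((u : ℤ) + 1) then z⁻¹ ^ (u + 1) - z⁻¹ ^ u else 0) =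
        z⁻¹ ^ m - 1 := by
      rw [← key z⁻¹ m (by omega)]
      refine sum_congr rfl fun u _ => ?_
      congr 1; simp
    rw [sum_eq_zero fun u _ => if_neg (by omega), e, zpow_neg, zpow_natCast, inv_pow]; ring

/-- Summing `zpow_layers` over the partitions of `n` expresses the coefficient by the counting functions
`rankGE` and `rankLE`. -/
lemma rank_coeff (z : ℂ) (n : ℕ) :
    ∑ p : n.Partition, z ^ partitionRank p = Fintype.card n.Partition +
      ∑ u ∈ range n, (rankGE (u + 1) n : ℂ) * (z ^ (u + 1) - z ^ u) +
      ∑ u ∈ range n, (rankLE (-(u + 1)) n : ℂ) * (z⁻¹ ^ (u + 1) - z⁻¹ ^ u) := by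
  rw [sum_congr rfl fun p _ => zpow_layers z n (partitionRank p) (rank_bounds p).1
    (rank_bounds p).2.1, sum_add_distrib, sum_add_distrib, sum_const, card_univ, nsmul_one,
    sum_comm, sum_comm (s := univ)]
  congr 1
  · congr 1
    refine sum_congr rfl fun u _ => ?_
    rw [← sum_filter, sum_const, nsmul_eq_mul, rankGE]
  · refine sum_congr rfl fun u _ => ?_
    rw [← sum_filter, sum_const, nsmul_eq_mul, rankLE]

/-- The Lambert-type series for the rank generating function on the circle `|z| = 1`. -/
lemma rankGF_eq {x z : ℂ} (hx : ‖x‖ < 1) (hz : ‖z‖ = 1) :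
    (Summable fun n => (∑ p : n.Partition, z ^ partitionRank p) * x ^ n) ∧
    rankGF z x = PP x * (1 +
      ∑' k : ℕ, (-1) ^ k * x ^ pent (k + 1) * ((z - 1) / (1 - z * x ^ (k + 1))) +
      ∑' k : ℕ, (-1) ^ k * x ^ pent (k + 1) * ((z⁻¹ - 1) / (1 - z⁻¹ * x ^ (k + 1)))) := by
  have hz' : ‖z⁻¹‖ = 1 := by rw [norm_inv, hz, inv_one]
  obtain ⟨s1, e1⟩ := rankSeq_GE.double hx hz
  obtain ⟨s2, e2⟩ := rankSeq_LE.double hx hz'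
  have s0 := partition_summable hx
  have e : ∀ n : ℕ, (∑ p : n.Partition, z ^ partitionRank p) * x ^ n =
      (Fintype.card n.Partition : ℂ) * x ^ n +
      (∑ u ∈ range n, (rankGE (u + 1) n : ℂ) * (z ^ (u + 1) - z ^ u)) * x ^ n +
      (∑ u ∈ range n, (rankLE (-(u + 1)) n : ℂ) * (z⁻¹ ^ (u + 1) - z⁻¹ ^ u)) * x ^ n := fun n => by
    rw [rank_coeff]; ring
  refine ⟨((s0.add s1).add s2).congr fun n => (e n).symm, ?_⟩
  rw [rankGF, tsum_congr e, (s0.add s1).tsum_add s2, s0.tsum_add s1, e1, e2, ← PP]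
  ring

/-! ### The 5-dissection at a fifth root of unity -/

/-- Pairing the terms `n` and `-n` of `T j`. -/
lemma TT_fold {q : ℂ} (hq0 : q ≠ 0) (hq : ‖q‖ < 1) (j : ℤ) :
    Summable (fun k : ℕ => (-1) ^ (k + 1) * q ^ pent (k + 1) *
      (((q ^ (k + 1)) ^ j - (q ^ (k + 1)) ^ (4 - j)) / (1 - (q ^ (k + 1)) ^ 5))) ∧
    TT q j = ∑' k : ℕ, (-1) ^ (k + 1) * q ^ pent (k + 1) *
      (((q ^ (k + 1)) ^ j - (q ^ (k + 1)) ^ (4 - j)) / (1 - (q ^ (k + 1)) ^ 5)) := by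
  set f : ℤ → ℂ := fun n =>
    (-1) ^ n * q ^ (3 * tri n) * (q ^ (j - 1)) ^ n * (1 - 1 * (q ^ 5) ^ n)⁻¹ with hf
  have hs : Summable f := TT_summable hq0 hq j
  have s1 : Summable fun n : ℕ => f n := hs.comp_injective Nat.cast_injective
  have s1' : Summable fun n : ℕ => f ((n + 1 : ℕ) : ℤ) := (summable_nat_add_iff 1).2 s1
  have s2 : Summable fun n : ℕ => f (-(n + 1 : ℤ)) :=
    hs.comp_injective fun a b h => by simpa using h
  have e0 : f 0 = 0 := by simp [hf]
  have e : ∀ k : ℕ, f ((k + 1 : ℕ) : ℤ) + f (-(k + 1 : ℤ)) = (-1) ^ (k + 1) * q ^ pent (k + 1) *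
      (((q ^ (k + 1)) ^ j - (q ^ (k + 1)) ^ (4 - j)) / (1 - (q ^ (k + 1)) ^ 5)) := by
    intro k
    rw [show (-(k + 1 : ℤ)) = -((k + 1 : ℕ) : ℤ) by push_cast; ring]
    have hn : k + 1 ≠ 0 := Nat.succ_ne_zero k
    generalize k + 1 = n at hn
    have hp : (2 : ℤ) * pent n = n * (3 * n + 1) := by exact_mod_cast two_pent n
    have t1 : 3 * tri n = pent n + n := by have := two_tri n; nlinarith
    have t2 : 3 * tri (-(n : ℤ)) = pent n - 2 * n := by have := two_tri (-(n : ℤ)); nlinarith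
    have hQ0 : q ^ n ≠ 0 := pow_ne_zero n hq0
    have hQ : 1 - (q ^ n) ^ 5 ≠ 0 := by
      rw [← pow_mul]
      exact sub_ne_zero.2 (pow_ne_one_of_norm hq (by omega)).symm
    have c1 : ∀ m : ℤ, (q ^ m) ^ (n : ℤ) = (q ^ n) ^ m := fun m => by
      rw [← zpow_mul, mul_comm, zpow_mul, zpow_natCast]
    have c2 : (q ^ 5) ^ (n : ℤ) = (q ^ n) ^ 5 := by
      rw [zpow_natCast, ← pow_mul, ← pow_mul, mul_comm]
    simp only [hf]
    rw [t1, t2, zpow_neg _ (n : ℤ), zpow_neg _ (n : ℤ), zpow_neg _ (n : ℤ), c1, c2, zpow_sub₀ hq0,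
      zpow_add₀ hq0, mul_comm (2 : ℤ), zpow_mul, zpow_sub₀ hQ0, zpow_sub₀ hQ0, zpow_one,
      show (-1 : ℂ) ^ (n : ℤ) = (-1) ^ n from zpow_natCast _ _,
      show q ^ (n : ℤ) = q ^ n from zpow_natCast _ _,
      show q ^ (pent n : ℤ) = q ^ pent n from zpow_natCast _ _,
      show (q ^ n) ^ (2 : ℤ) = (q ^ n) ^ 2 by norm_cast,
      show (q ^ n) ^ (4 : ℤ) = (q ^ n) ^ 4 by norm_cast]
    have hj : (q ^ n) ^ j ≠ 0 := zpow_ne_zero _ hQ0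
    have hm : ((-1 : ℂ) ^ n)⁻¹ = (-1) ^ n := by
      rw [← inv_pow]; norm_num
    rw [hm]
    generalize (q ^ n) ^ j = Y at *
    generalize q ^ n = X at *
    have h5 : 1 - 1 * (X ^ 5)⁻¹ = -(1 - X ^ 5) / X ^ 5 := by field_simp; ring
    rw [h5, one_mul]
    field_simp
    ring
  refine ⟨(s1'.add s2).congr e, ?_⟩
  rw [TT, ← hf, tsum_of_nat_of_neg_add_one s1 s2, s1.tsum_eq_zero_add]
  simp only [Nat.cast_zero, e0, zero_add]
  rw [← s1'.tsum_add s2]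
  exact tsum_congr e

/-- Bringing `(1 - uQ)(1 - vQ)` to the denominator `1 - Q^5`, for `u`, `v` mutually inverse primitive
fifth roots of unity; `c ^ 2 = 1 - c` says that `c = u + v` is a root of the corresponding period
equation. -/
lemma lambert_term {u v c Q : ℂ} (huv : u * v = 1) (hc : u + v = c) (hc2 : c ^ 2 = 1 - c)
    (h1 : 1 - u * Q ≠ 0) (h2 : 1 - v * Q ≠ 0) (h5 : 1 - Q ^ 5 ≠ 0) :
    (u - 1) / (1 - u * Q) + (v - 1) / (1 - v * Q) =
      -((2 - c) * ((1 - Q ^ 4) / (1 - Q ^ 5)) + (1 + 2 * c) * ((Q - Q ^ 3) / (1 - Q ^ 5))) := by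
  have e1 : (u - 1) / (1 - u * Q) + (v - 1) / (1 - v * Q) =
      -((2 - c) * (1 + Q)) / (1 - c * Q + Q ^ 2) := by
    have : 1 - c * Q + Q ^ 2 = (1 - u * Q) * (1 - v * Q) := by
      linear_combination Q * hc - Q ^ 2 * huv
    rw [this, div_add_div _ _ h1 h2]
    congr 1
    linear_combination (1 + Q) * hc - 2 * Q * huv
  have h3 : 1 - c * Q + Q ^ 2 ≠ 0 := by
    have : 1 - c * Q + Q ^ 2 = (1 - u * Q) * (1 - v * Q) := by
      linear_combination Q * hc - Q ^ 2 * huv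
    rw [this]; exact mul_ne_zero h1 h2
  rw [e1]
  field_simp
  linear_combination (1 - Q ^ 2) * (Q * (1 + Q ^ 2) - 2 * Q ^ 2) * hc2

/-- 5-dissection of the rank generating function at a primitive fifth root of unity. -/
lemma rank_dissect {q z : ℂ} (hq0 : q ≠ 0) (hq : ‖q‖ < 1) (hz : z ^ 4 + z ^ 3 + z ^ 2 + z + 1 = 0)
    (hz1 : ‖z‖ = 1) :
    rankGF z q = RR0 (z + z⁻¹) (q ^ 5) +
      q * (qPochInf ((q ^ 5) ^ 5) ((q ^ 5) ^ 5) / theta ((q ^ 5) ^ 5) (q ^ 5)) +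
      q ^ 2 * ((z + z⁻¹) *
        (qPochInf ((q ^ 5) ^ 5) ((q ^ 5) ^ 5) / theta ((q ^ 5) ^ 5) ((q ^ 5) ^ 2))) +
      q ^ 3 * RR3 (z + z⁻¹) (q ^ 5) := by
  have hz0 : z ≠ 0 := by rintro rfl; simp at hz1
  have hz5 : z ^ 5 = 1 := by linear_combination (z - 1) * hz
  have hinv : z⁻¹ = z ^ 4 := by field_simp; rw [← hz5]
  have hc2 : (z + z⁻¹) ^ 2 = 1 - (z + z⁻¹) := by
    rw [hinv]; linear_combination hz + (z ^ 3 + 2) * hz5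
  have hd := dissect (c := z + z⁻¹) hq0 hq hz
  obtain ⟨-, hR⟩ := rankGF_eq hq hz1
  have hP : PP q * qPochInf q q = 1 := partition_gf hq
  obtain ⟨s0, e0⟩ := TT_fold hq0 hq 0
  obtain ⟨s1, e1⟩ := TT_fold hq0 hq 1
  have p4 : ∀ X : ℂ, X ^ (4 : ℤ) = X ^ 4 := fun X => by norm_cast
  have p3 : ∀ X : ℂ, X ^ (3 : ℤ) = X ^ 3 := fun X => by norm_cast
  simp only [sub_zero, zpow_zero, zpow_one, show (4 : ℤ) - 1 = 3 from rfl, p4, p3]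
    at s0 e0 s1 e1
  have hne : ∀ w : ℂ, ‖w‖ = 1 → ∀ k : ℕ, 1 - w * q ^ (k + 1) ≠ 0 := by
    intro w hw k h
    have h' : ‖w * q ^ (k + 1)‖ = 1 := by rw [← sub_eq_zero.1 h, norm_one]
    rw [norm_mul, hw, one_mul, norm_pow] at h'
    exact (pow_lt_one₀ (norm_nonneg q) hq (Nat.succ_ne_zero k)).ne h'
  have hz1' : ‖z⁻¹‖ = 1 := by rw [norm_inv, hz1, inv_one]
  have sg : ∀ w : ℂ, ‖w‖ = 1 → Summable fun k : ℕ =>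
      (-1) ^ k * q ^ pent (k + 1) * ((w - 1) / (1 - w * q ^ (k + 1))) := by
    intro w hw
    have hlim : Tendsto (fun k : ℕ => (w - 1) / (1 - w * q ^ (k + 1))) atTop
        (𝓝 ((w - 1) / (1 - w * 0))) := by
      refine tendsto_const_nhds.div (tendsto_const_nhds.sub (Tendsto.const_mul w ?_)) (by simp)
      exact (tendsto_pow_atTop_nhds_zero_of_norm_lt_one hq).comp (tendsto_add_atTop_nat 1)
    obtain ⟨C, hC0, hC⟩ := bdd_of_tendsto hlim
    refine Summable.of_norm_bounded
      ((summable_geometric_of_lt_one (norm_nonneg q) hq).mul_right C) fun k => ?_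
    rw [norm_mul, norm_mul, norm_pow, norm_neg, norm_one, one_pow, one_mul, norm_pow]
    refine mul_le_mul ?_ (hC k) (norm_nonneg _) (by positivity)
    exact pow_le_pow_of_le_one (norm_nonneg _) hq.le (by have := le_pent (k + 1); omega)
  have key : 1 + ∑' k : ℕ, (-1) ^ k * q ^ pent (k + 1) * ((z - 1) / (1 - z * q ^ (k + 1))) +
      ∑' k : ℕ, (-1) ^ k * q ^ pent (k + 1) * ((z⁻¹ - 1) / (1 - z⁻¹ * q ^ (k + 1))) =
      1 + (2 - (z + z⁻¹)) * TT q 0 + (1 + 2 * (z + z⁻¹)) * TT q 1 := by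
    rw [add_assoc, add_assoc, ← (sg z hz1).tsum_add (sg _ hz1'), e0, e1, ← tsum_mul_left,
      ← tsum_mul_left, ← (s0.mul_left _).tsum_add (s1.mul_left _)]
    congr 1
    refine tsum_congr fun k => ?_
    have h5 : 1 - (q ^ (k + 1)) ^ 5 ≠ 0 := by
      rw [← pow_mul]
      exact sub_ne_zero.2 (pow_ne_one_of_norm hq (by omega)).symm
    have := lambert_term (mul_inv_cancel₀ hz0) rfl hc2 (hne z hz1 k) (hne _ hz1' k) h5
    rw [pow_succ (-1 : ℂ)]
    linear_combination (-1) ^ k * q ^ pent (k + 1) * this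
  rw [hR, key, hd, ← mul_assoc, hP, one_mul]

/-! ### Uniqueness of coefficients and of the dissection -/

/-- A power series that converges at one nonzero point represents an analytic function near `0`. -/
lemma hasFPowerSeriesAt_of_summable {a : ℕ → ℂ} {q₀ : ℂ} (h0 : q₀ ≠ 0)
    (hs : Summable fun n => a n * q₀ ^ n) :
    HasFPowerSeriesAt (fun q => ∑' n, a n * q ^ n) (.ofScalars ℂ a) 0 := by
  have hr : (‖q₀‖₊ : ENNReal) ≤ (FormalMultilinearSeries.ofScalars ℂ a).radius := by
    refine FormalMultilinearSeries.le_radius_of_tendsto _ (l := 0) ?_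
    have := hs.tendsto_atTop_zero.norm
    simpa [FormalMultilinearSeries.ofScalars_norm, norm_mul, norm_pow] using this
  have hpos : 0 < (FormalMultilinearSeries.ofScalars ℂ a).radius :=
    lt_of_lt_of_le (by simpa using h0) hr
  have h := (FormalMultilinearSeries.hasFPowerSeriesOnBall _ hpos).hasFPowerSeriesAt
  have e : (FormalMultilinearSeries.ofScalars ℂ a).sum = fun q => ∑' n, a n * q ^ n := by
    funext q
    exact FormalMultilinearSeries.ofScalars_sum_eq a q
  rwa [e] at h

/-- Uniqueness of power series coefficients without a convergence hypothesis on `∑ a n q^n`: since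
`b 0 ≠ 0`, the sum is nonzero for some `q ≠ 0`, whereas a divergent `tsum` would be `0`. -/
lemma coeff_unique {a b : ℕ → ℂ} (hb : ∀ q : ℂ, ‖q‖ < 1 → Summable fun n => b n * q ^ n)
    (h : ∀ q : ℂ, ‖q‖ < 1 → ∑' n, b n * q ^ n = ∑' n, a n * q ^ n) (hb0 : b 0 ≠ 0) : a = b := by
  have fb := hasFPowerSeriesAt_of_summable (q₀ := 1 / 2) (by norm_num)
    (hb _ (by norm_num))
  have hne : ∀ᶠ q : ℂ in 𝓝 0, ∑' n, b n * q ^ n ≠ 0 := by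
    refine fb.continuousAt.eventually_ne ?_
    rw [tsum_eq_single 0 fun n hn => by simp [hn]]
    simpa using hb0
  have hlt : ∀ᶠ q : ℂ in 𝓝 0, ‖q‖ < 1 :=
    continuous_norm.continuousAt.eventually_lt_const (by simp)
  obtain ⟨q₀, ⟨h1, h2⟩, h3⟩ := (((hne.and hlt).filter_mono nhdsWithin_le_nhds).and
    (self_mem_nhdsWithin : {(0 : ℂ)}ᶜ ∈ 𝓝[≠] 0)).exists
  have hs : Summable fun n => a n * q₀ ^ n := by
    by_contra hc
    rw [h q₀ h2, tsum_eq_zero_of_not_summable hc] at h1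
    exact h1 rfl
  have fa := hasFPowerSeriesAt_of_summable h3 hs
  have := fb.eq_formalMultilinearSeries_of_eventually fa (hlt.mono fun q hq => h q hq)
  exact (FormalMultilinearSeries.ofScalars_series_injective ℂ ℂ this).symm

/-- Substituting `x ^ 2` for the variable spreads the coefficients over the even exponents. -/
lemma hasSum_even {c : ℕ → ℂ} {x G : ℂ} (h : HasSum (fun n => c n * (x ^ 2) ^ n) G) :
    HasSum (fun n => (if Even n then c (n / 2) else 0) * x ^ n) G := by
  have hinj : Function.Injective fun n : ℕ => 2 * n := fun m n h => by simpa using h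
  rw [← hinj.hasSum_iff]
  · convert h using 2 with n
    simp [pow_mul]
  · intro n hn
    rw [if_neg, zero_mul]
    rintro ⟨m, rfl⟩
    exact hn ⟨m, by simp; ring⟩

/-- If a power series takes, at all five fifth roots `w` of `y`, the values of the polynomial
`∑ gₖ wᵏ`, then the `gₖ` are the components of its 5-dissection, evaluated at `y`. -/
lemma dissection_unique {a : ℕ → ℂ} {y : ℂ} (hy0 : y ≠ 0)
    (hs : ∀ w : ℂ, w ^ 5 = y → Summable fun n => a n * w ^ n) (g : Fin 5 → ℂ)
    (hg : ∀ w : ℂ, w ^ 5 = y → ∑' n, a n * w ^ n = ∑ k : Fin 5, w ^ (k : ℕ) * g k) (k : Fin 5) :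
    ∑' n, a (5 * n + k) * y ^ n = g k := by
  obtain ⟨Q, hQ⟩ := IsAlgClosed.exists_pow_nat_eq y (n := 5) (by norm_num)
  have hQ0 : Q ≠ 0 := by rintro rfl; exact hy0 (by rw [← hQ]; norm_num)
  have hpr : IsPrimitiveRoot zeta5 5 := by
    simpa [zeta5] using Complex.isPrimitiveRoot_exp 5 (by norm_num)
  have hw : ∀ w : ℂ, w ^ 5 = y →
      ∑' n, a n * w ^ n = ∑ k : Fin 5, w ^ (k : ℕ) * ∑' n, a (5 * n + k) * y ^ n := by
    intro w hw
    have hj : ∀ j : Fin 5, ∑' n, a (j + 5 * n) * w ^ (j + 5 * n) =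
        w ^ (j : ℕ) * ∑' n, a (5 * n + j) * y ^ n := by
      intro j
      rw [← tsum_mul_left]
      refine tsum_congr fun n => ?_
      rw [pow_add, pow_mul, hw, add_comm (5 * n)]
      ring
    exact (Nat.sumByResidueClasses (hs w hw) 5).trans (Finset.sum_congr rfl fun j _ => hj j)
  have hv := Matrix.eq_zero_of_forall_index_sum_pow_mul_eq_zero
    (f := fun j : Fin 5 => zeta5 ^ (j : ℕ) * Q)
    (v := fun k : Fin 5 => ∑' n, a (5 * n + k) * y ^ n - g k)
    (fun i j h => Fin.ext (hpr.pow_inj i.2 j.2 (mul_right_cancel₀ hQ0 h))) (fun j => by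
      have h5 : (zeta5 ^ (j : ℕ) * Q) ^ 5 = y := by
        rw [mul_pow, ← pow_mul, mul_comm (j : ℕ), pow_mul, hpr.pow_eq_one, one_pow, one_mul, hQ]
      simp only [mul_sub, Finset.sum_sub_distrib]
      rw [← hw _ h5, ← hg _ h5, sub_self])
  exact sub_eq_zero.1 (congrFun hv k)

lemma zeta5_facts : zeta5 ^ 4 + zeta5 ^ 3 + zeta5 ^ 2 + zeta5 + 1 = 0 ∧ ‖zeta5‖ = 1 ∧
    zeta5 + zeta5⁻¹ = -(1 + zeta5 ^ 2 + zeta5 ^ 3) := by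
  have hpr : IsPrimitiveRoot zeta5 5 := by
    simpa [zeta5] using Complex.isPrimitiveRoot_exp 5 (by norm_num)
  have h5 : zeta5 ^ 5 = 1 := hpr.pow_eq_one
  have h : zeta5 ^ 4 + zeta5 ^ 3 + zeta5 ^ 2 + zeta5 + 1 = 0 := by
    have := hpr.geom_sum_eq_zero (by norm_num)
    simp only [Finset.sum_range_succ, Finset.sum_range_zero, pow_zero, pow_one, zero_add] at this
    linear_combination this
  refine ⟨h, Complex.norm_eq_one_of_pow_eq_one h5 (by norm_num), ?_⟩
  have hinv : zeta5⁻¹ = zeta5 ^ 4 := inv_eq_of_mul_eq_one_right (by rw [← h5]; ring)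
  rw [hinv]; linear_combination h

lemma rank_coeff_zero (z : ℂ) : ∑ p : Nat.Partition 0, z ^ partitionRank p = 1 := by
  rw [rank_coeff]; simp

lemma rank_coeff_one (z : ℂ) : ∑ p : Nat.Partition 1, z ^ partitionRank p = 1 := by
  rw [rank_coeff]
  have h1 : rankGE 1 1 = 0 := rankGE_eq_zero le_rfl (by norm_num)
  have h2 : rankLE (-1) 1 = 0 := rankLE_eq_zero le_rfl (by norm_num)
  simp [h1, h2]

lemma rank_coeff_two {z : ℂ} (hz : z ≠ 0) :
    ∑ p : Nat.Partition 2, z ^ partitionRank p = z + z⁻¹ := by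
  rw [rank_coeff]
  have h1 : rankGE 2 2 = 0 := rankGE_eq_zero (by norm_num) (by norm_num)
  have h2 : rankLE (-2) 2 = 0 := rankLE_eq_zero (by norm_num) (by norm_num)
  have h3 : rankGE 4 0 = 0 := rankGE_eq_zero (by norm_num) (by norm_num)
  have h4 : rankLE (-4) 0 = 0 := rankLE_eq_zero (by norm_num) (by norm_num)
  have h5 := rankGE_rec 1 0 le_rfl
  have h6 := rankLE_rec 1 0 le_rfl
  norm_num [h3, h4] at h5 h6
  have h7 : Fintype.card (Nat.Partition 2) = 2 := by
    have a1 := partsLE_succ_add 1 0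
    have a2 := partsLE_succ_add 0 1
    have a3 := partsLE_succ_add 0 0
    norm_num [partsLE_zero, partsLE_of_le] at a1 a2 a3
    omega
  rw [h7, sum_range_succ, sum_range_succ, sum_range_succ, sum_range_succ]
  norm_num [h1, h2, h5, h6]
  ring

lemma qPochInf_zero_zero : qPochInf 0 0 = 1 := by simp [qPochInf]

/-! ### The dissection in `q²` -/

theorem five_dissection_rank_qsq (a : ℕ → ℂ)
    (ha : ∀ q : ℂ, ‖q‖ < 1 → rankGF zeta5 (q ^ 2) = ∑' n : ℕ, a n * q ^ n) :
    ∀ q : ℂ, ‖q‖ < 1 →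
      (∑' n : ℕ, a (5 * n + 3) * q ^ n = 0) ∧
      (∑' n : ℕ, a (5 * n + 2) * q ^ n = (Jb 10 q) ^ 2 / Jba 10 2 q) ∧
      (∑' n : ℕ, a (5 * n + 4) * q ^ n =
        -(1 + zeta5 ^ 2 + zeta5 ^ 3) * (Jb 10 q) ^ 2 / Jba 10 4 q) := by
  obtain ⟨hz, hz1, hc⟩ := zeta5_facts
  have hz0 : zeta5 ≠ 0 := by rintro h; simp [h] at hz1
  set c : ℕ → ℂ := fun n => ∑ p : n.Partition, zeta5 ^ partitionRank p with hcdef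
  set b : ℕ → ℂ := fun n => if Even n then c (n / 2) else 0 with hbdef
  have hb : ∀ q : ℂ, ‖q‖ < 1 → HasSum (fun n => b n * q ^ n) (rankGF zeta5 (q ^ 2)) := by
    intro q hq
    have hq2 : ‖q ^ 2‖ < 1 := by rw [norm_pow]; exact pow_lt_one₀ (norm_nonneg q) hq two_ne_zero
    exact hasSum_even (rankGF_eq hq2 hz1).1.hasSum
  have hab : a = b := by
    refine coeff_unique (fun q hq => (hb q hq).summable)
      (fun q hq => (hb q hq).tsum_eq.trans (ha q hq)) ?_
    have : b 0 = 1 := rank_coeff_zero zeta5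
    rw [this]; exact one_ne_zero
  rw [hab]
  intro y hy
  rw [← hc]
  rcases eq_or_ne y 0 with rfl | hy0
  -- at `y = 0` the Lambert series are not available, and constant coefficients are compared
  · have h0 : ∀ f : ℕ → ℂ, ∑' n, f n * (0 : ℂ) ^ n = f 0 := fun f => by
      rw [tsum_eq_single 0 fun n hn => by simp [hn]]; simp
    have e2 : b 2 = 1 := rank_coeff_one zeta5
    have e3 : b 3 = 0 := by simp [hbdef, show ¬ Even 3 by decide]
    have e4 : b 4 = zeta5 + zeta5⁻¹ := by
      simp [hbdef, hcdef, show Even 4 by decide, rank_coeff_two hz0]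
    rw [h0 fun n => b (5 * n + 3), h0 fun n => b (5 * n + 2), h0 fun n => b (5 * n + 4)]
    simp [e2, e3, e4, Jb, Jba, qPochInf_zero_zero]
  set P := qPochInf (y ^ 10) (y ^ 10) with hP
  have hP0 : P ≠ 0 := by
    have : ‖y ^ 2‖ < 1 := by rw [norm_pow]; exact pow_lt_one₀ (norm_nonneg y) hy two_ne_zero
    have := (thetas_ne (pow_ne_zero 2 hy0) this).2.2
    rwa [← pow_mul] at this
  -- Since `w ^ 6 = w * y` for `w ^ 5 = y`, the term `q ^ 3 * RR3` with `q = w ^ 2` lands in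
  -- the class of 1, and nothing lands in the class of 3.
  have key := dissection_unique (a := b) hy0
    (fun w hw => (hb w (by
      by_contra! h
      exact (one_le_pow₀ h (n := 5)).not_gt (by rwa [← norm_pow, hw]))).summable)
    ![RR0 (zeta5 + zeta5⁻¹) (y ^ 2), y * RR3 (zeta5 + zeta5⁻¹) (y ^ 2),
      P / theta (y ^ 10) (y ^ 2), 0, (zeta5 + zeta5⁻¹) * (P / theta (y ^ 10) (y ^ 4))]
    (fun w hw => by
      have hw1 : ‖w‖ < 1 := by
        by_contra! h
        exact (one_le_pow₀ h (n := 5)).not_gt (by rwa [← norm_pow, hw])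
      have hw0 : w ≠ 0 := by rintro rfl; exact hy0 (by rw [← hw]; norm_num)
      have hw2 : ‖w ^ 2‖ < 1 := by
        rw [norm_pow]; exact pow_lt_one₀ (norm_nonneg w) hw1 two_ne_zero
      have e2 : (w ^ 2) ^ 5 = y ^ 2 := by rw [← hw]; ring
      rw [(hb w hw1).tsum_eq, rank_dissect (pow_ne_zero 2 hw0) hw2 hz hz1, e2,
        show (y ^ 2) ^ 5 = y ^ 10 by ring, show (y ^ 2) ^ 2 = y ^ 4 by ring, ← hP,
        show (w ^ 2) ^ 3 = w * y by rw [← hw]; ring]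
      simp [Fin.sum_univ_succ]
      ring)
  have d2 : y ^ 10 / y ^ 2 = y ^ 8 := by field_simp
  have d4 : y ^ 10 / y ^ 4 = y ^ 6 := by field_simp
  refine ⟨key 3, (key 2).trans ?_, (key 4).trans ?_⟩
  · change P / theta (y ^ 10) (y ^ 2) = _
    rw [theta, d2, Jb, Jba, ← hP, pow_two P, mul_div_mul_right _ _ hP0]
  · change (zeta5 + zeta5⁻¹) * (P / theta (y ^ 10) (y ^ 4)) = _
    rw [theta, d4, Jb, Jba, ← hP, pow_two P, ← mul_assoc, mul_div_mul_right _ _ hP0, mul_div_assoc]
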